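/- Let μ be a finite positive Borel measure on the unit sphere S^{m−1} ⊂ R^m (m ≥ 2) such that ∫_{S^{m−1}} x dμ(x) = 0 and μ is not concentrated on any great subsphere (i.e., for every hyperplane Π through the origin, μ(S^{m−1} \ Π) > 0). Then there exists a convex body K ⊂ R^m whose surface area measure equals μ, and K is unique up to translation. -/

import Mathlib

open MeasureTheory Set
open scoped ENNReal Pointwise RealInnerProductSpace Topology

noncomputable section

abbrev Euc (m : ℕ) : Type := EuclideanSpace ℝ (Fin m)

/-- A convex body: compact convex set with nonempty interior. -/
def IsConvexBody {m : ℕ} (K : Set (Euc m)) : Prop :=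
  Convex ℝ K ∧ IsCompact K ∧ (interior K).Nonempty

/-- A (compact convex) polytope: convex hull of a finite set. -/
def IsPolytope {m : ℕ} (P : Set (Euc m)) : Prop :=
  ∃ s : Finset (Euc m), P = convexHull ℝ (s : Set (Euc m))

def unitSphere (m : ℕ) : Set (Euc m) := Metric.sphere 0 1

/-- `n` is an outward unit normal to `K` at the boundary point `x`. -/
def IsOutwardNormalAt {m : ℕ} (K : Set (Euc m)) (x n : Euc m) : Prop :=
  x ∈ frontier K ∧ ‖n‖ = 1 ∧ ∀ y ∈ K, ⟪y - x, n⟫ ≤ 0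

open Classical in
/-- The (set-valued choice of) Gauss map of `K`. -/
def gaussMap {m : ℕ} (K : Set (Euc m)) (x : Euc m) : Euc m :=
  if h : ∃ n, IsOutwardNormalAt K x n then h.choose else 0

/-- The surface area measure of `K`: the pushforward under the Gauss map of the
`(m-1)`-dimensional Hausdorff measure on the boundary of `K`. -/
def surfMeasure {m : ℕ} (K : Set (Euc m)) : Measure (Euc m) :=
  Measure.map (gaussMap K) (μH[(m : ℝ) - 1].restrict (frontier K))

/-- The face of `P` in direction `n`. -/
def faceIn {m : ℕ} (P : Set (Euc m)) (n : Euc m) : Set (Euc m) :=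
  {x ∈ P | ∀ y ∈ P, ⟪y, n⟫ ≤ ⟪x, n⟫}

/-- The `(m-1)`-dimensional volume of the face of `P` in direction `n`. -/
def faceArea {m : ℕ} (P : Set (Euc m)) (n : Euc m) : ℝ≥0∞ :=
  μH[(m : ℝ) - 1] (faceIn P n)

/-- `n` is the outward unit normal to a facet ((m-1)-dimensional face) of `P`. -/
def IsFacetNormal {m : ℕ} (P : Set (Euc m)) (n : Euc m) : Prop :=
  ‖n‖ = 1 ∧ 0 < faceArea P n

/-- Splitting of `Euc (k + 1)` along a unit vector: `J` is an isometric parametrization of the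
hyperplane orthogonal to `n`. -/
structure IsSlicing {k : ℕ} (n : Euc (k + 1)) (J : Euc k →ₗᵢ[ℝ] Euc (k + 1)) : Prop where
  norm_eq : ‖n‖ = 1
  inner_eq_zero : ∀ y, ⟪J y, n⟫ = 0
  exists_eq : ∀ x, ∃ y, x = ⟪x, n⟫ • n + J y
  measurePreserving : MeasurePreserving (fun p : ℝ × Euc k => p.1 • n + J p.2)

theorem measurePreserving_cons (k : ℕ) :
    MeasurePreserving (fun p : ℝ × Euc k =>
      (WithLp.toLp 2 (Fin.cons p.1 (WithLp.ofLp p.2) : Fin (k + 1) → ℝ) : Euc (k + 1))) := by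
  have h1 : MeasurePreserving (fun p : ℝ × Euc k => (p.1, WithLp.ofLp p.2)) :=
    (MeasurePreserving.id volume).prod (PiLp.volume_preserving_ofLp (Fin k))
  have h2 := (volume_preserving_piFinSuccAbove (fun _ : Fin (k + 1) => ℝ) 0).symm
  have h3 := (PiLp.volume_preserving_toLp (Fin (k + 1)))
  have := h3.comp (h2.comp h1)
  convert this using 1
  ext p i
  refine Fin.cases ?_ (fun j => ?_) i <;> rfl

theorem exists_isSlicing {k : ℕ} {n : Euc (k + 1)} (hn : ‖n‖ = 1) :
    ∃ J : Euc k →ₗᵢ[ℝ] Euc (k + 1), IsSlicing n J := by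
  obtain ⟨b, hb⟩ : ∃ b : OrthonormalBasis (Fin (k + 1)) ℝ (Euc (k + 1)), b 0 = n := by
    have horth : Orthonormal ℝ (({0} : Set (Fin (k + 1))).domRestrict fun _ => n) := by
      refine ⟨fun i => hn, fun i j hij => (hij (Subsingleton.elim _ _)).elim⟩
    obtain ⟨b, hb⟩ := horth.exists_orthonormalBasis_extension_of_card_eq (by simp)
    exact ⟨b, hb 0 rfl⟩
  let C : Euc k →ₗᵢ[ℝ] Euc (k + 1) :=
    { toFun := fun y => WithLp.toLp 2 (Fin.cons 0 (WithLp.ofLp y) : Fin (k + 1) → ℝ)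
      map_add' := by
        intro x y; ext i; refine Fin.cases ?_ (fun j => ?_) i <;> simp
      map_smul' := by
        intro c y; ext i; refine Fin.cases ?_ (fun j => ?_) i <;> simp
      norm_map' := by
        intro y
        simp [EuclideanSpace.norm_eq, Fin.sum_univ_succ] }
  have hn' : b.repr n = EuclideanSpace.single 0 1 := by rw [← hb]; exact b.repr_self 0
  have hC : ∀ (s : ℝ) (y : Euc k), s • n + b.repr.symm (C y) =
      b.repr.symm (WithLp.toLp 2 (Fin.cons s (WithLp.ofLp y) : Fin (k + 1) → ℝ)) := by
    intro s y
    apply b.repr.injective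
    simp only [map_add, map_smul, hn', LinearIsometryEquiv.apply_symm_apply]
    ext i
    refine Fin.cases ?_ (fun j => ?_) i <;> simp [C]
  have horth : ∀ y, ⟪b.repr.symm (C y), n⟫ = 0 := by
    intro y
    rw [← b.repr.inner_map_map, hn', LinearIsometryEquiv.apply_symm_apply]
    simp [C, EuclideanSpace.inner_single_right]
  refine ⟨b.repr.symm.toLinearIsometry.comp C, hn, horth, fun x => ?_, ?_⟩
  · refine ⟨WithLp.toLp 2 fun i => b.repr x i.succ, ?_⟩
    change x = ⟪x, n⟫ • n + b.repr.symm (C _)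
    rw [hC]
    apply b.repr.injective
    rw [LinearIsometryEquiv.apply_symm_apply]
    ext i
    refine Fin.cases ?_ (fun j => ?_) i
    · rw [← b.repr.inner_map_map, hn']; simp [EuclideanSpace.inner_single_right]
    · simp
  · have := b.repr.symm.measurePreserving.comp (measurePreserving_cons k)
    convert this using 1
    ext1 p
    exact hC p.1 p.2

/-- The slice of `A` at height `s`, in the coordinates of the hyperplane. -/
def slice {k : ℕ} (n : Euc (k + 1)) (J : Euc k →ₗᵢ[ℝ] Euc (k + 1)) (A : Set (Euc (k + 1)))
    (s : ℝ) : Set (Euc k) := {y | s • n + J y ∈ A}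

namespace IsSlicing

variable {k : ℕ} {n : Euc (k + 1)} {J : Euc k →ₗᵢ[ℝ] Euc (k + 1)}

theorem inner_apply (h : IsSlicing n J) (s : ℝ) (y : Euc k) : ⟪s • n + J y, n⟫ = s := by
  rw [inner_add_left, inner_smul_left, h.inner_eq_zero, real_inner_self_eq_norm_sq, h.norm_eq]
  simp

theorem volume_eq_lintegral_slice (h : IsSlicing n J) {A : Set (Euc (k + 1))}
    (hA : MeasurableSet A) : volume A = ∫⁻ s, volume (slice n J A s) := by
  rw [← h.measurePreserving.measure_preimage hA.nullMeasurableSet, Measure.volume_eq_prod,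
    Measure.prod_apply (h.measurePreserving.measurable hA)]
  rfl

theorem measurable_volume_slice (h : IsSlicing n J) {A : Set (Euc (k + 1))}
    (hA : MeasurableSet A) : Measurable fun s => volume (slice n J A s) :=
  measurable_measure_prodMk_left (h.measurePreserving.measurable hA)

theorem integral_eq (h : IsSlicing n J) {A : Set (Euc (k + 1))} (hA : MeasurableSet A)
    (φ : ℝ → ℝ) (hφ : IntegrableOn (fun x => φ ⟪x, n⟫) A) :
    ∫ x in A, φ ⟪x, n⟫ = ∫ s, φ s * volume.real (slice n J A s) := by
  have hemb : MeasurableEmbedding (fun p : ℝ × Euc k => p.1 • n + J p.2) := by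
    refine h.measurePreserving.measurable.measurableEmbedding fun p q hpq => ?_
    have h1 : p.1 = q.1 := by
      have := congrArg (fun x => ⟪x, n⟫) hpq
      simpa only [h.inner_apply] using this
    have h2 : p.2 = q.2 := by
      apply J.injective
      simpa [h1] using hpq
    exact Prod.ext h1 h2
  rw [← h.measurePreserving.setIntegral_preimage_emb hemb]
  have hInt : IntegrableOn (fun p : ℝ × Euc k => φ p.1)
      ((fun p : ℝ × Euc k => p.1 • n + J p.2) ⁻¹' A) := by
    have := (h.measurePreserving.integrableOn_comp_preimage hemb).2 hφ
    refine this.congr_fun (fun p _ => ?_) (h.measurePreserving.measurable hA)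
    simp [h.inner_apply]
  simp only [h.inner_apply]
  rw [← integral_indicator (h.measurePreserving.measurable hA), Measure.volume_eq_prod,
    integral_prod _ (by
      rw [← Measure.volume_eq_prod]
      exact hInt.integrable_indicator (h.measurePreserving.measurable hA))]
  refine integral_congr_ae (Filter.Eventually.of_forall fun s => ?_)
  have hm : MeasurableSet (slice n J A s) :=
    measurable_prodMk_left (h.measurePreserving.measurable hA)
  have : (fun y => indicator ((fun p : ℝ × Euc k => p.1 • n + J p.2) ⁻¹' A)
      (fun p : ℝ × Euc k => φ p.1) (s, y)) = indicator (slice n J A s) fun _ => φ s := by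
    ext y; rfl
  simp only
  rw [this, integral_indicator hm, setIntegral_const, smul_eq_mul, mul_comm]

end IsSlicing

/-- A continuous positive integrable function on an open interval has a differentiable quantile
function. -/
theorem exists_quantile {f : ℝ → ℝ} {a b : ℝ} (hab : a < b) (hf : ContinuousOn f (Ioo a b))
    (hpos : ∀ s ∈ Ioo a b, 0 < f s) (hInt : IntegrableOn f (Ioo a b)) :
    0 < ∫ x in Ioo a b, f x ∧ ∃ q : ℝ → ℝ, q '' Ioo 0 1 = Ioo a b ∧ StrictMonoOn q (Ioo 0 1) ∧
      ∀ τ ∈ Ioo (0 : ℝ) 1, HasDerivAt q ((∫ x in Ioo a b, f x) / f (q τ)) τ := by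
  set F := ∫ x in Ioo a b, f x with hF
  have hII : IntervalIntegrable f volume a b :=
    (intervalIntegrable_iff_integrableOn_Ioo_of_le hab.le).2 hInt
  have hFint : ∫ x in a..b, f x = F := by
    rw [intervalIntegral.integral_of_le hab.le, integral_Ioc_eq_integral_Ioo]
  have hFpos : 0 < F := by
    rw [← hFint]
    exact intervalIntegral.intervalIntegral_pos_of_pos_on hII hpos hab
  let G : ℝ → ℝ := fun s => (∫ x in a..s, f x) / F
  have hGd : ∀ s ∈ Ioo a b, HasDerivAt G (f s / F) s := by
    intro s hs
    refine HasDerivAt.div_const ?_ F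
    refine intervalIntegral.integral_hasDerivAt_right (hII.mono_set ?_) ?_
      (hf.continuousAt (isOpen_Ioo.mem_nhds hs))
    · rw [uIcc_of_le hs.1.le, uIcc_of_le hab.le]
      exact Icc_subset_Icc_right hs.2.le
    · exact hf.stronglyMeasurableAtFilter isOpen_Ioo s hs
  have hGc : ContinuousOn G (Icc a b) := by
    refine ContinuousOn.div_const ?_ F
    have := intervalIntegral.continuousOn_primitive_interval (μ := volume) (f := f) (a := a) (b := b)
      (by rw [uIcc_of_le hab.le]; exact (integrableOn_Icc_iff_integrableOn_Ioo).2 hInt)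
    rwa [uIcc_of_le hab.le] at this
  have hGm : StrictMonoOn G (Icc a b) := by
    refine strictMonoOn_of_deriv_pos (convex_Icc a b) hGc fun s hs => ?_
    rw [interior_Icc] at hs
    rw [(hGd s hs).deriv]
    exact div_pos (hpos s hs) hFpos
  have hGa : G a = 0 := by simp [G]
  have hGb : G b = 1 := by simp only [G]; rw [hFint, div_self hFpos.ne']
  have hGim : G '' Ioo a b = Ioo 0 1 := by
    apply Subset.antisymm
    · rintro _ ⟨s, hs, rfl⟩
      rw [← hGa, ← hGb]
      exact ⟨hGm (left_mem_Icc.2 hab.le) (Ioo_subset_Icc_self hs) hs.1,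
        hGm (Ioo_subset_Icc_self hs) (right_mem_Icc.2 hab.le) hs.2⟩
    · have := intermediate_value_Ioo hab.le hGc
      rwa [hGa, hGb] at this
  have hGm' : StrictMonoOn G (Ioo a b) := hGm.mono Ioo_subset_Icc_self
  let q := Function.invFunOn G (Ioo a b)
  have hq : ∀ τ ∈ Ioo (0 : ℝ) 1, q τ ∈ Ioo a b ∧ G (q τ) = τ := by
    intro τ hτ
    have : ∃ s ∈ Ioo a b, G s = τ := by
      rw [← hGim] at hτ; exact hτ
    exact ⟨Function.invFunOn_mem this, Function.invFunOn_eq this⟩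
  have hqm : StrictMonoOn q (Ioo 0 1) := by
    intro x hx y hy hxy
    by_contra hcon
    have := hGm'.monotoneOn (hq y hy).1 (hq x hx).1 (not_lt.1 hcon)
    rw [(hq x hx).2, (hq y hy).2] at this
    linarith
  have hqim : q '' Ioo 0 1 = Ioo a b := by
    apply Subset.antisymm
    · rintro _ ⟨τ, hτ, rfl⟩
      exact (hq τ hτ).1
    · intro s hs
      have hs' : G s ∈ Ioo (0 : ℝ) 1 := by rw [← hGim]; exact mem_image_of_mem G hs
      exact ⟨G s, hs', hGm'.injOn (hq _ hs').1 hs (hq _ hs').2⟩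
  refine ⟨hFpos, q, hqim, hqm, fun τ hτ => ?_⟩
  have hcont : ContinuousAt q τ := by
    refine hqm.continuousAt_of_image_mem_nhds (isOpen_Ioo.mem_nhds hτ) ?_
    rw [hqim]
    exact isOpen_Ioo.mem_nhds (hq τ hτ).1
  have := HasDerivAt.of_local_left_inverse hcont (hGd _ (hq τ hτ).1)
    (div_pos (hpos _ (hq τ hτ).1) hFpos).ne'
    (Filter.eventually_of_mem (isOpen_Ioo.mem_nhds hτ) fun y hy => (hq y hy).2)
  rwa [inv_div] at this

/-- The weighted arithmetic-geometric mean inequality used in the transport argument. -/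
theorem transport_weight_le {w₁ w₂ F₁ F₂ x y : ℝ} (hw₁ : 0 < w₁) (hw₂ : 0 < w₂) (hw : w₁ + w₂ = 1)
    (hF₁ : 0 < F₁) (hF₂ : 0 < F₂) (hx : 0 < x) (hy : 0 < y) :
    F₁ ^ w₁ * F₂ ^ w₂ ≤ (w₁ * (F₁ / x) + w₂ * (F₂ / y)) * (x ^ w₁ * y ^ w₂) := by
  have h := Real.geom_mean_le_arith_mean2_weighted hw₁.le hw₂.le (div_pos hF₁ hx).le
    (div_pos hF₂ hy).le hw
  have hxy : 0 < x ^ w₁ * y ^ w₂ := by positivity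
  calc F₁ ^ w₁ * F₂ ^ w₂ = (F₁ / x) ^ w₁ * (F₂ / y) ^ w₂ * (x ^ w₁ * y ^ w₂) := by
        rw [Real.div_rpow hF₁.le hx.le, Real.div_rpow hF₂.le hy.le]
        field_simp
    _ ≤ _ := by gcongr

/-- Lower bound for `∫ f₃` through the joint quantile parametrization. -/
theorem lintegral_transport_le {f₁ f₂ q₁ q₂ : ℝ → ℝ} {f₃ : ℝ → ℝ≥0∞} {I₁ I₂ : Set ℝ}
    {w₁ w₂ F₁ F₂ : ℝ} (hw₁ : 0 < w₁) (hw₂ : 0 < w₂)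
    (hF₁ : 0 < F₁) (hF₂ : 0 < F₂)
    (hp₁ : ∀ s ∈ I₁, 0 < f₁ s) (hp₂ : ∀ s ∈ I₂, 0 < f₂ s)
    (h₃ : ∀ s ∈ I₁, ∀ t ∈ I₂, ENNReal.ofReal (f₁ s ^ w₁ * f₂ t ^ w₂) ≤ f₃ (w₁ * s + w₂ * t))
    (hi₁ : q₁ '' Ioo 0 1 = I₁) (hm₁ : StrictMonoOn q₁ (Ioo 0 1))
    (hd₁ : ∀ τ ∈ Ioo (0 : ℝ) 1, HasDerivAt q₁ (F₁ / f₁ (q₁ τ)) τ)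
    (hi₂ : q₂ '' Ioo 0 1 = I₂) (hm₂ : StrictMonoOn q₂ (Ioo 0 1))
    (hd₂ : ∀ τ ∈ Ioo (0 : ℝ) 1, HasDerivAt q₂ (F₂ / f₂ (q₂ τ)) τ) :
    ∫⁻ τ in Ioo (0 : ℝ) 1, ENNReal.ofReal ((w₁ * (F₁ / f₁ (q₁ τ)) + w₂ * (F₂ / f₂ (q₂ τ))) *
      (f₁ (q₁ τ) ^ w₁ * f₂ (q₂ τ) ^ w₂)) ≤ ∫⁻ x, f₃ x := by
  have hq₁ : ∀ τ ∈ Ioo (0 : ℝ) 1, q₁ τ ∈ I₁ := fun τ hτ => hi₁ ▸ mem_image_of_mem q₁ hτ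
  have hq₂ : ∀ τ ∈ Ioo (0 : ℝ) 1, q₂ τ ∈ I₂ := fun τ hτ => hi₂ ▸ mem_image_of_mem q₂ hτ
  have hz : StrictMonoOn (fun τ => w₁ * q₁ τ + w₂ * q₂ τ) (Ioo 0 1) := by
    intro x hx y hy hxy
    have h1 := hm₁ hx hy hxy
    have h2 := hm₂ hx hy hxy
    simp only
    gcongr
  have key := lintegral_image_eq_lintegral_abs_deriv_mul (measurableSet_Ioo (a := (0 : ℝ)) (b := 1))
    (f := fun τ => w₁ * q₁ τ + w₂ * q₂ τ)
    (fun τ hτ => (((hd₁ τ hτ).const_mul w₁).add ((hd₂ τ hτ).const_mul w₂)).hasDerivWithinAt)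
    hz.injOn f₃
  refine le_trans ?_ ((key.symm.le).trans (setLIntegral_le_lintegral _ _))
  refine setLIntegral_mono' measurableSet_Ioo fun τ hτ => ?_
  have a1 := hp₁ _ (hq₁ τ hτ)
  have a2 := hp₂ _ (hq₂ τ hτ)
  have hnn : 0 ≤ w₁ * (F₁ / f₁ (q₁ τ)) + w₂ * (F₂ / f₂ (q₂ τ)) := by positivity
  rw [ENNReal.ofReal_mul hnn, abs_of_nonneg hnn]
  exact mul_le_mul_right (h₃ _ (hq₁ τ hτ) _ (hq₂ τ hτ)) _

/-- One-dimensional Prékopa–Leindler inequality for continuous positive functions on intervals. -/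
theorem prekopa_leindler_interval {f₁ f₂ : ℝ → ℝ} {f₃ : ℝ → ℝ≥0∞} {a₁ b₁ a₂ b₂ w₁ w₂ : ℝ}
    (hab₁ : a₁ < b₁) (hab₂ : a₂ < b₂) (hw₁ : 0 < w₁) (hw₂ : 0 < w₂) (hw : w₁ + w₂ = 1)
    (hf₁ : ContinuousOn f₁ (Ioo a₁ b₁)) (hf₂ : ContinuousOn f₂ (Ioo a₂ b₂))
    (hp₁ : ∀ s ∈ Ioo a₁ b₁, 0 < f₁ s) (hp₂ : ∀ s ∈ Ioo a₂ b₂, 0 < f₂ s)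
    (hi₁ : IntegrableOn f₁ (Ioo a₁ b₁)) (hi₂ : IntegrableOn f₂ (Ioo a₂ b₂))
    (h₃ : ∀ s ∈ Ioo a₁ b₁, ∀ t ∈ Ioo a₂ b₂,
      ENNReal.ofReal (f₁ s ^ w₁ * f₂ t ^ w₂) ≤ f₃ (w₁ * s + w₂ * t)) :
    ENNReal.ofReal ((∫ x in Ioo a₁ b₁, f₁ x) ^ w₁ * (∫ x in Ioo a₂ b₂, f₂ x) ^ w₂) ≤
      ∫⁻ x, f₃ x := by
  obtain ⟨hF₁, q₁, him₁, hm₁, hd₁⟩ := exists_quantile hab₁ hf₁ hp₁ hi₁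
  obtain ⟨hF₂, q₂, him₂, hm₂, hd₂⟩ := exists_quantile hab₂ hf₂ hp₂ hi₂
  refine le_trans ?_ (lintegral_transport_le hw₁ hw₂ hF₁ hF₂ hp₁ hp₂ h₃ him₁ hm₁ hd₁ him₂ hm₂ hd₂)
  calc _ = ∫⁻ τ in Ioo (0 : ℝ) 1,
        ENNReal.ofReal ((∫ x in Ioo a₁ b₁, f₁ x) ^ w₁ * (∫ x in Ioo a₂ b₂, f₂ x) ^ w₂) := by simp
    _ ≤ _ := by
      refine setLIntegral_mono' measurableSet_Ioo fun τ hτ => ENNReal.ofReal_le_ofReal ?_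
      exact transport_weight_le hw₁ hw₂ hw hF₁ hF₂ (hp₁ _ (him₁ ▸ mem_image_of_mem q₁ hτ))
        (hp₂ _ (him₂ ▸ mem_image_of_mem q₂ hτ))

/-- Equality case of the midpoint Prékopa–Leindler inequality: the functions are translates. -/
theorem prekopa_leindler_interval_eq {f₁ f₂ : ℝ → ℝ} {f₃ : ℝ → ℝ≥0∞} {a₁ b₁ a₂ b₂ F : ℝ}
    (hab₁ : a₁ < b₁) (hab₂ : a₂ < b₂)
    (hf₁ : ContinuousOn f₁ (Ioo a₁ b₁)) (hf₂ : ContinuousOn f₂ (Ioo a₂ b₂))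
    (hp₁ : ∀ s ∈ Ioo a₁ b₁, 0 < f₁ s) (hp₂ : ∀ s ∈ Ioo a₂ b₂, 0 < f₂ s)
    (hi₁ : IntegrableOn f₁ (Ioo a₁ b₁)) (hi₂ : IntegrableOn f₂ (Ioo a₂ b₂))
    (h₃ : ∀ s ∈ Ioo a₁ b₁, ∀ t ∈ Ioo a₂ b₂,
      ENNReal.ofReal (f₁ s ^ (1 / 2 : ℝ) * f₂ t ^ (1 / 2 : ℝ)) ≤ f₃ (1 / 2 * s + 1 / 2 * t))
    (hF₁ : ∫ x in Ioo a₁ b₁, f₁ x = F) (hF₂ : ∫ x in Ioo a₂ b₂, f₂ x = F)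
    (hF₃ : ∫⁻ x, f₃ x ≤ ENNReal.ofReal F) :
    ∃ c, a₂ = a₁ + c ∧ b₂ = b₁ + c ∧ ∀ s ∈ Ioo a₁ b₁, f₂ (s + c) = f₁ s := by
  obtain ⟨hFp, q₁, him₁, hm₁, hd₁⟩ := exists_quantile hab₁ hf₁ hp₁ hi₁
  obtain ⟨-, q₂, him₂, hm₂, hd₂⟩ := exists_quantile hab₂ hf₂ hp₂ hi₂
  rw [hF₁] at hFp hd₁
  rw [hF₂] at hd₂
  have hq₁ : ∀ τ ∈ Ioo (0 : ℝ) 1, q₁ τ ∈ Ioo a₁ b₁ := fun τ hτ => him₁ ▸ mem_image_of_mem q₁ hτ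
  have hq₂ : ∀ τ ∈ Ioo (0 : ℝ) 1, q₂ τ ∈ Ioo a₂ b₂ := fun τ hτ => him₂ ▸ mem_image_of_mem q₂ hτ
  have hle := (lintegral_transport_le (by norm_num) (by norm_num) hFp hFp hp₁ hp₂ h₃ him₁ hm₁ hd₁
    him₂ hm₂ hd₂).trans hF₃
  set Ψ : ℝ → ℝ := fun τ => (1 / 2 * (F / f₁ (q₁ τ)) + 1 / 2 * (F / f₂ (q₂ τ))) *
      (f₁ (q₁ τ) ^ (1 / 2 : ℝ) * f₂ (q₂ τ) ^ (1 / 2 : ℝ)) with hΨ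
  have hc₁ : ContinuousOn (fun τ => f₁ (q₁ τ)) (Ioo 0 1) :=
    hf₁.comp (fun τ hτ => (hd₁ τ hτ).continuousAt.continuousWithinAt) hq₁
  have hc₂ : ContinuousOn (fun τ => f₂ (q₂ τ)) (Ioo 0 1) :=
    hf₂.comp (fun τ hτ => (hd₂ τ hτ).continuousAt.continuousWithinAt) hq₂
  have hΨc : ContinuousOn Ψ (Ioo 0 1) := by
    refine ContinuousOn.mul (ContinuousOn.add ?_ ?_) (ContinuousOn.mul ?_ ?_)
    · exact continuousOn_const.mul (continuousOn_const.div hc₁ fun τ hτ => (hp₁ _ (hq₁ τ hτ)).ne')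
    · exact continuousOn_const.mul (continuousOn_const.div hc₂ fun τ hτ => (hp₂ _ (hq₂ τ hτ)).ne')
    · exact hc₁.rpow_const fun τ hτ => Or.inr (by norm_num)
    · exact hc₂.rpow_const fun τ hτ => Or.inr (by norm_num)
  have hΨge : ∀ τ ∈ Ioo (0 : ℝ) 1, F ≤ Ψ τ := by
    intro τ hτ
    have := transport_weight_le (w₁ := 1 / 2) (w₂ := 1 / 2) (by norm_num) (by norm_num)
      (by norm_num) hFp hFp (hp₁ _ (hq₁ τ hτ)) (hp₂ _ (hq₂ τ hτ))
    rwa [← Real.rpow_add hFp, show (1 / 2 + 1 / 2 : ℝ) = 1 by norm_num, Real.rpow_one] at this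
  have hae : (fun _ => ENNReal.ofReal F) =ᵐ[volume.restrict (Ioo (0 : ℝ) 1)]
      fun τ => ENNReal.ofReal (Ψ τ) := by
    refine ae_eq_of_ae_le_of_lintegral_le ?_ (by simp) ?_
      (hle.trans (by simp))
    · filter_upwards [ae_restrict_mem measurableSet_Ioo] with τ hτ
      exact ENNReal.ofReal_le_ofReal (hΨge τ hτ)
    · exact (hΨc.aemeasurable measurableSet_Ioo).ennreal_ofReal
  have hae' : Ψ =ᵐ[volume.restrict (Ioo (0 : ℝ) 1)] fun _ => F := by
    filter_upwards [hae, ae_restrict_mem measurableSet_Ioo] with τ h hτ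
    rw [ENNReal.ofReal_eq_ofReal_iff hFp.le (hFp.le.trans (hΨge τ hτ))] at h
    exact h.symm
  have heq := Measure.eqOn_open_of_ae_eq hae' isOpen_Ioo hΨc continuousOn_const
  have hff : ∀ τ ∈ Ioo (0 : ℝ) 1, f₁ (q₁ τ) = f₂ (q₂ τ) := by
    intro τ hτ
    have h1 : Ψ τ = F := heq hτ
    have hx := hp₁ _ (hq₁ τ hτ)
    have hy := hp₂ _ (hq₂ τ hτ)
    rw [hΨ] at h1
    simp only [← Real.sqrt_eq_rpow] at h1
    set x := f₁ (q₁ τ)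
    set y := f₂ (q₂ τ)
    obtain ⟨u, hu, hux⟩ : ∃ u, 0 < u ∧ x = u ^ 2 :=
      ⟨√x, Real.sqrt_pos.2 hx, (Real.sq_sqrt hx.le).symm⟩
    obtain ⟨v, hv, hvy⟩ : ∃ v, 0 < v ∧ y = v ^ 2 :=
      ⟨√y, Real.sqrt_pos.2 hy, (Real.sq_sqrt hy.le).symm⟩
    rw [hux, hvy, Real.sqrt_sq hu.le, Real.sqrt_sq hv.le] at h1
    field_simp at h1
    have : (u - v) ^ 2 = 0 := by linarith
    have : u = v := by nlinarith [pow_eq_zero_iff (two_ne_zero) |>.1 this]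
    rw [hux, hvy, this]
  have hconst : ∀ τ ∈ Ioo (0 : ℝ) 1, q₂ τ = q₁ τ + (q₂ (1 / 2) - q₁ (1 / 2)) := by
    intro τ hτ
    have hd : ∀ τ ∈ Ioo (0 : ℝ) 1, HasDerivAt (fun τ => q₂ τ - q₁ τ) 0 τ := by
      intro τ hτ
      have := (hd₂ τ hτ).sub (hd₁ τ hτ)
      rwa [hff τ hτ, sub_self] at this
    have := isOpen_Ioo.is_const_of_deriv_eq_zero isPreconnected_Ioo
      (fun τ hτ => (hd τ hτ).differentiableAt.differentiableWithinAt)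
      (fun τ hτ => (hd τ hτ).deriv) hτ (show (1 / 2 : ℝ) ∈ Ioo (0 : ℝ) 1 by norm_num)
    linarith
  set c := q₂ (1 / 2) - q₁ (1 / 2)
  have hIoo : Ioo a₂ b₂ = Ioo (a₁ + c) (b₁ + c) := by
    rw [← him₂, ← image_add_const_Ioo, ← him₁, image_image]
    exact image_congr hconst
  have hends : a₂ = a₁ + c ∧ b₂ = b₁ + c := by
    have h1 := congrArg sInf hIoo
    have h2 := congrArg sSup hIoo
    rw [csInf_Ioo hab₂, csInf_Ioo (by linarith)] at h1
    rw [csSup_Ioo hab₂, csSup_Ioo (by linarith)] at h2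
    exact ⟨h1, h2⟩
  refine ⟨c, hends.1, hends.2, fun s hs => ?_⟩
  rw [← him₁] at hs
  obtain ⟨τ, hτ, rfl⟩ := hs
  rw [← hconst τ hτ, hff τ hτ]

/-- The support function of a set. -/
def supp {m : ℕ} (K : Set (Euc m)) (u : Euc m) : ℝ := sSup ((fun x => ⟪x, u⟫) '' K)

section Support

variable {m : ℕ} {K L : Set (Euc m)}

theorem continuous_supp (hK : IsCompact K) : Continuous (supp K) :=
  hK.continuous_sSup (f := fun (u : Euc m) (x : Euc m) => ⟪x, u⟫) (by fun_prop)

theorem inner_le_supp (hK : IsCompact K) {x : Euc m} (hx : x ∈ K) (u : Euc m) :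
    ⟪x, u⟫ ≤ supp K u :=
  le_csSup (hK.image (by fun_prop)).bddAbove (mem_image_of_mem _ hx)

theorem supp_le (hne : K.Nonempty) {u : Euc m} {c : ℝ} (h : ∀ x ∈ K, ⟪x, u⟫ ≤ c) :
    supp K u ≤ c := by
  refine csSup_le (hne.image _) ?_
  rintro _ ⟨x, hx, rfl⟩
  exact h x hx

theorem exists_inner_eq_supp (hK : IsCompact K) (hne : K.Nonempty) (u : Euc m) :
    ∃ x ∈ K, ⟪x, u⟫ = supp K u :=
  (hK.image (f := fun x => ⟪x, u⟫) (by fun_prop)).sSup_mem (hne.image _)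

theorem mem_of_forall_inner_le_supp (hK : IsCompact K) (hc : Convex ℝ K) (hne : K.Nonempty)
    {x : Euc m} (h : ∀ u, ‖u‖ = 1 → ⟪x, u⟫ ≤ supp K u) : x ∈ K := by
  by_contra hx
  obtain ⟨f, s, hs, hxs⟩ := geometric_hahn_banach_closed_point hc hK.isClosed hx
  obtain ⟨z, rfl⟩ : ∃ z, f = innerSL ℝ z :=
    ⟨(InnerProductSpace.toDual ℝ _).symm f, by
      ext y; simp⟩
  simp only [innerSL_apply_apply] at hs hxs
  have hz : z ≠ 0 := by
    rintro rfl
    obtain ⟨y, hy⟩ := hne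
    have := hs y hy
    simp only [inner_zero_left] at this hxs
    linarith
  have hz' : 0 < ‖z‖ := norm_pos_iff.2 hz
  have h1 := h (‖z‖⁻¹ • z) (by rw [norm_smul]; simp [hz'.ne'])
  obtain ⟨y, hy, hy'⟩ := exists_inner_eq_supp hK hne (‖z‖⁻¹ • z)
  rw [← hy', inner_smul_right, inner_smul_right, real_inner_comm, real_inner_comm z y] at h1
  have h2 := le_of_mul_le_mul_left h1 (inv_pos.2 hz')
  linarith [hs y hy]

theorem supp_vadd (hK : IsCompact K) (hne : K.Nonempty) (v u : Euc m) :
    supp (v +ᵥ K) u = ⟪v, u⟫ + supp K u := by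
  have hK' : IsCompact (v +ᵥ K) := hK.vadd v
  apply le_antisymm
  · refine supp_le hne.vadd_set ?_
    rintro _ ⟨x, hx, rfl⟩
    simp only [vadd_eq_add, inner_add_left]
    gcongr
    exact inner_le_supp hK hx u
  · rw [← le_sub_iff_add_le']
    refine supp_le hne fun x hx => ?_
    have := inner_le_supp hK' (vadd_mem_vadd_set hx) u
    rw [vadd_eq_add, inner_add_left] at this
    linarith

theorem supp_smul_le (hK : IsCompact K) (hne : K.Nonempty) {c : ℝ} (hc : 0 ≤ c) (u : Euc m) :
    supp (c • K) u ≤ c * supp K u := by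
  refine supp_le (hne.smul_set) ?_
  rintro _ ⟨x, hx, rfl⟩
  simp only [inner_smul_left]
  exact mul_le_mul_of_nonneg_left (inner_le_supp hK hx u) hc

theorem supp_add_le (hK : IsCompact K) (hL : IsCompact L) (hne : K.Nonempty) (hneL : L.Nonempty)
    (u : Euc m) : supp (K + L) u ≤ supp K u + supp L u := by
  refine supp_le (hne.add hneL) ?_
  rintro _ ⟨x, hx, y, hy, rfl⟩
  simp only [inner_add_left]
  exact add_le_add (inner_le_supp hK hx u) (inner_le_supp hL hy u)

theorem IsConvexBody.nonempty (hK : IsConvexBody K) : K.Nonempty := hK.2.2.mono interior_subset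

theorem IsConvexBody.volume_pos (hK : IsConvexBody K) : 0 < volume.real K := by
  rw [Measure.real, ENNReal.toReal_pos_iff]
  exact ⟨Measure.measure_pos_of_nonempty_interior _ hK.2.2, hK.2.1.measure_lt_top⟩

theorem isConvexBody_of_volume_ne_zero (hc : Convex ℝ K) (hK : IsCompact K)
    (h : volume.real K ≠ 0) : IsConvexBody K := by
  refine ⟨hc, hK, ?_⟩
  by_contra hne
  rw [not_nonempty_iff_eq_empty] at hne
  apply h
  have h0 := hc.addHaar_frontier volume
  rw [hK.isClosed.frontier_eq, hne, sdiff_empty] at h0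
  simp [Measure.real, h0]

end Support

section Slices

variable {k : ℕ} {n : Euc (k + 1)} {J : Euc k →ₗᵢ[ℝ] Euc (k + 1)} {A B : Set (Euc (k + 1))}

theorem isCompact_slice (hA : IsCompact A) (s : ℝ) : IsCompact (slice n J A s) := by
  have : Isometry fun y => s • n + J y := (isometry_add_left (s • n)).comp J.isometry
  exact this.isClosedEmbedding.isCompact_preimage hA

theorem convex_slice (hA : Convex ℝ A) (s : ℝ) : Convex ℝ (slice n J A s) := by
  intro y hy z hz a b ha hb hab
  have h : s • n + J (a • y + b • z) = a • (s • n + J y) + b • (s • n + J z) := by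
    rw [map_add, map_smul, map_smul, smul_add, smul_add, add_add_add_comm, ← add_smul, hab,
      one_smul]
  change s • n + J (a • y + b • z) ∈ A
  rw [h]
  exact hA hy hz ha hb hab

theorem slice_combo_subset (w₁ w₂ s t : ℝ) :
    w₁ • slice n J A s + w₂ • slice n J B t ⊆ slice n J (w₁ • A + w₂ • B) (w₁ * s + w₂ * t) := by
  rintro _ ⟨_, ⟨y, hy, rfl⟩, _, ⟨z, hz, rfl⟩, rfl⟩
  refine ⟨_, smul_mem_smul_set hy, _, smul_mem_smul_set hz, ?_⟩
  simp only [map_add, map_smul, smul_add, smul_smul, add_smul]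
  abel

namespace IsSlicing

theorem mem_Icc (hJ : IsSlicing n J) (hA : IsCompact A) {s : ℝ} (h : (slice n J A s).Nonempty) :
    s ∈ Icc (-supp A (-n)) (supp A n) := by
  obtain ⟨y, hy⟩ := h
  have h1 := inner_le_supp hA hy n
  have h2 := inner_le_supp hA hy (-n)
  rw [inner_neg_right] at h2
  rw [hJ.inner_apply] at h1 h2
  exact ⟨by linarith, h1⟩

theorem exists_interior (hJ : IsSlicing n J) (hA : IsConvexBody A) {s : ℝ}
    (hs : s ∈ Ioo (-supp A (-n)) (supp A n)) : ∃ y, s • n + J y ∈ interior A := by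
  obtain ⟨z, hz⟩ := hA.2.2
  obtain ⟨x, hx, hxs⟩ := exists_inner_eq_supp hA.2.1 hA.nonempty n
  obtain ⟨x', hx', hxs'⟩ := exists_inner_eq_supp hA.2.1 hA.nonempty (-n)
  rw [inner_neg_right] at hxs'
  suffices h : ∃ p ∈ interior A, ⟪p, n⟫ = s by
    obtain ⟨p, hp, hps⟩ := h
    obtain ⟨y, hy⟩ := hJ.exists_eq p
    exact ⟨y, by rw [← hps, ← hy]; exact hp⟩
  have key : ∀ w ∈ A, ⟪z, n⟫ < s ∧ s < ⟪w, n⟫ ∨ ⟪w, n⟫ < s ∧ s < ⟪z, n⟫ →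
      ∃ p ∈ interior A, ⟪p, n⟫ = s := by
    intro w hw h
    set a := ⟪z, n⟫
    set b := ⟪w, n⟫
    have hne : b - a ≠ 0 := by rcases h with h | h <;> intro h0 <;> linarith [h.1, h.2]
    have hab : 0 < (b - s) / (b - a) ∧ 0 ≤ (s - a) / (b - a) := by
      rcases h with h | h
      · exact ⟨div_pos (by linarith) (by linarith), div_nonneg (by linarith) (by linarith)⟩
      · exact ⟨div_pos_of_neg_of_neg (by linarith) (by linarith),
          div_nonneg_of_nonpos (by linarith) (by linarith)⟩
    refine ⟨((b - s) / (b - a)) • z + ((s - a) / (b - a)) • w,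
      hA.1.combo_interior_self_mem_interior hz hw hab.1 hab.2 (by field_simp; ring), ?_⟩
    rw [inner_add_left, inner_smul_left, inner_smul_left]
    simp only [conj_trivial]
    change (b - s) / (b - a) * a + (s - a) / (b - a) * b = s
    field_simp
    ring
  rcases lt_trichotomy ⟪z, n⟫ s with h | h | h
  · exact key x hx (Or.inl ⟨h, hxs ▸ hs.2⟩)
  · exact ⟨z, hz, h⟩
  · exact key x' hx' (Or.inr ⟨by linarith [hs.1], h⟩)

theorem supp_lt (hJ : IsSlicing n J) (hA : IsConvexBody A) : -supp A (-n) < supp A n := by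
  obtain ⟨z, hz⟩ := hA.2.2
  have hcont : Filter.Tendsto (fun t : ℝ => z + t • n) (𝓝[>] 0) (𝓝 z) := by
    have : Continuous fun t : ℝ => z + t • n := by fun_prop
    simpa using (this.tendsto 0).mono_left nhdsWithin_le_nhds
  obtain ⟨t, ht, ht0⟩ := ((hcont.eventually (mem_interior_iff_mem_nhds.1 hz)).and
    self_mem_nhdsWithin).exists
  have h1 := inner_le_supp hA.2.1 ht n
  have h2 := inner_le_supp hA.2.1 (interior_subset hz) (-n)
  rw [inner_add_left, inner_smul_left, real_inner_self_eq_norm_sq, hJ.norm_eq] at h1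
  rw [inner_neg_right] at h2
  simp only [conj_trivial, one_pow, mul_one] at h1
  have : 0 < t := ht0
  linarith

theorem volume_slice_pos (hJ : IsSlicing n J) (hA : IsConvexBody A) {s : ℝ}
    (hs : s ∈ Ioo (-supp A (-n)) (supp A n)) : 0 < volume.real (slice n J A s) := by
  obtain ⟨y, hy⟩ := hJ.exists_interior hA hs
  rw [Measure.real, ENNReal.toReal_pos_iff]
  refine ⟨Measure.measure_pos_of_nonempty_interior _ ⟨y, ?_⟩, (isCompact_slice hA.2.1 s).measure_lt_top⟩
  refine interior_maximal (s := slice n J A s)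
    (t := (fun y => s • n + J y) ⁻¹' interior A) (fun z hz => show s • n + J z ∈ A from interior_subset hz) ?_ hy
  exact isOpen_interior.preimage (by fun_prop)

theorem volume_slice_eq_zero (hJ : IsSlicing n J) (hA : IsCompact A) {s : ℝ}
    (hs : s ∉ Icc (-supp A (-n)) (supp A n)) : volume.real (slice n J A s) = 0 := by
  have : slice n J A s = ∅ := by
    by_contra h
    exact hs (hJ.mem_Icc hA (nonempty_iff_ne_empty.2 h))
  simp [this]

theorem integrable_volume_slice (hJ : IsSlicing n J) (hA : IsCompact A) :
    Integrable fun s => volume.real (slice n J A s) := by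
  refine integrable_toReal_of_lintegral_ne_top
    (hJ.measurable_volume_slice hA.measurableSet).aemeasurable ?_
  rw [← hJ.volume_eq_lintegral_slice hA.measurableSet]
  exact hA.measure_lt_top.ne

theorem volume_eq_setIntegral (hJ : IsSlicing n J) (hA : IsCompact A) :
    ∫ s in Ioo (-supp A (-n)) (supp A n), volume.real (slice n J A s) = volume.real A := by
  rw [← integral_Icc_eq_integral_Ioo, setIntegral_eq_integral_of_forall_compl_eq_zero
    fun s hs => hJ.volume_slice_eq_zero hA hs]
  have := hJ.integral_eq hA.measurableSet (fun _ => 1) (integrableOn_const hA.measure_lt_top.ne)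
  simpa using this.symm

end IsSlicing

/-- The multiplicative Brunn–Minkowski inequality in dimension `k`. -/
def BrunnMinkowski (k : ℕ) : Prop :=
  ∀ A B : Set (Euc k), Convex ℝ A → Convex ℝ B → IsCompact A → IsCompact B → A.Nonempty →
    B.Nonempty → ∀ w₁ w₂ : ℝ, 0 < w₁ → 0 < w₂ → w₁ + w₂ = 1 →
      volume.real A ^ w₁ * volume.real B ^ w₂ ≤ volume.real (w₁ • A + w₂ • B)

namespace IsSlicing

theorem volume_slice_combo (hBM : BrunnMinkowski k) (hJ : IsSlicing n J) (hA : IsConvexBody A)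
    (hB : IsConvexBody B) {w₁ w₂ : ℝ} (hw₁ : 0 < w₁) (hw₂ : 0 < w₂) (hw : w₁ + w₂ = 1) {s t : ℝ}
    (hs : s ∈ Ioo (-supp A (-n)) (supp A n)) (ht : t ∈ Ioo (-supp B (-n)) (supp B n)) :
    volume.real (slice n J A s) ^ w₁ * volume.real (slice n J B t) ^ w₂ ≤
      volume.real (slice n J (w₁ • A + w₂ • B) (w₁ * s + w₂ * t)) := by
  obtain ⟨y, hy⟩ := hJ.exists_interior hA hs
  obtain ⟨z, hz⟩ := hJ.exists_interior hB ht
  refine (hBM _ _ (convex_slice hA.1 s) (convex_slice hB.1 t) (isCompact_slice hA.2.1 s)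
    (isCompact_slice hB.2.1 t) ⟨y, show s • n + J y ∈ A from interior_subset hy⟩
    ⟨z, show t • n + J z ∈ B from interior_subset hz⟩ w₁ w₂ hw₁ hw₂
    hw).trans ?_
  refine measureReal_mono (slice_combo_subset w₁ w₂ s t) ?_
  exact (isCompact_slice ((hA.2.1.smul w₁).add (hB.2.1.smul w₂)) _).measure_lt_top.ne

theorem continuousOn_volume_slice (hBM : BrunnMinkowski k) (hJ : IsSlicing n J)
    (hA : IsConvexBody A) :
    ContinuousOn (fun s => volume.real (slice n J A s)) (Ioo (-supp A (-n)) (supp A n)) := by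
  have hconc : ConcaveOn ℝ (Ioo (-supp A (-n)) (supp A n))
      fun s => Real.log (volume.real (slice n J A s)) := by
    rw [concaveOn_iff_forall_pos]
    refine ⟨convex_Ioo _ _, fun s hs t ht w₁ w₂ hw₁ hw₂ hw => ?_⟩
    have h := hJ.volume_slice_combo hBM hA hA hw₁ hw₂ hw hs ht
    have hsub : w₁ • A + w₂ • A ⊆ A := by
      rw [← hA.1.add_smul hw₁.le hw₂.le, hw, one_smul]
    have h' := h.trans (measureReal_mono (μ := volume) (s₂ := slice n J A (w₁ * s + w₂ * t))
      (fun y hy => hsub hy) (isCompact_slice hA.2.1 _).measure_lt_top.ne)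
    have p1 := hJ.volume_slice_pos hA hs
    have p2 := hJ.volume_slice_pos hA ht
    have := Real.log_le_log (by positivity) h'
    rw [Real.log_mul (by positivity) (by positivity), Real.log_rpow p1, Real.log_rpow p2] at this
    simpa using this
  refine ((hconc.continuousOn isOpen_Ioo).rexp).congr fun s hs => ?_
  exact (Real.exp_log (hJ.volume_slice_pos hA hs)).symm

end IsSlicing

theorem exists_norm_eq_one (k : ℕ) : ∃ n : Euc (k + 1), ‖n‖ = 1 :=
  ⟨EuclideanSpace.single 0 1, by simp⟩

theorem brunnMinkowski (k : ℕ) : BrunnMinkowski k := by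
  induction k with
  | zero =>
    intro A B _ _ _ _ hA hB w₁ w₂ _ _ _
    have h : ∀ S : Set (Euc 0), S.Nonempty → volume.real S = volume.real (univ : Set (Euc 0)) :=
      fun S hS => by rw [Subsingleton.eq_univ_of_nonempty hS]
    have h1 : volume.real (univ : Set (Euc 0)) = 1 := by
      have := (PiLp.volume_preserving_ofLp (Fin 0)).measure_preimage
        (s := univ) MeasurableSet.univ.nullMeasurableSet
      rw [preimage_univ] at this
      rw [Measure.real, this, volume_pi, Measure.pi_of_empty]
      simp
    rw [h A hA, h B hB, h _ ((hA.smul_set).add (hB.smul_set)), h1]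
    simp
  | succ k ih =>
    intro A B cA cB kA kB nA nB w₁ w₂ hw₁ hw₂ hw
    by_cases hA0 : volume.real A = 0
    · rw [hA0, Real.zero_rpow hw₁.ne', zero_mul]; exact measureReal_nonneg
    by_cases hB0 : volume.real B = 0
    · rw [hB0, Real.zero_rpow hw₂.ne', mul_zero]; exact measureReal_nonneg
    have hA := isConvexBody_of_volume_ne_zero cA kA hA0
    have hB := isConvexBody_of_volume_ne_zero cB kB hB0
    obtain ⟨n, hn⟩ := exists_norm_eq_one k
    obtain ⟨J, hJ⟩ := exists_isSlicing hn
    have kM : IsCompact (w₁ • A + w₂ • B) := (kA.smul w₁).add (kB.smul w₂)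
    have := prekopa_leindler_interval (hJ.supp_lt hA) (hJ.supp_lt hB) hw₁ hw₂ hw
      (hJ.continuousOn_volume_slice ih hA) (hJ.continuousOn_volume_slice ih hB)
      (fun s hs => hJ.volume_slice_pos hA hs) (fun s hs => hJ.volume_slice_pos hB hs)
      (hJ.integrable_volume_slice kA).integrableOn (hJ.integrable_volume_slice kB).integrableOn
      (f₃ := fun s => volume (slice n J (w₁ • A + w₂ • B) s)) (fun s hs t ht => by
        refine ENNReal.ofReal_le_of_le_toReal ?_
        exact hJ.volume_slice_combo ih hA hB hw₁ hw₂ hw hs ht)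
    rw [hJ.volume_eq_setIntegral kA, hJ.volume_eq_setIntegral kB,
      ← hJ.volume_eq_lintegral_slice kM.measurableSet] at this
    exact (ENNReal.ofReal_le_iff_le_toReal kM.measure_lt_top.ne).1 this

/-- Equality in the midpoint Brunn–Minkowski inequality forces the bodies to be translates. -/
theorem eq_vadd_of_volume_midpoint_le (hA : IsConvexBody A) (hB : IsConvexBody B)
    (hAB : volume.real B = volume.real A)
    (hM : volume.real ((1 / 2 : ℝ) • A + (1 / 2 : ℝ) • B) ≤ volume.real A) :
    ∃ v : Euc (k + 1), B = v +ᵥ A := by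
  set V := volume.real A with hV
  have hVp : 0 < V := hA.volume_pos
  have hMc : IsCompact ((1 / 2 : ℝ) • A + (1 / 2 : ℝ) • B) :=
    (hA.2.1.smul _).add (hB.2.1.smul _)
  set v : Euc (k + 1) := V⁻¹ • ((∫ x in B, x) - ∫ x in A, x) with hv
  have hintA : IntegrableOn (fun x : Euc (k + 1) => x) A :=
    continuous_id.continuousOn.integrableOn_compact hA.2.1
  have hintB : IntegrableOn (fun x : Euc (k + 1) => x) B :=
    continuous_id.continuousOn.integrableOn_compact hB.2.1
  have key : ∀ u, ‖u‖ = 1 → supp B u = ⟪v, u⟫ + supp A u := by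
    intro n hn
    obtain ⟨J, hJ⟩ := exists_isSlicing hn
    obtain ⟨c, ha, hb, hc⟩ := prekopa_leindler_interval_eq (hJ.supp_lt hA) (hJ.supp_lt hB)
      (hJ.continuousOn_volume_slice (brunnMinkowski k) hA)
      (hJ.continuousOn_volume_slice (brunnMinkowski k) hB)
      (fun s hs => hJ.volume_slice_pos hA hs) (fun s hs => hJ.volume_slice_pos hB hs)
      (hJ.integrable_volume_slice hA.2.1).integrableOn
      (hJ.integrable_volume_slice hB.2.1).integrableOn
      (f₃ := fun s => volume (slice n J ((1 / 2 : ℝ) • A + (1 / 2 : ℝ) • B) s))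
      (fun s hs t ht => by
        refine ENNReal.ofReal_le_of_le_toReal ?_
        exact hJ.volume_slice_combo (brunnMinkowski k) hA hB (by norm_num) (by norm_num)
          (by norm_num) hs ht)
      (hJ.volume_eq_setIntegral hA.2.1) ((hJ.volume_eq_setIntegral hB.2.1).trans hAB)
      (by
        rw [← hJ.volume_eq_lintegral_slice hMc.measurableSet]
        exact (ENNReal.le_ofReal_iff_toReal_le hMc.measure_lt_top.ne hVp.le).2 hM)
    have hae : ∀ᵐ s : ℝ, volume.real (slice n J B (s + c)) = volume.real (slice n J A s) := by
      have h0 : volume ({-supp A (-n), supp A n} : Set ℝ) = 0 :=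
        (Set.toFinite _).measure_zero volume
      filter_upwards [compl_mem_ae_iff.2 h0] with s hs
      simp only [mem_compl_iff, mem_insert_iff, mem_singleton_iff, not_or] at hs
      by_cases hs' : s ∈ Icc (-supp A (-n)) (supp A n)
      · exact hc s ⟨lt_of_le_of_ne hs'.1 (Ne.symm hs.1), lt_of_le_of_ne hs'.2 hs.2⟩
      · rw [hJ.volume_slice_eq_zero hA.2.1 hs', hJ.volume_slice_eq_zero hB.2.1]
        rw [ha, hb]
        contrapose! hs'
        exact ⟨by linarith [hs'.1], by linarith [hs'.2]⟩
    have hAi : ∫ x in A, ⟪x, n⟫ = ⟪∫ x in A, x, n⟫ := by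
      simp_rw [fun x : Euc (k + 1) => real_inner_comm n x]; exact integral_inner hintA n
    have hBi : ∫ x in B, ⟪x, n⟫ = ⟪∫ x in B, x, n⟫ := by
      simp_rw [fun x : Euc (k + 1) => real_inner_comm n x]; exact integral_inner hintB n
    have hintn : IntegrableOn (fun x : Euc (k + 1) => ⟪x, n⟫) A :=
      ContinuousOn.integrableOn_compact hA.2.1 (by fun_prop)
    have e1 := hJ.integral_eq hB.2.1.measurableSet (fun s => s)
      (ContinuousOn.integrableOn_compact hB.2.1 (by fun_prop))
    have e2 := hJ.integral_eq hA.2.1.measurableSet (fun s => s + c)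
      (ContinuousOn.integrableOn_compact hA.2.1 (by fun_prop))
    have e3 : ∫ s, s * volume.real (slice n J B s) =
        ∫ s, (s + c) * volume.real (slice n J A s) := by
      rw [← integral_add_right_eq_self _ c]
      refine integral_congr_ae ?_
      filter_upwards [hae] with s hs
      rw [hs]
    rw [e3, ← e2, integral_add hintn (integrableOn_const hA.2.1.measure_lt_top.ne), hAi, hBi, setIntegral_const, smul_eq_mul] at e1
    have : ⟪v, n⟫ = c := by
      rw [hv, inner_smul_left, inner_sub_left, e1]
      simp only [conj_trivial, ← hV]
      field_simp
      ring
    rw [this, hb, add_comm]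
  have hAv : IsCompact (v +ᵥ A) := hA.2.1.vadd v
  have hsupp : ∀ u, ‖u‖ = 1 → supp B u = supp (v +ᵥ A) u := fun u hu => by
    rw [key u hu, supp_vadd hA.2.1 hA.nonempty]
  refine ⟨v, Subset.antisymm (fun x hx => ?_) fun x hx => ?_⟩
  · refine mem_of_forall_inner_le_supp hAv (hA.1.vadd v) (hA.nonempty.vadd_set) fun u hu => ?_
    rw [← hsupp u hu]; exact inner_le_supp hB.2.1 hx u
  · refine mem_of_forall_inner_le_supp hB.2.1 hB.1 hB.nonempty fun u hu => ?_
    rw [hsupp u hu]; exact inner_le_supp hAv hx u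

end Slices

/-- The radial projection onto the boundary of `K`, for `K` containing the origin in its
interior. -/
def radial {m : ℕ} (K : Set (Euc m)) (x : Euc m) : Euc m := (gauge K x)⁻¹ • x

/-- Boundary points of `K` at which the gauge of `K` is differentiable. -/
def regularBoundary {m : ℕ} (K : Set (Euc m)) : Set (Euc m) :=
  frontier K ∩ {x | DifferentiableAt ℝ (gauge K) x}

namespace IsConvexBody

variable {m : ℕ} {K : Set (Euc m)}

theorem continuous_gauge (hK : IsConvexBody K) (h0 : 0 ∈ interior K) : Continuous (gauge K) :=
  _root_.continuous_gauge hK.1 (mem_interior_iff_mem_nhds.1 h0)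

theorem gauge_le_one_iff (hK : IsConvexBody K) (h0 : 0 ∈ interior K) {x : Euc m} :
    gauge K x ≤ 1 ↔ x ∈ K := by
  rw [gauge_le_one_iff_mem_closure hK.1 (mem_interior_iff_mem_nhds.1 h0),
    hK.2.1.isClosed.closure_eq]

theorem gauge_eq_one_iff (hK : IsConvexBody K) (h0 : 0 ∈ interior K) {x : Euc m} :
    gauge K x = 1 ↔ x ∈ frontier K :=
  gauge_eq_one_iff_mem_frontier hK.1 (mem_interior_iff_mem_nhds.1 h0)

theorem gauge_pos (hK : IsConvexBody K) (h0 : 0 ∈ interior K) {x : Euc m} (hx : x ≠ 0) :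
    0 < gauge K x :=
  (_root_.gauge_pos (absorbent_nhds_zero (mem_interior_iff_mem_nhds.1 h0))
    (NormedSpace.isVonNBounded_of_isBounded _ hK.2.1.isBounded)).2 hx

theorem measurable_radial (hK : IsConvexBody K) (h0 : 0 ∈ interior K) : Measurable (radial K) :=
  (hK.continuous_gauge h0).measurable.inv.smul measurable_id

theorem radial_smul {c : ℝ} (hc : 0 < c) (x : Euc m) : radial K (c • x) = radial K x := by
  rw [radial, gauge_smul_of_nonneg hc.le, smul_eq_mul, smul_smul, radial]
  congr 1
  field_simp

theorem gauge_radial (hK : IsConvexBody K) (h0 : 0 ∈ interior K) {x : Euc m} (hx : x ≠ 0) :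
    gauge K (radial K x) = 1 := by
  rw [radial, gauge_smul_of_nonneg (inv_nonneg.2 (gauge_nonneg x)), smul_eq_mul,
    inv_mul_cancel₀ (hK.gauge_pos h0 hx).ne']

theorem radial_mem_frontier (hK : IsConvexBody K) (h0 : 0 ∈ interior K) {x : Euc m}
    (hx : x ≠ 0) : radial K x ∈ frontier K :=
  (hK.gauge_eq_one_iff h0).1 (hK.gauge_radial h0 hx)

theorem radial_of_mem_frontier (hK : IsConvexBody K) (h0 : 0 ∈ interior K) {x : Euc m}
    (hx : x ∈ frontier K) : radial K x = x := by
  rw [radial, (hK.gauge_eq_one_iff h0).2 hx, inv_one, one_smul]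

theorem gauge_smul_radial (hK : IsConvexBody K) (h0 : 0 ∈ interior K) (x : Euc m) :
    gauge K x • radial K x = x := by
  rcases eq_or_ne x 0 with rfl | hx
  · simp [radial]
  · rw [radial, smul_smul, mul_inv_cancel₀ (hK.gauge_pos h0 hx).ne', one_smul]

theorem ne_zero_of_mem_frontier (h0 : 0 ∈ interior K) {x : Euc m} (hx : x ∈ frontier K) :
    x ≠ 0 := by
  rintro rfl
  exact hx.2 h0

theorem frontier_subset (hK : IsConvexBody K) : frontier K ⊆ K := hK.2.1.isClosed.frontier_subset

theorem isCompact_frontier (hK : IsConvexBody K) : IsCompact (frontier K) :=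
  hK.2.1.of_isClosed_subset isClosed_frontier hK.frontier_subset

theorem exists_isOutwardNormalAt (hK : IsConvexBody K) {x : Euc m} (hx : x ∈ frontier K) :
    ∃ n, IsOutwardNormalAt K x n := by
  obtain ⟨f, hf⟩ := geometric_hahn_banach_open_point hK.1.interior isOpen_interior hx.2
  obtain ⟨z, rfl⟩ : ∃ z, f = innerSL ℝ z :=
    ⟨(InnerProductSpace.toDual ℝ _).symm f, by ext y; simp⟩
  simp only [innerSL_apply_apply] at hf
  have hz : z ≠ 0 := by
    rintro rfl
    obtain ⟨y, hy⟩ := hK.2.2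
    simpa using hf y hy
  have hle : ∀ y ∈ K, ⟪z, y⟫ ≤ ⟪z, x⟫ := by
    intro y hy
    have hy' : y ∈ closure (interior K) := by
      rw [hK.1.closure_interior_eq_closure_of_nonempty_interior hK.2.2]
      exact subset_closure hy
    exact closure_minimal (t := {w | ⟪z, w⟫ ≤ ⟪z, x⟫}) (fun w hw => (hf w hw).le)
      (isClosed_le (by fun_prop) continuous_const) hy'
  have hz' : 0 < ‖z‖ := norm_pos_iff.2 hz
  refine ⟨‖z‖⁻¹ • z, hx, by rw [norm_smul]; simp [hz'.ne'], fun y hy => ?_⟩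
  rw [inner_smul_right, inner_sub_left, real_inner_comm, real_inner_comm z x]
  exact mul_nonpos_of_nonneg_of_nonpos (inv_nonneg.2 hz'.le) (by linarith [hle y hy])

theorem isOutwardNormalAt_gaussMap (hK : IsConvexBody K) {x : Euc m} (hx : x ∈ frontier K) :
    IsOutwardNormalAt K x (gaussMap K x) := by
  have h := hK.exists_isOutwardNormalAt hx
  rw [gaussMap, dif_pos h]
  exact h.choose_spec

theorem inner_eq_supp (hK : IsConvexBody K) {x n : Euc m} (h : IsOutwardNormalAt K x n) :
    ⟪x, n⟫ = supp K n := by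
  apply le_antisymm (inner_le_supp hK.2.1 (hK.frontier_subset h.1) n)
  refine supp_le hK.nonempty fun y hy => ?_
  have := h.2.2 y hy
  rw [inner_sub_left] at this
  linarith

theorem exists_pos_le_supp (h0 : 0 ∈ interior K) (hK : IsConvexBody K) :
    ∃ r, 0 < r ∧ ∀ u, ‖u‖ = 1 → r ≤ supp K u := by
  obtain ⟨r, hr, hrK⟩ := Metric.nhds_basis_closedBall.mem_iff.1 (mem_interior_iff_mem_nhds.1 h0)
  refine ⟨r, hr, fun u hu => ?_⟩
  have h1 : r • u ∈ K := hrK (by simp [norm_smul, hu, abs_of_pos hr])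
  have := inner_le_supp hK.2.1 h1 u
  rwa [inner_smul_left, real_inner_self_eq_norm_sq, hu, conj_trivial, one_pow, mul_one] at this

theorem inner_pos (hK : IsConvexBody K) (h0 : 0 ∈ interior K) {x n : Euc m}
    (h : IsOutwardNormalAt K x n) : 0 < ⟪x, n⟫ := by
  obtain ⟨r, hr, hrK⟩ := exists_pos_le_supp h0 hK
  rw [hK.inner_eq_supp h]
  exact hr.trans_le (hrK n h.2.1)

theorem inner_le_gauge_mul (hK : IsConvexBody K) (h0 : 0 ∈ interior K) {x n : Euc m}
    (h : IsOutwardNormalAt K x n) (y : Euc m) : ⟪y, n⟫ ≤ gauge K y * ⟪x, n⟫ := by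
  rcases eq_or_ne y 0 with rfl | hy
  · simp
  conv_lhs => rw [← hK.gauge_smul_radial h0 y]
  rw [inner_smul_left, conj_trivial]
  refine mul_le_mul_of_nonneg_left ?_ (gauge_nonneg y)
  have := h.2.2 _ (hK.frontier_subset (hK.radial_mem_frontier h0 hy))
  rw [inner_sub_left] at this
  linarith

theorem isOutwardNormalAt_unique (hK : IsConvexBody K) (h0 : 0 ∈ interior K) {x n n' : Euc m}
    (hx : x ∈ regularBoundary K) (h : IsOutwardNormalAt K x n) (h' : IsOutwardNormalAt K x n') :
    n = n' := by
  have key : ∀ n, IsOutwardNormalAt K x n →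
      ∀ y, ⟪x, n⟫ * fderiv ℝ (gauge K) x y = ⟪y, n⟫ := by
    intro n h y
    have hmin : IsLocalMin (fun y => gauge K y * ⟪x, n⟫ - innerSL ℝ n y) x := by
      refine Filter.Eventually.of_forall fun y => ?_
      have := hK.inner_le_gauge_mul h0 h y
      simp only [innerSL_apply_apply, (hK.gauge_eq_one_iff h0).2 hx.1]
      rw [real_inner_comm x n, real_inner_comm y n]
      linarith
    have hd := (hx.2.hasFDerivAt.mul_const ⟪x, n⟫).sub (innerSL ℝ n).hasFDerivAt
    have h2 := congrArg (fun L : Euc m →L[ℝ] ℝ => L y) (hmin.hasFDerivAt_eq_zero hd)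
    simp only [sub_apply, smul_apply,
      innerSL_apply_apply, zero_apply, smul_eq_mul] at h2
    rw [real_inner_comm n y]
    linarith
  have hp := hK.inner_pos h0 h
  have hp' := hK.inner_pos h0 h'
  have heq : ⟪x, n'⟫ • n = ⟪x, n⟫ • n' := by
    refine ext_inner_left ℝ fun y => ?_
    rw [inner_smul_right, inner_smul_right, ← key n h y, ← key n' h' y]
    ring
  have hnorm := congrArg norm heq
  rw [norm_smul, norm_smul, h.2.1, h'.2.1, Real.norm_of_nonneg hp.le, Real.norm_of_nonneg hp'.le,
    mul_one, mul_one] at hnorm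
  rw [hnorm] at heq
  exact smul_right_injective _ hp.ne' heq

/-- Normals near a regular boundary point are close to the normal at that point. -/
theorem eventually_norm_sub_lt (hK : IsConvexBody K) (h0 : 0 ∈ interior K) {x n : Euc m}
    (hx : x ∈ regularBoundary K) (h : IsOutwardNormalAt K x n) {ε : ℝ} (hε : 0 < ε) :
    ∀ᶠ y in 𝓝 x, ∀ n', IsOutwardNormalAt K y n' → ‖n' - n‖ < ε := by
  have hC : IsCompact {p : Euc m × Euc m | IsOutwardNormalAt K p.1 p.2 ∧ ε ≤ ‖p.2 - n‖} := by
    refine (hK.isCompact_frontier.prod (isCompact_sphere (0 : Euc m) 1)).of_isClosed_subset ?_ ?_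
    · simp only [IsOutwardNormalAt, ofPred_and, ofPred_forall]
      refine IsClosed.inter (IsClosed.inter ?_ (IsClosed.inter ?_ ?_)) ?_
      · exact isClosed_frontier.preimage continuous_fst
      · exact isClosed_eq (by fun_prop) continuous_const
      · exact isClosed_biInter fun y _ => isClosed_le (by fun_prop) continuous_const
      · exact isClosed_le continuous_const (by fun_prop)
    · rintro ⟨y, n'⟩ ⟨h1, -⟩
      exact ⟨h1.1, by simpa using h1.2.1⟩
  have hcl := (hC.image continuous_fst).isClosed
  have hx' : x ∈ (Prod.fst '' {p : Euc m × Euc m |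
      IsOutwardNormalAt K p.1 p.2 ∧ ε ≤ ‖p.2 - n‖})ᶜ := by
    rintro ⟨⟨y, n'⟩, ⟨h1, h2⟩, rfl⟩
    rw [hK.isOutwardNormalAt_unique h0 hx h1 h, sub_self, norm_zero] at h2
    exact absurd h2 (not_le.2 hε)
  filter_upwards [hcl.isOpen_compl.mem_nhds hx'] with y hy n' hn'
  by_contra hcon
  exact hy ⟨(y, n'), ⟨hn', not_lt.1 hcon⟩, rfl⟩

theorem continuousOn_gaussMap (hK : IsConvexBody K) (h0 : 0 ∈ interior K) :
    ContinuousOn (gaussMap K) (regularBoundary K) := by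
  intro x hx
  rw [ContinuousWithinAt, Metric.tendsto_nhds]
  intro ε hε
  filter_upwards [nhdsWithin_le_nhds (hK.eventually_norm_sub_lt h0 hx
    (hK.isOutwardNormalAt_gaussMap hx.1) hε), self_mem_nhdsWithin] with y hy hyR
  rw [dist_eq_norm]
  exact hy _ (hK.isOutwardNormalAt_gaussMap hyR.1)

theorem measurableSet_regularBoundary : MeasurableSet (regularBoundary K) :=
  isClosed_frontier.measurableSet.inter (measurableSet_of_differentiableAt ℝ _)

theorem ae_differentiableAt_gauge (hK : IsConvexBody K) (h0 : 0 ∈ interior K) :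
    ∀ᵐ x, DifferentiableAt ℝ (gauge K) x := by
  obtain ⟨C, hC⟩ := hK.1.lipschitz_gauge (mem_interior_iff_mem_nhds.1 h0)
  exact hC.ae_differentiableAt

theorem differentiableAt_gauge_smul {c : ℝ} (hc : 0 < c) {x : Euc m}
    (hx : DifferentiableAt ℝ (gauge K) x) : DifferentiableAt ℝ (gauge K) (c • x) := by
  have h : gauge K = fun y => c * gauge K (c⁻¹ • y) := by
    ext y
    rw [gauge_smul_of_nonneg (inv_nonneg.2 hc.le), smul_eq_mul, mul_inv_cancel_left₀ hc.ne']
  rw [h]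
  refine DifferentiableAt.const_mul ?_ c
  refine DifferentiableAt.comp (c • x) (f := fun y => c⁻¹ • y) (g := gauge K) ?_ (by fun_prop)
  rwa [inv_smul_smul₀ hc.ne']

theorem ae_radial_mem_regularBoundary (hK : IsConvexBody K) (h0 : 0 ∈ interior K) (hm : m ≠ 0) :
    ∀ᵐ x, radial K x ∈ regularBoundary K := by
  have : Nonempty (Fin m) := ⟨⟨0, Nat.pos_of_ne_zero hm⟩⟩
  filter_upwards [hK.ae_differentiableAt_gauge h0, compl_mem_ae_iff.2 (measure_singleton 0)]
    with x hx hx0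
  have hx0 : x ≠ 0 := hx0
  exact ⟨hK.radial_mem_frontier h0 hx0,
    differentiableAt_gauge_smul (inv_pos.2 (hK.gauge_pos h0 hx0)) hx⟩

end IsConvexBody

/-- The ratio between the Hausdorff measure and the Lebesgue measure on `Euc k`. -/
def hausdorffFactor (k : ℕ) : ℝ :=
  (Measure.addHaarScalarFactor (μH[k] : Measure (Euc k)) volume : ℝ)

instance (k : ℕ) : Measure.IsAddHaarMeasure (μH[k] : Measure (Euc k)) := by
  simpa using isAddHaarMeasure_hausdorffMeasure (E := Euc k)

theorem hausdorffFactor_pos (k : ℕ) : 0 < hausdorffFactor k :=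
  NNReal.coe_pos.2 (Measure.addHaarScalarFactor_pos_of_isAddHaarMeasure _ _)

theorem hausdorffMeasure_eq_smul_volume (k : ℕ) (s : Set (Euc k)) :
    μH[k] s = ENNReal.ofReal (hausdorffFactor k) * volume s := by
  conv_lhs => rw [Measure.isAddLeftInvariant_eq_smul (μH[k] : Measure (Euc k)) volume]
  rw [Measure.smul_apply, hausdorffFactor, ENNReal.ofReal_coe_nnreal, ENNReal.smul_def, smul_eq_mul]

section Cones

variable {k : ℕ} {n : Euc (k + 1)} {J : Euc k →ₗᵢ[ℝ] Euc (k + 1)} {A : Set (Euc (k + 1))}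

theorem slice_eq_smul (hA : ∀ c : ℝ, 0 < c → ∀ x ∈ A, c • x ∈ A) {s : ℝ} (hs : 0 < s) :
    slice n J A s = s • slice n J A 1 := by
  ext y
  rw [mem_smul_set_iff_inv_smul_mem₀ hs.ne']
  change s • n + J y ∈ A ↔ (1 : ℝ) • n + J (s⁻¹ • y) ∈ A
  have h : s • ((1 : ℝ) • n + J (s⁻¹ • y)) = s • n + J y := by
    rw [smul_add, map_smul, smul_inv_smul₀ hs.ne', one_smul]
  constructor
  · intro hy
    have := hA s⁻¹ (inv_pos.2 hs) _ hy
    rwa [← h, inv_smul_smul₀ hs.ne'] at this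
  · intro hy
    rw [← h]
    exact hA s hs _ hy

theorem volume_slice_cone (hA : ∀ c : ℝ, 0 < c → ∀ x ∈ A, c • x ∈ A) {s : ℝ} (hs : 0 < s) :
    volume (slice n J A s) = ENNReal.ofReal (s ^ k) * volume (slice n J A 1) := by
  rw [slice_eq_smul hA hs, Measure.addHaar_smul_of_nonneg _ hs.le]
  simp

theorem IsSlicing.inter_hyperplane_eq_image (hJ : IsSlicing n J) (s : ℝ) :
    A ∩ {x | ⟪x, n⟫ = s} = (fun y => s • n + J y) '' slice n J A s := by
  ext x
  constructor
  · rintro ⟨hx, hs⟩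
    obtain ⟨y, hy⟩ := hJ.exists_eq x
    have hs : ⟪x, n⟫ = s := hs
    rw [hs] at hy
    exact ⟨y, by change s • n + J y ∈ A; rwa [← hy], hy.symm⟩
  · rintro ⟨y, hy, rfl⟩
    exact ⟨hy, hJ.inner_apply s y⟩

theorem IsSlicing.hausdorffMeasure_inter (hJ : IsSlicing n J) (s : ℝ) :
    μH[k] (A ∩ {x | ⟪x, n⟫ = s}) =
      ENNReal.ofReal (hausdorffFactor k) * volume (slice n J A s) := by
  have hiso : Isometry fun y => s • n + J y := (isometry_add_left (s • n)).comp J.isometry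
  rw [hJ.inter_hyperplane_eq_image, hiso.hausdorffMeasure_image (Or.inl (Nat.cast_nonneg k)),
    hausdorffMeasure_eq_smul_volume]

theorem IsSlicing.volume_cone (hJ : IsSlicing n J) (hAm : MeasurableSet A)
    (hA : ∀ c : ℝ, 0 < c → ∀ x ∈ A, c • x ∈ A) {h : ℝ} (hh : 0 < h) :
    volume (A ∩ {x | ⟪x, n⟫ ∈ Ioc 0 h}) =
      ENNReal.ofReal (h ^ (k + 1) / (k + 1)) * volume (slice n J A 1) := by
  have hm : MeasurableSet {x : Euc (k + 1) | ⟪x, n⟫ ∈ Ioc 0 h} :=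
    measurableSet_Ioc.preimage (f := fun x : Euc (k + 1) => ⟪x, n⟫)
      (by fun_prop : Continuous fun x : Euc (k + 1) => ⟪x, n⟫).measurable
  rw [hJ.volume_eq_lintegral_slice (hAm.inter hm)]
  have : ∀ s, volume (slice n J (A ∩ {x | ⟪x, n⟫ ∈ Ioc 0 h}) s) =
      (Ioc 0 h).indicator (fun s => ENNReal.ofReal (s ^ k) * volume (slice n J A 1)) s := by
    intro s
    by_cases hs : s ∈ Ioc 0 h
    · rw [indicator_of_mem hs, ← volume_slice_cone hA hs.1]
      congr 1
      ext y
      change s • n + J y ∈ A ∧ ⟪s • n + J y, n⟫ ∈ Ioc 0 h ↔ s • n + J y ∈ A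
      rw [hJ.inner_apply]
      exact and_iff_left hs
    · rw [indicator_of_notMem hs]
      convert measure_empty (μ := volume)
      rw [eq_empty_iff_forall_notMem]
      rintro y ⟨-, hy⟩
      change ⟪s • n + J y, n⟫ ∈ Ioc 0 h at hy
      rw [hJ.inner_apply] at hy
      exact hs hy
  simp_rw [this]
  rw [lintegral_indicator measurableSet_Ioc, lintegral_mul_const _ (by fun_prop)]
  congr 1
  rw [← ofReal_integral_eq_lintegral_ofReal, ← intervalIntegral.integral_of_le hh.le]
  · simp
  · exact (intervalIntegral.intervalIntegrable_pow k).1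
  · filter_upwards [ae_restrict_mem measurableSet_Ioc] with s hs using pow_nonneg hs.1.le k

/-- The Hausdorff measure of a hyperplane section of a cone in terms of the volume of the cone. -/
theorem hausdorffMeasure_section_cone (hn : ‖n‖ = 1) (hAm : MeasurableSet A)
    (hA : ∀ c : ℝ, 0 < c → ∀ x ∈ A, c • x ∈ A) {h : ℝ} (hh : 0 < h) :
    μH[k] (A ∩ {x | ⟪x, n⟫ = h}) =
      ENNReal.ofReal (hausdorffFactor k * (k + 1) / h) * volume (A ∩ {x | ⟪x, n⟫ ∈ Ioc 0 h}) := by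
  obtain ⟨J, hJ⟩ := exists_isSlicing hn
  have hκ := hausdorffFactor_pos k
  rw [hJ.hausdorffMeasure_inter, hJ.volume_cone hAm hA hh, volume_slice_cone hA hh, ← mul_assoc,
    ← mul_assoc, ← ENNReal.ofReal_mul hκ.le, ← ENNReal.ofReal_mul (by positivity)]
  congr 2
  field_simp
  ring

theorem hausdorffMeasure_section_null (hn : ‖n‖ = 1) (hAm : MeasurableSet A)
    (hA : ∀ c : ℝ, 0 < c → ∀ x ∈ A, c • x ∈ A) (hA0 : volume A = 0) :
    μH[k] (A ∩ {x | ⟪x, n⟫ = 1}) = 0 := by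
  rw [hausdorffMeasure_section_cone hn hAm hA one_pos, measure_mono_null inter_subset_left hA0,
    mul_zero]

end Cones

namespace IsConvexBody

variable {k : ℕ} {K : Set (Euc (k + 1))}

theorem exists_lipschitzOnWith_radial (hK : IsConvexBody K) (h0 : 0 ∈ interior K) :
    ∃ C, LipschitzOnWith C (radial K) {x | 1 ≤ ‖x‖} := by
  obtain ⟨C, hC⟩ := hK.1.lipschitz_gauge (mem_interior_iff_mem_nhds.1 h0)
  obtain ⟨R, hR, hRK⟩ := hK.2.1.isBounded.exists_pos_norm_le
  have hle : ∀ x, ‖x‖ ≤ R * gauge K x := by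
    intro x
    rcases eq_or_ne x 0 with rfl | hx
    · simp
    have h1 := hRK _ (hK.frontier_subset (hK.radial_mem_frontier h0 hx))
    have hg := hK.gauge_pos h0 hx
    rw [radial, norm_smul, norm_inv, Real.norm_of_nonneg hg.le, inv_mul_le_iff₀ hg] at h1
    linarith
  refine ⟨(R + R * R * C).toNNReal, LipschitzOnWith.of_dist_le_mul fun x hx y hy => ?_⟩
  have hx : 1 ≤ ‖x‖ := hx
  have hy : 1 ≤ ‖y‖ := hy
  rw [Real.coe_toNNReal _ (by positivity), dist_eq_norm, dist_eq_norm]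
  have hgx : 0 < gauge K x := hK.gauge_pos h0 (norm_pos_iff.1 (by linarith))
  have hgy : 0 < gauge K y := hK.gauge_pos h0 (norm_pos_iff.1 (by linarith))
  have hxR : (gauge K x)⁻¹ ≤ R := by
    rw [inv_le_iff_one_le_mul₀ hgx]; linarith [hle x]
  have h1 : radial K x - radial K y =
      (gauge K x)⁻¹ • (x - y) + ((gauge K x)⁻¹ * (gauge K y - gauge K x)) • radial K y := by
    simp only [radial, smul_smul, smul_sub]
    rw [show (gauge K x)⁻¹ * (gauge K y - gauge K x) * (gauge K y)⁻¹ =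
      (gauge K x)⁻¹ - (gauge K y)⁻¹ by field_simp, sub_smul]
    abel
  have h2 : |gauge K y - gauge K x| ≤ C * ‖x - y‖ := by
    have := hC.dist_le_mul y x
    rwa [Real.dist_eq, dist_comm, dist_eq_norm] at this
  have h3 : ‖radial K y‖ ≤ R :=
    hRK _ (hK.frontier_subset (hK.radial_mem_frontier h0 (norm_pos_iff.1 (by linarith))))
  calc ‖radial K x - radial K y‖
      ≤ (gauge K x)⁻¹ * ‖x - y‖ + (gauge K x)⁻¹ * |gauge K y - gauge K x| * ‖radial K y‖ := by
        rw [h1]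
        refine (norm_add_le _ _).trans ?_
        rw [norm_smul, norm_smul, norm_mul, Real.norm_of_nonneg (inv_nonneg.2 hgx.le),
          Real.norm_eq_abs]
    _ ≤ R * ‖x - y‖ + R * (C * ‖x - y‖) * R := by gcongr
    _ = (R + R * R * C) * ‖x - y‖ := by ring

/-- Null cones meet the boundary of a convex body in a set of vanishing Hausdorff measure. -/
theorem hausdorffMeasure_inter_null_cone (hK : IsConvexBody K) (h0 : 0 ∈ interior K)
    {A : Set (Euc (k + 1))} (hAm : MeasurableSet A)
    (hA : ∀ c : ℝ, 0 < c → ∀ x ∈ A, c • x ∈ A) (hA0 : volume A = 0) :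
    μH[k] (frontier K ∩ A) = 0 := by
  obtain ⟨C, hC⟩ := hK.exists_lipschitzOnWith_radial h0
  have key : ∀ n : Euc (k + 1), ‖n‖ = 1 → μH[k] (frontier K ∩ A ∩ {x | 0 < ⟪x, n⟫}) = 0 := by
    intro n hn
    have hsub : frontier K ∩ A ∩ {x | 0 < ⟪x, n⟫} ⊆ radial K '' (A ∩ {x | ⟪x, n⟫ = 1}) := by
      rintro x ⟨⟨hxK, hxA⟩, hx⟩
      have hx : 0 < ⟪x, n⟫ := hx
      refine ⟨⟪x, n⟫⁻¹ • x, ⟨hA _ (inv_pos.2 hx) _ hxA, ?_⟩, ?_⟩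
      · simp [inner_smul_left, hx.ne']
      · rw [radial_smul (inv_pos.2 hx), hK.radial_of_mem_frontier h0 hxK]
    refine measure_mono_null hsub ?_
    have hL : LipschitzOnWith C (radial K) (A ∩ {x | ⟪x, n⟫ = 1}) := by
      refine hC.mono ?_
      rintro x ⟨-, hx⟩
      have hx : ⟪x, n⟫ = 1 := hx
      change 1 ≤ ‖x‖
      have := real_inner_le_norm x n
      rwa [hx, hn, mul_one] at this
    have := hL.hausdorffMeasure_image_le (Nat.cast_nonneg k)
    rwa [hausdorffMeasure_section_null hn hAm hA hA0, mul_zero, nonpos_iff_eq_zero] at this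
  have hcov : frontier K ∩ A ⊆ ⋃ i : Fin (k + 1),
      (frontier K ∩ A ∩ {x | 0 < ⟪x, EuclideanSpace.single i (1 : ℝ)⟫}) ∪
      (frontier K ∩ A ∩ {x | 0 < ⟪x, -EuclideanSpace.single i (1 : ℝ)⟫}) := by
    intro x hx
    obtain ⟨i, hi⟩ : ∃ i, x i ≠ 0 := by
      by_contra! h
      exact ne_zero_of_mem_frontier h0 hx.1 (by ext i; simpa using h i)
    refine mem_iUnion.2 ⟨i, ?_⟩
    rcases lt_or_gt_of_ne hi with h | h
    · right
      refine ⟨hx, ?_⟩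
      simpa [EuclideanSpace.inner_single_right, inner_neg_right] using h
    · left
      refine ⟨hx, ?_⟩
      simpa [EuclideanSpace.inner_single_right] using h
  refine measure_mono_null hcov (measure_iUnion_null fun i => measure_union_null ?_ ?_)
  · exact key _ (by simp)
  · exact key _ (by simp)

theorem hausdorffMeasure_frontier_diff_regularBoundary (hK : IsConvexBody K)
    (h0 : 0 ∈ interior K) : μH[k] (frontier K \ regularBoundary K) = 0 := by
  have h := hK.hausdorffMeasure_inter_null_cone h0
    (A := {x | DifferentiableAt ℝ (gauge K) x}ᶜ) (measurableSet_of_differentiableAt ℝ _).compl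
    (fun c hc x hx hcx => hx (by
      have := differentiableAt_gauge_smul (inv_pos.2 hc) hcx
      rwa [inv_smul_smul₀ hc.ne'] at this)) (hK.ae_differentiableAt_gauge h0)
  refine measure_mono_null ?_ h
  rintro x ⟨hx, hx'⟩
  exact ⟨hx, fun hd => hx' ⟨hx, hd⟩⟩

end IsConvexBody

/-- A measure is bounded by another one if this holds locally up to factors close to one. -/
theorem measure_le_of_locally_le {X : Type*} [TopologicalSpace X] [SecondCountableTopology X]
    [MeasurableSpace X] [BorelSpace X] {μ ν : Measure X} {R : Set X} (hR : MeasurableSet R)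
    (hμ : μ Rᶜ = 0)
    (h : ∀ r : ℝ, 1 < r → ∀ x ∈ R, ∃ U, IsOpen U ∧ x ∈ U ∧ ∀ E ⊆ U ∩ R, MeasurableSet E →
      μ E ≤ ENNReal.ofReal r * ν E) : μ ≤ ν := by
  rw [Measure.le_iff]
  intro E hE
  have hER : μ E = μ (E ∩ R) := by
    refine le_antisymm ?_ (measure_mono inter_subset_left)
    rw [← measure_inter_add_sdiff E hR]
    have : μ (E \ R) = 0 := measure_mono_null (fun x hx => hx.2) hμ
    rw [this, add_zero]
  have key : ∀ r : ℝ, 1 < r → μ E ≤ ENNReal.ofReal r * ν E := by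
    intro r hr
    rcases R.eq_empty_or_nonempty with rfl | hne
    · rw [hER]; simp
    choose! U hUo hxU hU using h r hr
    obtain ⟨t, htR, htc, hcov⟩ := TopologicalSpace.countable_cover_nhdsWithin
      (fun x hx => mem_nhdsWithin_of_mem_nhds ((hUo x hx).mem_nhds (hxU x hx)))
    have htne : t.Nonempty := by
      rw [nonempty_iff_ne_empty]
      rintro rfl
      obtain ⟨x, hx⟩ := hne
      simpa using hcov hx
    obtain ⟨u, rfl⟩ := htc.exists_eq_range htne
    have hDm : ∀ i, MeasurableSet (disjointed (fun i => U (u i)) i) := fun i =>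
      MeasurableSet.disjointed (fun i => (hUo _ (htR ⟨i, rfl⟩)).measurableSet) i
    have hdis : Pairwise (Function.onFun Disjoint
        fun i => E ∩ R ∩ disjointed (fun i => U (u i)) i) := fun i j hij =>
      (disjoint_disjointed (fun i => U (u i)) hij).mono inter_subset_right inter_subset_right
    have hunion : E ∩ R = ⋃ i, E ∩ R ∩ disjointed (fun i => U (u i)) i := by
      rw [← inter_iUnion, iUnion_disjointed, eq_comm, inter_eq_left]
      refine inter_subset_right.trans (hcov.trans ?_)
      simp
    have hm : ∀ i, MeasurableSet (E ∩ R ∩ disjointed (fun i => U (u i)) i) :=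
      fun i => (hE.inter hR).inter (hDm i)
    calc μ E = ∑' i, μ (E ∩ R ∩ disjointed (fun i => U (u i)) i) := by
          rw [hER]; conv_lhs => rw [hunion]
          exact measure_iUnion hdis hm
      _ ≤ ∑' i, ENNReal.ofReal r * ν (E ∩ R ∩ disjointed (fun i => U (u i)) i) := by
          refine ENNReal.tsum_le_tsum fun i => hU (u i) (htR ⟨i, rfl⟩) _ ?_ (hm i)
          exact fun x hx => ⟨disjointed_subset (fun i => U (u i)) i hx.2, hx.1.2⟩
      _ = ENNReal.ofReal r * ν (E ∩ R) := by
          rw [ENNReal.tsum_mul_left, ← measure_iUnion hdis hm, ← hunion]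
      _ ≤ ENNReal.ofReal r * ν E := by gcongr; exact inter_subset_left
  have hlim : Filter.Tendsto (fun r => ENNReal.ofReal r * ν E) (𝓝[>] 1) (𝓝 (ν E)) := by
    have h1 : Filter.Tendsto ENNReal.ofReal (𝓝[>] 1) (𝓝 1) := by
      have := ENNReal.continuous_ofReal.tendsto 1
      rw [ENNReal.ofReal_one] at this
      exact this.mono_left nhdsWithin_le_nhds
    have := ENNReal.Tendsto.mul_const (b := ν E) h1 (Or.inl one_ne_zero)
    rwa [one_mul] at this
  refine ge_of_tendsto hlim ?_
  filter_upwards [self_mem_nhdsWithin] with r hr using key r hr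

namespace IsConvexBody

variable {k : ℕ} {K : Set (Euc (k + 1))}

/-- The pushforward of Lebesgue measure on `K` under radial projection to the boundary. -/
def coneMeasure (K : Set (Euc (k + 1))) : Measure (Euc (k + 1)) :=
  Measure.map (radial K) (volume.restrict K)

/-- The density of Hausdorff measure on the boundary with respect to the cone measure. -/
def surfaceDensity (K : Set (Euc (k + 1))) (x : Euc (k + 1)) : ℝ :=
  hausdorffFactor k * (k + 1) / ⟪x, gaussMap K x⟫

theorem coneMeasure_apply (hK : IsConvexBody K) (h0 : 0 ∈ interior K) {E : Set (Euc (k + 1))}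
    (hE : MeasurableSet E) : coneMeasure K E = volume (radial K ⁻¹' E ∩ K) := by
  rw [coneMeasure, Measure.map_apply (hK.measurable_radial h0) hE,
    Measure.restrict_apply (hK.measurable_radial h0 hE)]

theorem coneMeasure_compl_regularBoundary (hK : IsConvexBody K) (h0 : 0 ∈ interior K) :
    coneMeasure K (regularBoundary K)ᶜ = 0 := by
  rw [hK.coneMeasure_apply h0 measurableSet_regularBoundary.compl]
  exact measure_mono_null inter_subset_left (hK.ae_radial_mem_regularBoundary h0 k.succ_ne_zero)

/-- Near a regular boundary point, central projection to the tangent hyperplane is almost an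
isometry. -/
theorem exists_central_projection_near (hK : IsConvexBody K) (h0 : 0 ∈ interior K)
    {x₀ n : Euc (k + 1)} (hx₀ : x₀ ∈ regularBoundary K) (h : IsOutwardNormalAt K x₀ n) {δ : ℝ}
    (hδ : 0 < δ) :
    ∃ U, IsOpen U ∧ x₀ ∈ U ∧ (∀ x ∈ U, 0 < ⟪x, n⟫ ∧ (1 - δ) * ⟪x₀, n⟫ ≤ ⟪x, n⟫) ∧
      ∀ x ∈ U ∩ frontier K, ∀ y ∈ U ∩ frontier K,
        ‖(⟪x₀, n⟫ / ⟪x, n⟫) • x - (⟪x₀, n⟫ / ⟪y, n⟫) • y - (x - y)‖ ≤ δ * ‖x - y‖ := by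
  obtain ⟨R, hR, hRK⟩ := hK.2.1.isBounded.exists_pos_norm_le
  have hh := hK.inner_pos h0 h
  set c := ⟪x₀, n⟫ with hc
  set ε := min (1 / 2) (δ / (2 + 4 * R / c)) with hεd
  have hB : 0 < 2 + 4 * R / c := by positivity
  have hε : 0 < ε := lt_min (by norm_num) (div_pos hδ hB)
  have hε2 : ε ≤ 1 / 2 := min_le_left _ _
  have hεδ : ε * (2 + 4 * R / c) ≤ δ := by
    rw [← le_div_iff₀ hB]; exact min_le_right _ _
  have hεδ' : ε ≤ δ := by
    refine le_trans ?_ hεδ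
    have : 0 < 4 * R / c := by positivity
    nlinarith
  have hev : ∀ᶠ x in 𝓝 x₀, (1 - ε) * c < ⟪x, n⟫ :=
    (by fun_prop : Continuous fun x : Euc (k + 1) => ⟪x, n⟫).continuousAt.eventually_const_lt
      (by nlinarith)
  obtain ⟨U, hU, hUo, hxU⟩ := mem_nhds_iff.1 (hev.and (hK.eventually_norm_sub_lt h0 hx₀ h hε))
  refine ⟨U, hUo, hxU, fun x hx => ⟨?_, ?_⟩, ?_⟩
  · have := (hU hx).1; nlinarith
  · have := (hU hx).1; nlinarith
  rintro x ⟨hx, hxK⟩ y ⟨hy, hyK⟩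
  have half : ∀ x ∈ U ∩ frontier K, ∀ y ∈ U ∩ frontier K, ⟪x - y, n⟫ ≤ ε * ‖x - y‖ := by
    rintro x ⟨hx, hxK⟩ y ⟨hy, hyK⟩
    have hny := hK.isOutwardNormalAt_gaussMap hyK
    have h1 := hny.2.2 x (hK.frontier_subset hxK)
    have h2 := (hU hy).2 _ hny
    have h3 := real_inner_le_norm (x - y) (n - gaussMap K y)
    rw [inner_sub_right, norm_sub_rev n] at h3
    nlinarith [norm_nonneg (x - y)]
  have habs : |⟪y, n⟫ - ⟪x, n⟫| ≤ ε * ‖x - y‖ := by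
    rw [abs_le]
    have h1 := half x ⟨hx, hxK⟩ y ⟨hy, hyK⟩
    have h2 := half y ⟨hy, hyK⟩ x ⟨hx, hxK⟩
    rw [norm_sub_rev] at h2
    rw [inner_sub_left] at h1 h2
    exact ⟨by linarith, h2⟩
  have hle : ∀ z ∈ K, ⟪z, n⟫ ≤ c := fun z hz => by
    have := h.2.2 z hz
    rw [inner_sub_left] at this
    linarith
  set a := ⟪x, n⟫ with ha
  set b := ⟪y, n⟫ with hb
  have ha1 : (1 - ε) * c < a := (hU hx).1
  have hb1 : (1 - ε) * c < b := (hU hy).1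
  have ha2 : c / 2 ≤ a := by nlinarith
  have hb2 : c / 2 ≤ b := by nlinarith
  have ha3 : a ≤ c := hle x (hK.frontier_subset hxK)
  have ha0 : 0 < a := by linarith
  have hb0 : 0 < b := by linarith
  have hsplit : (c / a) • x - (c / b) • y - (x - y) =
      (c / a - 1) • (x - y) + (c * (b - a) / (a * b)) • y := by
    rw [show c * (b - a) / (a * b) = c / a - c / b by field_simp]
    module
  have e1 : |c / a - 1| ≤ 2 * ε := by
    rw [show c / a - 1 = (c - a) / a by field_simp, abs_of_nonneg (by
      apply div_nonneg <;> linarith), div_le_iff₀ ha0]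
    nlinarith
  have e2 : |c * (b - a) / (a * b)| ≤ 4 / c * (ε * ‖x - y‖) := by
    rw [abs_div, abs_mul, abs_of_pos hh, abs_of_pos (mul_pos ha0 hb0), div_le_iff₀ (by positivity)]
    have : c * c ≤ 4 * (a * b) := by nlinarith
    calc c * |b - a| ≤ c * (ε * ‖x - y‖) := by gcongr
      _ = (c * c) * (ε * ‖x - y‖ / c) := by field_simp
      _ ≤ 4 * (a * b) * (ε * ‖x - y‖ / c) := by gcongr
      _ = _ := by ring
  calc ‖(c / a) • x - (c / b) • y - (x - y)‖
      ≤ |c / a - 1| * ‖x - y‖ + |c * (b - a) / (a * b)| * ‖y‖ := by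
        rw [hsplit]
        refine (norm_add_le _ _).trans ?_
        rw [norm_smul, norm_smul, Real.norm_eq_abs, Real.norm_eq_abs]
    _ ≤ 2 * ε * ‖x - y‖ + 4 / c * (ε * ‖x - y‖) * R := by
        gcongr
        exact hRK y (hK.frontier_subset hyK)
    _ = ε * (2 + 4 * R / c) * ‖x - y‖ := by ring
    _ ≤ δ * ‖x - y‖ := by gcongr

end IsConvexBody

namespace IsConvexBody

variable {k : ℕ} {K : Set (Euc (k + 1))}

/-- Local comparison of Hausdorff measure and cone measure near a regular boundary point. -/
theorem exists_local_comparison (hK : IsConvexBody K) (h0 : 0 ∈ interior K)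
    {x₀ n : Euc (k + 1)} (hx₀ : x₀ ∈ regularBoundary K) (h : IsOutwardNormalAt K x₀ n) {δ : ℝ}
    (hδ : 0 < δ) (hδ1 : δ < 1) :
    ∃ U, IsOpen U ∧ x₀ ∈ U ∧ ∀ E ⊆ U ∩ frontier K, MeasurableSet E →
      μH[k] E ≤ ENNReal.ofReal ((1 - δ)⁻¹ ^ (2 * k + 1) * (hausdorffFactor k * (k + 1) / ⟪x₀, n⟫)) *
        coneMeasure K E ∧
      ENNReal.ofReal (hausdorffFactor k * (k + 1) / ⟪x₀, n⟫) * coneMeasure K E ≤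
        ENNReal.ofReal ((1 + δ) ^ k) * μH[k] E := by
  obtain ⟨U, hUo, hxU, hU, hnear⟩ := hK.exists_central_projection_near h0 hx₀ h hδ
  refine ⟨U, hUo, hxU, fun E hE hEm => ?_⟩
  have hh := hK.inner_pos h0 h
  have hκ := hausdorffFactor_pos k
  have hδ' : 0 < 1 - δ := by linarith
  set c := ⟪x₀, n⟫ with hc
  set A := radial K ⁻¹' E with hA
  have hAm : MeasurableSet A := hK.measurable_radial h0 hEm
  have hAcone : ∀ c : ℝ, 0 < c → ∀ x ∈ A, c • x ∈ A := by
    intro c hc x hx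
    change radial K (c • x) ∈ E
    rwa [radial_smul hc]
  set E' := A ∩ {x | ⟪x, n⟫ = c} with hE'
  set q : Euc (k + 1) → Euc (k + 1) := fun x => (c / ⟪x, n⟫) • x with hq
  have hpE : ∀ x ∈ E, radial K x = x := fun x hx => hK.radial_of_mem_frontier h0 (hE hx).2
  have hrq : ∀ x ∈ E, radial K (q x) = x := fun x hx => by
    rw [hq]
    simp only
    rw [radial_smul (div_pos hh (hU x (hE hx).1).1), hpE x hx]
  have himage : q '' E = E' := by
    ext y
    constructor
    · rintro ⟨x, hx, rfl⟩
      refine ⟨?_, ?_⟩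
      · change radial K (q x) ∈ E
        rwa [hrq x hx]
      · have := (hU x (hE hx).1).1
        simp only [hq, mem_ofPred_eq, inner_smul_left, conj_trivial]
        field_simp
    · rintro ⟨hy, hyc⟩
      have hyc : ⟪y, n⟫ = c := hyc
      have hy0 : y ≠ 0 := by
        rintro rfl
        rw [inner_zero_left] at hyc
        exact hh.ne hyc
      refine ⟨radial K y, hy, ?_⟩
      have hg := hK.gauge_pos h0 hy0
      simp only [hq, radial, inner_smul_left, conj_trivial, hyc, smul_smul]
      rw [show c / ((gauge K y)⁻¹ * c) * (gauge K y)⁻¹ = 1 by field_simp, one_smul]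
  have himage' : radial K '' E' = E := by
    rw [← himage, image_image]
    ext x
    constructor
    · rintro ⟨y, hy, rfl⟩
      simp only
      rwa [hrq y hy]
    · intro hx
      exact ⟨x, hx, hrq x hx⟩
  have hL1 : μH[k] E' ≤ ENNReal.ofReal ((1 + δ) ^ k) * μH[k] E := by
    have hlip : LipschitzOnWith (1 + δ).toNNReal q E := by
      refine LipschitzOnWith.of_dist_le_mul fun x hx y hy => ?_
      rw [Real.coe_toNNReal _ (by positivity), dist_eq_norm, dist_eq_norm]
      have h1 := hnear x (hE hx) y (hE hy)
      have h2 := norm_add_le (q x - q y - (x - y)) (x - y)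
      rw [sub_add_cancel] at h2
      simp only [hq] at h2 ⊢
      linarith
    have := hlip.hausdorffMeasure_image_le (Nat.cast_nonneg k)
    rw [himage, ENNReal.rpow_natCast] at this
    rwa [ENNReal.ofReal_pow (by positivity)]
  have hL2 : μH[k] E ≤ ENNReal.ofReal ((1 - δ)⁻¹ ^ k) * μH[k] E' := by
    have hlip : LipschitzOnWith ((1 - δ)⁻¹).toNNReal (radial K) E' := by
      refine LipschitzOnWith.of_dist_le_mul ?_
      rw [← himage]
      rintro _ ⟨x, hx, rfl⟩ _ ⟨y, hy, rfl⟩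
      rw [hrq x hx, hrq y hy, Real.coe_toNNReal _ (by positivity), dist_eq_norm, dist_eq_norm,
        inv_mul_eq_div, le_div_iff₀ hδ']
      have h1 := hnear x (hE hx) y (hE hy)
      have h2 := norm_sub_le (q x - q y) (q x - q y - (x - y))
      rw [sub_sub_cancel] at h2
      simp only [hq] at h2 ⊢
      linarith
    have := hlip.hausdorffMeasure_image_le (Nat.cast_nonneg k)
    rw [himage', ENNReal.rpow_natCast] at this
    rwa [ENNReal.ofReal_pow (by positivity)]
  have hsec : μH[k] E' = ENNReal.ofReal (hausdorffFactor k * (k + 1) / c) *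
      volume (A ∩ {x | ⟪x, n⟫ ∈ Ioc 0 c}) := hausdorffMeasure_section_cone h.2.1 hAm hAcone hh
  have hposA : ∀ x ∈ A, x ≠ 0 := by
    rintro x hx rfl
    have h1 : radial K 0 ∈ E := hx
    rw [radial, smul_zero] at h1
    exact ne_zero_of_mem_frontier h0 (hE h1).2 rfl
  have hsub1 : A ∩ K ⊆ A ∩ {x | ⟪x, n⟫ ∈ Ioc 0 c} := by
    rintro x ⟨hx, hxK⟩
    refine ⟨hx, ?_, ?_⟩
    · have h1 := (hU _ (hE hx).1).1
      rw [← hK.gauge_smul_radial h0 x, inner_smul_left]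
      exact mul_pos (hK.gauge_pos h0 (hposA x hx)) h1
    · have := h.2.2 x hxK
      rw [inner_sub_left] at this
      linarith
  have hsub2 : A ∩ {x | ⟪x, n⟫ ∈ Ioc 0 c} ⊆ (1 - δ)⁻¹ • (A ∩ K) := by
    rintro x ⟨hx, hx1, hx2⟩
    rw [mem_smul_set_iff_inv_smul_mem₀ (by positivity), inv_inv]
    refine ⟨hAcone _ hδ' x hx, ?_⟩
    rw [← hK.gauge_le_one_iff h0, gauge_smul_of_nonneg hδ'.le, smul_eq_mul]
    have h1 := (hU _ (hE hx).1).2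
    rw [← hK.gauge_smul_radial h0 x, inner_smul_left, conj_trivial] at hx2
    have hg := gauge_nonneg (s := K) x
    by_contra! hcon
    have : c < gauge K x * ((1 - δ) * c) := by nlinarith
    nlinarith
  rw [hK.coneMeasure_apply h0 hEm]
  constructor
  · calc μH[k] E ≤ ENNReal.ofReal ((1 - δ)⁻¹ ^ k) *
          (ENNReal.ofReal (hausdorffFactor k * (k + 1) / c) *
            (ENNReal.ofReal ((1 - δ)⁻¹ ^ (k + 1)) * volume (A ∩ K))) := by
          refine hL2.trans ?_
          rw [hsec]
          gcongr
          refine (measure_mono hsub2).trans ?_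
          rw [Measure.addHaar_smul_of_nonneg _ (by positivity)]
          simp
      _ = _ := by
          rw [← mul_assoc, ← mul_assoc, ← ENNReal.ofReal_mul (by positivity),
            ← ENNReal.ofReal_mul (by positivity)]
          congr 2
          ring
  · refine le_trans ?_ hL1
    rw [hsec]
    gcongr

theorem inner_gaussMap_pos (hK : IsConvexBody K) (h0 : 0 ∈ interior K) {x : Euc (k + 1)}
    (hx : x ∈ frontier K) : 0 < ⟪x, gaussMap K x⟫ :=
  hK.inner_pos h0 (hK.isOutwardNormalAt_gaussMap hx)

theorem surfaceDensity_pos (hK : IsConvexBody K) (h0 : 0 ∈ interior K) {x : Euc (k + 1)}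
    (hx : x ∈ frontier K) : 0 < surfaceDensity K x :=
  div_pos (mul_pos (hausdorffFactor_pos k) (by positivity)) (hK.inner_gaussMap_pos h0 hx)

theorem continuousOn_surfaceDensity (hK : IsConvexBody K) (h0 : 0 ∈ interior K) :
    ContinuousOn (surfaceDensity K) (regularBoundary K) :=
  continuousOn_const.div (continuousOn_id.inner (hK.continuousOn_gaussMap h0))
    fun _ hx => (hK.inner_gaussMap_pos h0 hx.1).ne'

/-- The Hausdorff measure on the boundary as a weighted cone measure. -/
theorem hausdorffMeasure_restrict_frontier (hK : IsConvexBody K) (h0 : 0 ∈ interior K) :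
    (μH[k]).restrict (frontier K) =
      (coneMeasure K).withDensity fun x => ENNReal.ofReal (surfaceDensity K x) := by
  have hRm : MeasurableSet (regularBoundary K) := measurableSet_regularBoundary
  have hfact : ∀ r : ℝ, 1 < r → ∃ δ, 0 < δ ∧ δ < 1 ∧ (1 - δ)⁻¹ ^ (2 * k + 1) * (1 + δ) ≤ r ∧
      (1 + δ) ^ k * (1 + δ) ≤ r := by
    intro r hr
    have h1 : ContinuousAt (fun δ : ℝ => (1 - δ)⁻¹ ^ (2 * k + 1) * (1 + δ)) 0 := by
      have : ContinuousAt (fun δ : ℝ => (1 - δ)⁻¹) 0 :=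
        ContinuousAt.inv₀ (by fun_prop) (by norm_num)
      fun_prop
    have h2 : ContinuousAt (fun δ : ℝ => (1 + δ) ^ k * (1 + δ)) 0 := by fun_prop
    have e1 := h1.eventually_lt_const (u := r) (by simpa using hr)
    have e2 := h2.eventually_lt_const (u := r) (by simpa using hr)
    have e3 : ∀ᶠ δ : ℝ in 𝓝 0, δ < 1 := eventually_lt_nhds one_pos
    obtain ⟨δ, ⟨a, b, c⟩, d⟩ := (((e1.and (e2.and e3)).filter_mono
      (nhdsWithin_le_nhds (s := Ioi 0))).and self_mem_nhdsWithin).exists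
    exact ⟨δ, d, c, a.le, b.le⟩
  have hcont := hK.continuousOn_surfaceDensity h0
  have hloc : ∀ δ : ℝ, 0 < δ → ∀ x₀ ∈ regularBoundary K, ∃ U, IsOpen U ∧ x₀ ∈ U ∧
      ∀ x ∈ U ∩ regularBoundary K, surfaceDensity K x ≤ (1 + δ) * surfaceDensity K x₀ ∧
        surfaceDensity K x₀ ≤ (1 + δ) * surfaceDensity K x := by
    intro δ hδ x₀ hx₀
    have hp := hK.surfaceDensity_pos h0 hx₀.1
    have e1 := (hcont x₀ hx₀).eventually_lt_const (u := (1 + δ) * surfaceDensity K x₀)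
      (by nlinarith)
    have e2 := ((hcont x₀ hx₀).const_mul (1 + δ)).eventually_const_lt
      (u := surfaceDensity K x₀) (by nlinarith)
    obtain ⟨U, hU, hxU, hsub⟩ := mem_nhdsWithin.1 (e1.and e2)
    exact ⟨U, hU, hxU, fun x hx => ⟨(hsub hx).1.le, (hsub hx).2.le⟩⟩
  have hrestr : ∀ E ⊆ regularBoundary K, MeasurableSet E →
      (μH[k]).restrict (frontier K) E = μH[k] E := fun E hE hEm => by
    rw [Measure.restrict_apply hEm, inter_eq_left.2 (hE.trans inter_subset_left)]
  apply le_antisymm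
  · refine measure_le_of_locally_le hRm ?_ fun r hr x₀ hx₀ => ?_
    · rw [Measure.restrict_apply hRm.compl, inter_comm]
      exact hK.hausdorffMeasure_frontier_diff_regularBoundary h0
    obtain ⟨δ, hδ, hδ1, hδr, -⟩ := hfact r hr
    have hδ' : 0 < 1 - δ := by linarith
    obtain ⟨U, hUo, hxU, hU⟩ := hK.exists_local_comparison h0 hx₀
      (hK.isOutwardNormalAt_gaussMap hx₀.1) hδ hδ1
    obtain ⟨U', hUo', hxU', hU'⟩ := hloc δ hδ x₀ hx₀
    refine ⟨U ∩ U', hUo.inter hUo', ⟨hxU, hxU'⟩, fun E hE hEm => ?_⟩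
    rw [hrestr E (fun x hx => (hE hx).2) hEm, withDensity_apply _ hEm]
    refine (hU E (fun x hx => ⟨(hE hx).1.1, (hE hx).2.1⟩) hEm).1.trans ?_
    change ENNReal.ofReal (_ * surfaceDensity K x₀) * _ ≤ _
    calc ENNReal.ofReal ((1 - δ)⁻¹ ^ (2 * k + 1) * surfaceDensity K x₀) * coneMeasure K E
        = ∫⁻ _ in E, ENNReal.ofReal ((1 - δ)⁻¹ ^ (2 * k + 1) * surfaceDensity K x₀)
            ∂(coneMeasure K) := (setLIntegral_const _ _).symm
      _ ≤ ∫⁻ x in E, ENNReal.ofReal r * ENNReal.ofReal (surfaceDensity K x) ∂(coneMeasure K) := by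
          refine setLIntegral_mono' hEm fun x hx => ?_
          rw [← ENNReal.ofReal_mul (by linarith)]
          apply ENNReal.ofReal_le_ofReal
          have h1 := (hU' x ⟨(hE hx).1.2, (hE hx).2⟩).2
          have h2 := hK.surfaceDensity_pos h0 (hE hx).2.1
          calc _ ≤ (1 - δ)⁻¹ ^ (2 * k + 1) * ((1 + δ) * surfaceDensity K x) := by gcongr
            _ = (1 - δ)⁻¹ ^ (2 * k + 1) * (1 + δ) * surfaceDensity K x := by ring
            _ ≤ _ := by gcongr
      _ = _ := lintegral_const_mul' _ _ ENNReal.ofReal_ne_top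
  · refine measure_le_of_locally_le hRm ?_ fun r hr x₀ hx₀ => ?_
    · exact withDensity_absolutelyContinuous _ _ (hK.coneMeasure_compl_regularBoundary h0)
    obtain ⟨δ, hδ, hδ1, -, hδr⟩ := hfact r hr
    obtain ⟨U, hUo, hxU, hU⟩ := hK.exists_local_comparison h0 hx₀
      (hK.isOutwardNormalAt_gaussMap hx₀.1) hδ hδ1
    obtain ⟨U', hUo', hxU', hU'⟩ := hloc δ hδ x₀ hx₀
    refine ⟨U ∩ U', hUo.inter hUo', ⟨hxU, hxU'⟩, fun E hE hEm => ?_⟩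
    rw [hrestr E (fun x hx => (hE hx).2) hEm, withDensity_apply _ hEm]
    calc ∫⁻ x in E, ENNReal.ofReal (surfaceDensity K x) ∂(coneMeasure K)
        ≤ ∫⁻ _ in E, ENNReal.ofReal (1 + δ) * ENNReal.ofReal (surfaceDensity K x₀)
            ∂(coneMeasure K) := by
          refine setLIntegral_mono' hEm fun x hx => ?_
          rw [← ENNReal.ofReal_mul (by linarith)]
          exact ENNReal.ofReal_le_ofReal (hU' x ⟨(hE hx).1.2, (hE hx).2⟩).1
      _ = ENNReal.ofReal (1 + δ) * (ENNReal.ofReal (surfaceDensity K x₀) * coneMeasure K E) := by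
          rw [setLIntegral_const, mul_assoc]
      _ ≤ ENNReal.ofReal (1 + δ) * (ENNReal.ofReal ((1 + δ) ^ k) * μH[k] E) := by
          refine mul_le_mul_right ?_ _
          exact (hU E (fun x hx => ⟨(hE hx).1.1, (hE hx).2.1⟩) hEm).2
      _ = ENNReal.ofReal ((1 + δ) ^ k * (1 + δ)) * μH[k] E := by
          rw [← mul_assoc, ← ENNReal.ofReal_mul (by linarith), mul_comm (1 + δ)]
      _ ≤ _ := by gcongr

end IsConvexBody

namespace IsConvexBody

variable {k : ℕ} {K : Set (Euc (k + 1))}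

theorem coneMeasure_restrict_regularBoundary (hK : IsConvexBody K) (h0 : 0 ∈ interior K) :
    (coneMeasure K).restrict (regularBoundary K) = coneMeasure K :=
  Measure.restrict_eq_self_of_ae_mem (hK.coneMeasure_compl_regularBoundary h0)

theorem aemeasurable_gaussMap_coneMeasure (hK : IsConvexBody K) (h0 : 0 ∈ interior K) :
    AEMeasurable (gaussMap K) (coneMeasure K) := by
  rw [← hK.coneMeasure_restrict_regularBoundary h0]
  exact (hK.continuousOn_gaussMap h0).aemeasurable measurableSet_regularBoundary

theorem aemeasurable_surfaceDensity (hK : IsConvexBody K) (h0 : 0 ∈ interior K) :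
    AEMeasurable (surfaceDensity K) (coneMeasure K) := by
  rw [← hK.coneMeasure_restrict_regularBoundary h0]
  exact (hK.continuousOn_surfaceDensity h0).aemeasurable measurableSet_regularBoundary

theorem surfMeasure_eq_map (hK : IsConvexBody K) (h0 : 0 ∈ interior K) :
    surfMeasure K = Measure.map (gaussMap K)
      ((coneMeasure K).withDensity fun x => ENNReal.ofReal (surfaceDensity K x)) := by
  rw [← hK.hausdorffMeasure_restrict_frontier h0, surfMeasure]
  simp

theorem aemeasurable_gaussMap (hK : IsConvexBody K) (h0 : 0 ∈ interior K) :
    AEMeasurable (gaussMap K) (μH[((k + 1 : ℕ) : ℝ) - 1].restrict (frontier K)) := by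
  have : (((k + 1 : ℕ) : ℝ) - 1) = k := by simp
  rw [this, hK.hausdorffMeasure_restrict_frontier h0]
  exact (hK.aemeasurable_gaussMap_coneMeasure h0).mono_ac (withDensity_absolutelyContinuous _ _)

theorem coneMeasure_univ_ne_top (hK : IsConvexBody K) (h0 : 0 ∈ interior K) :
    coneMeasure K univ ≠ ∞ := by
  rw [coneMeasure, Measure.map_apply (hK.measurable_radial h0) MeasurableSet.univ]
  simpa using hK.2.1.measure_lt_top.ne

theorem exists_surfaceDensity_le (hK : IsConvexBody K) (h0 : 0 ∈ interior K) :
    ∃ C, ∀ x ∈ frontier K, surfaceDensity K x ≤ C := by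
  obtain ⟨r, hr, h⟩ := exists_pos_le_supp h0 hK
  refine ⟨hausdorffFactor k * (k + 1) / r, fun x hx => ?_⟩
  have hn := hK.isOutwardNormalAt_gaussMap hx
  have := h _ hn.2.1
  rw [← hK.inner_eq_supp hn] at this
  have hκ := hausdorffFactor_pos k
  unfold surfaceDensity
  gcongr

theorem surfMeasure_univ_lt_top (hK : IsConvexBody K) (h0 : 0 ∈ interior K) :
    surfMeasure K univ < ∞ := by
  obtain ⟨C, hC⟩ := hK.exists_surfaceDensity_le h0
  rw [hK.surfMeasure_eq_map h0, Measure.map_apply_of_aemeasurable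
    ((hK.aemeasurable_gaussMap_coneMeasure h0).mono_ac (withDensity_absolutelyContinuous _ _))
    MeasurableSet.univ, preimage_univ, withDensity_apply _ MeasurableSet.univ, setLIntegral_univ]
  calc ∫⁻ x, ENNReal.ofReal (surfaceDensity K x) ∂(coneMeasure K)
      ≤ ∫⁻ _, ENNReal.ofReal C ∂(coneMeasure K) := by
        refine lintegral_mono_ae ?_
        have h : ∀ᵐ x ∂(coneMeasure K), x ∈ regularBoundary K :=
          hK.coneMeasure_compl_regularBoundary h0
        filter_upwards [h] with x hx
        exact ENNReal.ofReal_le_ofReal (hC x hx.1)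
    _ = ENNReal.ofReal C * coneMeasure K univ := lintegral_const _
    _ < ∞ := ENNReal.mul_lt_top ENNReal.ofReal_lt_top (hK.coneMeasure_univ_ne_top h0).lt_top

theorem surfMeasure_compl_unitSphere (hK : IsConvexBody K) (h0 : 0 ∈ interior K) :
    surfMeasure K (unitSphere (k + 1))ᶜ = 0 := by
  have hm : MeasurableSet (unitSphere (k + 1)) := Metric.isClosed_sphere.measurableSet
  rw [surfMeasure, Measure.map_apply_of_aemeasurable (hK.aemeasurable_gaussMap h0) hm.compl]
  have hcl : MeasurableSet (frontier K) := isClosed_frontier.measurableSet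
  refine (ae_restrict_iff' hcl (p := fun x => gaussMap K x ∈ unitSphere (k + 1))).2 ?_
  refine Filter.Eventually.of_forall fun x hx => ?_
  simpa [unitSphere] using (hK.isOutwardNormalAt_gaussMap hx).2.1

/-- Integration against the surface area measure in terms of the cone volume measure. -/
theorem integral_surfMeasure (hK : IsConvexBody K) (h0 : 0 ∈ interior K) {F : Euc (k + 1) → ℝ}
    (hF : Continuous F) :
    ∫ u, F u ∂(surfMeasure K) =
      ∫ x in K, surfaceDensity K (radial K x) * F (gaussMap K (radial K x)) := by
  have hg := hK.aemeasurable_gaussMap_coneMeasure h0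
  have hd := hK.aemeasurable_surfaceDensity h0
  rw [hK.surfMeasure_eq_map h0, integral_map
    (hg.mono_ac (withDensity_absolutelyContinuous _ _)) hF.aestronglyMeasurable,
    integral_withDensity_eq_integral_toReal_smul₀ hd.ennreal_ofReal
      (Filter.Eventually.of_forall fun _ => ENNReal.ofReal_lt_top)]
  have hae : ∀ᵐ x ∂(coneMeasure K), x ∈ regularBoundary K :=
    hK.coneMeasure_compl_regularBoundary h0
  calc _ = ∫ x, surfaceDensity K x * F (gaussMap K x) ∂(coneMeasure K) := by
        refine integral_congr_ae ?_
        filter_upwards [hae] with x hx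
        rw [ENNReal.toReal_ofReal (hK.surfaceDensity_pos h0 hx.1).le, smul_eq_mul]
    _ = _ := by
        have hmeas : AEStronglyMeasurable (fun x => surfaceDensity K x * F (gaussMap K x))
            (coneMeasure K) :=
          (hd.mul (hF.measurable.comp_aemeasurable hg)).aestronglyMeasurable
        exact integral_map (hK.measurable_radial h0).aemeasurable hmeas

theorem integrable_surfMeasure (hK : IsConvexBody K) (h0 : 0 ∈ interior K) {F : Euc (k + 1) → ℝ}
    (hF : Continuous F) : Integrable F (surfMeasure K) := by
  have hm : MeasurableSet (unitSphere (k + 1)) := Metric.isClosed_sphere.measurableSet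
  have : IsFiniteMeasure (surfMeasure K) := ⟨hK.surfMeasure_univ_lt_top h0⟩
  have hr : (surfMeasure K).restrict (unitSphere (k + 1)) = surfMeasure K :=
    Measure.restrict_eq_self_of_ae_mem (hK.surfMeasure_compl_unitSphere h0)
  rw [← hr]
  exact ContinuousOn.integrableOn_compact (isCompact_sphere _ _) hF.continuousOn

end IsConvexBody

theorem isOutwardNormalAt_vadd {m : ℕ} {K : Set (Euc m)} (v x n : Euc m) :
    IsOutwardNormalAt (v +ᵥ K) (v + x) n ↔ IsOutwardNormalAt K x n := by
  have hf : frontier (v +ᵥ K) = v +ᵥ frontier K :=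
    ((Homeomorph.addLeft v).image_frontier K).symm
  unfold IsOutwardNormalAt
  rw [hf, ← vadd_eq_add, vadd_mem_vadd_set_iff]
  refine and_congr_right fun _ => and_congr_right fun _ => ⟨fun h y hy => ?_, fun h y hy => ?_⟩
  · simpa using h (v +ᵥ y) (vadd_mem_vadd_set hy)
  · obtain ⟨z, hz, rfl⟩ := hy
    simpa using h z hz

theorem gaussMap_vadd {m : ℕ} {K : Set (Euc m)} (v x : Euc m) :
    gaussMap (v +ᵥ K) (v + x) = gaussMap K x := by
  have : IsOutwardNormalAt (v +ᵥ K) (v + x) = IsOutwardNormalAt K x := by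
    ext n; exact isOutwardNormalAt_vadd v x n
  unfold gaussMap
  rw [this]

theorem IsConvexBody.vadd {m : ℕ} {K : Set (Euc m)} (hK : IsConvexBody K) (v : Euc m) :
    IsConvexBody (v +ᵥ K) := by
  refine ⟨hK.1.vadd v, hK.2.1.vadd v, ?_⟩
  rw [interior_vadd]
  exact hK.2.2.vadd_set

theorem IsConvexBody.surfMeasure_vadd {k : ℕ} {K : Set (Euc (k + 1))} (hK : IsConvexBody K)
    (h0 : 0 ∈ interior K) (v : Euc (k + 1)) : surfMeasure (v +ᵥ K) = surfMeasure K := by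
  have hf : frontier K = (fun x => v + x) ⁻¹' frontier (v +ᵥ K) := by
    have : frontier (v +ᵥ K) = v +ᵥ frontier K := ((Homeomorph.addLeft v).image_frontier K).symm
    rw [this]
    ext x
    simp [← vadd_eq_add]
  have hmp : MeasurePreserving (fun x => v + x)
      (μH[((k + 1 : ℕ) : ℝ) - 1].restrict (frontier K))
      (μH[((k + 1 : ℕ) : ℝ) - 1].restrict (frontier (v +ᵥ K))) := by
    rw [hf]
    exact ((IsometryEquiv.addLeft v).measurePreserving_hausdorffMeasure _).restrict_preimage
      isClosed_frontier.measurableSet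
  unfold surfMeasure
  rw [← hmp.map_eq]
  have hg : gaussMap (v +ᵥ K) = fun y => gaussMap K (-v + y) := by
    funext y
    have := gaussMap_vadd (K := K) v (-v + y)
    rwa [add_neg_cancel_left] at this
  rw [AEMeasurable.map_map_of_aemeasurable ?_ hmp.measurable.aemeasurable]
  · congr 1
    funext x
    exact gaussMap_vadd v x
  · rw [hg]
    refine AEMeasurable.comp_measurable (g := gaussMap K) (f := fun y : Euc (k + 1) => -v + y) ?_
      (by fun_prop)
    rw [Measure.map_map (by fun_prop) (by fun_prop)]
    have : ((fun y => -v + y) ∘ fun x => v + x) = id := by funext x; simp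
    rw [this, Measure.map_id]
    exact hK.aemeasurable_gaussMap h0

namespace IsConvexBody

variable {k : ℕ} {K L : Set (Euc (k + 1))}

theorem gauge_lt_one_iff (hK : IsConvexBody K) (h0 : 0 ∈ interior K) {x : Euc (k + 1)} :
    gauge K x < 1 ↔ x ∈ interior K :=
  gauge_lt_one_iff_mem_interior hK.1 (mem_interior_iff_mem_nhds.1 h0)

/-- Polar coordinates for the integral of a function that is constant along rays. -/
theorem setLIntegral_interior_eq (hK : IsConvexBody K) (h0 : 0 ∈ interior K)
    {F : Euc (k + 1) → ℝ≥0∞} (hF : Measurable F)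
    (hhom : ∀ c : ℝ, 0 < c → ∀ x, F (c • x) = F x) :
    ∫⁻ x in interior K, F x = ∫⁻ u : Metric.sphere (0 : Euc (k + 1)) 1,
      F u * ENNReal.ofReal ((gauge K u)⁻¹ ^ (k + 1) / (k + 1)) ∂(volume.toSphere) := by
  have hI : MeasurableSet (interior K) := isOpen_interior.measurableSet
  set G : Euc (k + 1) → ℝ≥0∞ := (interior K).indicator F with hG
  have hGm : Measurable G := hF.indicator hI
  have h1 : ∫⁻ x in interior K, F x = ∫⁻ x in ({0}ᶜ : Set (Euc (k + 1))), G x := by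
    rw [← lintegral_indicator hI]
    have hae : ({0}ᶜ : Set (Euc (k + 1))) =ᵐ[volume] univ := by
      rw [ae_eq_univ, compl_compl]; simp
    rw [setLIntegral_congr hae, setLIntegral_univ]
  have hmp := (volume : Measure (Euc (k + 1))).measurePreserving_homeomorphUnitSphereProd
  have hfm : Measurable fun p : Metric.sphere (0 : Euc (k + 1)) 1 × Ioi (0 : ℝ) =>
      G ((p.2 : ℝ) • (p.1 : Euc (k + 1))) := by
    refine hGm.comp ?_
    exact (measurable_subtype_coe.comp measurable_snd).smul
      (measurable_subtype_coe.comp measurable_fst)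
  have h2 : ∫⁻ x in ({0}ᶜ : Set (Euc (k + 1))), G x =
      ∫⁻ p : Metric.sphere (0 : Euc (k + 1)) 1 × Ioi (0 : ℝ),
        G ((p.2 : ℝ) • (p.1 : Euc (k + 1)))
        ∂((volume : Measure (Euc (k + 1))).toSphere.prod
          (Measure.volumeIoiPow (Module.finrank ℝ (Euc (k + 1)) - 1))) := by
    rw [← hmp.lintegral_comp hfm, ← lintegral_subtype_comap (measurableSet_singleton _).compl]
    refine lintegral_congr fun x => ?_
    congr 1
    have hx : (x : Euc (k + 1)) ≠ 0 := x.2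
    have : ‖(x : Euc (k + 1))‖ ≠ 0 := norm_ne_zero_iff.2 hx
    simp [smul_smul, this]
  rw [h1, h2, lintegral_prod _ hfm.aemeasurable]
  refine lintegral_congr fun u => ?_
  have hu0 : (u : Euc (k + 1)) ≠ 0 := by
    intro h
    have := u.2
    rw [h] at this
    simp at this
  have hg := hK.gauge_pos h0 hu0
  have h3 : ∀ r : Ioi (0 : ℝ), G ((r : ℝ) • (u : Euc (k + 1))) =
      (Iio (⟨(gauge K u)⁻¹, inv_pos.2 hg⟩ : Ioi (0 : ℝ))).indicator (fun _ => F u) r := by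
    intro r
    have hr : (0 : ℝ) < r := r.2
    have : (r : ℝ) • (u : Euc (k + 1)) ∈ interior K ↔
        r ∈ Iio (⟨(gauge K u)⁻¹, inv_pos.2 hg⟩ : Ioi (0 : ℝ)) := by
      rw [← hK.gauge_lt_one_iff h0, gauge_smul_of_nonneg hr.le, smul_eq_mul, mem_Iio,
        ← Subtype.coe_lt_coe]
      change _ ↔ (r : ℝ) < (gauge K u)⁻¹
      rw [inv_eq_one_div, lt_div_iff₀ hg]
    by_cases h : (r : ℝ) • (u : Euc (k + 1)) ∈ interior K
    · rw [hG, indicator_of_mem h, indicator_of_mem (this.1 h), hhom _ hr]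
    · rw [hG, indicator_of_notMem h, indicator_of_notMem (fun h' => h (this.2 h'))]
  simp_rw [h3]
  rw [lintegral_indicator measurableSet_Iio, setLIntegral_const, Measure.volumeIoiPow_apply_Iio]
  simp

theorem volume_eq_setLIntegral (hK : IsConvexBody K) (h0 : 0 ∈ interior K) (hL : IsConvexBody L)
    (h0L : 0 ∈ interior L) :
    volume L = ∫⁻ x in K, ENNReal.ofReal ((gauge K x / gauge L x) ^ (k + 1)) := by
  have hInt : ∀ {A : Set (Euc (k + 1))}, IsConvexBody A → interior A =ᵐ[volume] A :=
    fun hA => interior_ae_eq_of_null_frontier (hA.1.addHaar_frontier _)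
  have hF : Measurable fun x => ENNReal.ofReal ((gauge K x / gauge L x) ^ (k + 1)) := by
    have h1 := (hK.continuous_gauge h0).measurable
    have h2 := (hL.continuous_gauge h0L).measurable
    fun_prop
  rw [← setLIntegral_congr (hInt hK), hK.setLIntegral_interior_eq h0 hF, ← measure_congr (hInt hL),
    ← setLIntegral_one, hL.setLIntegral_interior_eq h0L measurable_const]
  · refine lintegral_congr fun u => ?_
    have hu0 : (u : Euc (k + 1)) ≠ 0 := by
      intro h
      have := u.2
      rw [h] at this
      simp at this
    have hg := hK.gauge_pos h0 hu0
    have hg' := hL.gauge_pos h0L hu0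
    rw [← ENNReal.ofReal_mul (by positivity), one_mul]
    rw [mul_div_assoc', ← mul_pow, div_mul_eq_mul_div, mul_inv_cancel₀ hg.ne', one_div]
  · intro c _ x; rfl
  · intro c hc x
    rw [gauge_smul_of_nonneg hc.le, gauge_smul_of_nonneg hc.le, smul_eq_mul, smul_eq_mul,
      mul_div_mul_left _ _ hc.ne']

theorem volume_real_eq_integral (hK : IsConvexBody K) (h0 : 0 ∈ interior K) (hL : IsConvexBody L)
    (h0L : 0 ∈ interior L) :
    volume.real L = ∫ x in K, (gauge K x / gauge L x) ^ (k + 1) := by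
  have h1 := (hK.continuous_gauge h0).measurable
  have h2 := (hL.continuous_gauge h0L).measurable
  rw [measureReal_def, hK.volume_eq_setLIntegral h0 hL h0L,
    integral_eq_lintegral_of_nonneg_ae]
  · exact Filter.Eventually.of_forall fun x =>
      pow_nonneg (div_nonneg (gauge_nonneg _) (gauge_nonneg _)) _
  · exact (((h1.div h2).pow_const _)).aestronglyMeasurable

end IsConvexBody

/-- The Wulff shape of a function on the unit sphere: the intersection of the half-spaces
`⟪x, u⟫ ≤ φ u`. -/
def wulff {m : ℕ} (φ : Euc m → ℝ) : Set (Euc m) := {x | ∀ u, ‖u‖ = 1 → ⟪x, u⟫ ≤ φ u}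

section Wulff

variable {m : ℕ} {K : Set (Euc m)} {φ : Euc m → ℝ}

theorem mem_wulff {x : Euc m} : x ∈ wulff φ ↔ ∀ u, ‖u‖ = 1 → ⟪x, u⟫ ≤ φ u := Iff.rfl

theorem convex_wulff : Convex ℝ (wulff φ) := by
  intro x hx y hy a b ha hb hab u hu
  rw [inner_add_left, inner_smul_left, inner_smul_left, conj_trivial, conj_trivial]
  calc a * ⟪x, u⟫ + b * ⟪y, u⟫ ≤ a * φ u + b * φ u := by
        gcongr
        · exact hx u hu
        · exact hy u hu
    _ = φ u := by rw [← add_mul, hab, one_mul]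

theorem isClosed_wulff : IsClosed (wulff φ) := by
  have : wulff φ = ⋂ u, ⋂ (_ : ‖u‖ = 1), {x | ⟪x, u⟫ ≤ φ u} := by
    ext x; simp [mem_wulff]
  rw [this]
  refine isClosed_iInter fun u => isClosed_iInter fun _ => isClosed_le (by fun_prop) (by fun_prop)

theorem supp_wulff_le (hne : (wulff φ).Nonempty) {u : Euc m} (hu : ‖u‖ = 1) :
    supp (wulff φ) u ≤ φ u :=
  supp_le hne fun _ hx => hx u hu

theorem wulff_supp (hK : IsConvexBody K) : wulff (supp K) = K := by
  refine Subset.antisymm (fun x hx => ?_) (fun x hx u _ => inner_le_supp hK.2.1 hx u)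
  exact mem_of_forall_inner_le_supp hK.2.1 hK.1 hK.nonempty hx

end Wulff

namespace IsConvexBody

variable {k : ℕ} {K : Set (Euc (k + 1))} {f : Euc (k + 1) → ℝ}

theorem exists_wulff_bounds (hK : IsConvexBody K) (h0 : 0 ∈ interior K) (hf : Continuous f) :
    ∃ C, 0 < C ∧ ∀ t, 0 ≤ t → t * C ≤ 1 / 2 →
      (1 - t * C) • K ⊆ wulff (fun u => supp K u + t * f u) ∧
      wulff (fun u => supp K u + t * f u) ⊆ (1 + t * C) • K := by
  obtain ⟨r, hr, hrs⟩ := exists_pos_le_supp h0 hK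
  obtain ⟨M, hM⟩ := (isCompact_sphere (0 : Euc (k + 1)) 1).exists_bound_of_continuousOn
    hf.continuousOn
  set M' := max M 1 with hM'
  have hM'pos : 0 < M' := lt_max_of_lt_right one_pos
  have hfb : ∀ u : Euc (k + 1), ‖u‖ = 1 → |f u| ≤ M' := fun u hu =>
    (hM u (by simpa using hu)).trans (le_max_left _ _)
  refine ⟨M' / r, div_pos hM'pos hr, fun t ht htC => ⟨?_, ?_⟩⟩
  · rintro _ ⟨x, hx, rfl⟩ u hu
    have h1 := inner_le_supp hK.2.1 hx u
    have h2 := hrs u hu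
    have h3 := abs_le.1 (hfb u hu)
    change ⟪(1 - t * (M' / r)) • x, u⟫ ≤ _
    rw [inner_smul_left, conj_trivial]
    have h4 : 0 ≤ t * (M' / r) := by positivity
    have h5 : t * M' ≤ t * (M' / r) * supp K u := by
      calc t * M' = t * (M' / r) * r := by field_simp
        _ ≤ _ := by gcongr
    have h6 : t * -M' ≤ t * f u := mul_le_mul_of_nonneg_left h3.1 ht
    have h7 : (1 - t * (M' / r)) * ⟪x, u⟫ ≤ (1 - t * (M' / r)) * supp K u :=
      mul_le_mul_of_nonneg_left h1 (by linarith)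
    linarith
  · intro x hx
    have hpos : 0 < 1 + t * (M' / r) := by positivity
    rw [mem_smul_set_iff_inv_smul_mem₀ hpos.ne']
    refine mem_of_forall_inner_le_supp hK.2.1 hK.1 hK.nonempty fun u hu => ?_
    rw [inner_smul_left, conj_trivial, inv_mul_le_iff₀ hpos]
    have h1 := hx u hu
    have h2 := hrs u hu
    have h3 := abs_le.1 (hfb u hu)
    have h5 : t * M' ≤ t * (M' / r) * supp K u := by
      calc t * M' = t * (M' / r) * r := by field_simp
        _ ≤ _ := by gcongr
    have h6 : t * f u ≤ t * M' := mul_le_mul_of_nonneg_left h3.2 ht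
    linarith

theorem exists_wulff_isConvexBody (hK : IsConvexBody K) (h0 : 0 ∈ interior K)
    (hf : Continuous f) :
    ∃ C, 0 < C ∧ ∀ t, 0 ≤ t → t * C ≤ 1 / 2 →
      IsConvexBody (wulff (fun u => supp K u + t * f u)) ∧
      0 ∈ interior (wulff (fun u => supp K u + t * f u)) ∧
      ∀ p ∈ frontier K, |(gauge (wulff (fun u => supp K u + t * f u)) p)⁻¹ - 1| ≤ C * t := by
  obtain ⟨C, hC, h⟩ := hK.exists_wulff_bounds h0 hf
  refine ⟨C, hC, fun t ht htC => ?_⟩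
  obtain ⟨hsub, hsup⟩ := h t ht htC
  set W := wulff (fun u => supp K u + t * f u)
  have hpos : 0 < 1 - t * C := by linarith
  have htC0 : 0 ≤ t * C := by positivity
  have h0W : 0 ∈ interior W := by
    refine interior_mono hsub ?_
    rw [interior_smul₀ hpos.ne']
    exact ⟨0, h0, smul_zero _⟩
  have hW : IsConvexBody W :=
    ⟨convex_wulff, (hK.2.1.smul (1 + t * C)).of_isClosed_subset isClosed_wulff hsup, 0, h0W⟩
  refine ⟨hW, h0W, fun p hp => ?_⟩
  have hp0 := ne_zero_of_mem_frontier h0 hp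
  have hg := hW.gauge_pos h0W hp0
  have h1 : (1 - t * C) * gauge W p ≤ 1 := by
    have : (1 - t * C) • p ∈ W := hsub (smul_mem_smul_set (hK.frontier_subset hp))
    rwa [← hW.gauge_le_one_iff h0W, gauge_smul_of_nonneg hpos.le] at this
  have h2 : (gauge W p)⁻¹ ≤ 1 + t * C := by
    have hmem : (gauge W p)⁻¹ • p ∈ W := by
      rw [← hW.gauge_le_one_iff h0W, gauge_smul_of_nonneg (inv_nonneg.2 hg.le), smul_eq_mul,
        inv_mul_cancel₀ hg.ne']
    obtain ⟨x, hx, hxe⟩ := hsup hmem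
    change (1 + t * C) • x = _ at hxe
    have e := congrArg (gauge K) hxe
    rw [gauge_smul_of_nonneg (by linarith), gauge_smul_of_nonneg (inv_nonneg.2 hg.le),
      (hK.gauge_eq_one_iff h0).2 hp, smul_eq_mul, smul_eq_mul, mul_one] at e
    rw [← e]
    have := (hK.gauge_le_one_iff h0).2 hx
    nlinarith
  rw [abs_le]
  constructor
  · have : 1 - t * C ≤ (gauge W p)⁻¹ := by
      rwa [inv_eq_one_div, le_div_iff₀ hg]
    linarith
  · linarith

end IsConvexBody

theorem eventually_forall_nonneg_add_mul {X : Type*} [TopologicalSpace X] {S : Set X}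
    (hS : IsCompact S) {D q : X → ℝ} (hD : ContinuousOn D S) (hq : ContinuousOn q S)
    (hD0 : ∀ u ∈ S, 0 ≤ D u) (hDq : ∀ u ∈ S, D u = 0 → 0 < q u) :
    ∀ᶠ t in 𝓝[>] (0 : ℝ), ∀ u ∈ S, 0 ≤ D u + t * q u := by
  obtain ⟨Q, hQ⟩ := hS.exists_bound_of_continuousOn hq
  have hST : ∃ T' : Set X, IsCompact T' ∧ T' ⊆ S ∧ (∀ u ∈ T', q u ≤ 0) ∧
      ∀ u ∈ S, u ∉ T' → 0 < q u := by
    obtain ⟨V, hV, hVe⟩ := continuousOn_iff_isClosed.1 hq (Iic 0) isClosed_Iic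
    refine ⟨S ∩ V, hS.inter_right hV, inter_subset_left, fun u hu => ?_, fun u hu hn => ?_⟩
    · have : u ∈ q ⁻¹' Iic 0 ∩ S := by rw [hVe]; exact ⟨hu.2, hu.1⟩
      exact this.1
    · by_contra hcon
      have : u ∈ V ∩ S := by rw [← hVe]; exact ⟨not_lt.1 hcon, hu⟩
      exact hn ⟨hu, this.1⟩
  obtain ⟨T', hT'c, hT'S, hT'q, hT'⟩ := hST
  have hδ : ∃ δ, 0 < δ ∧ ∀ u ∈ T', δ ≤ D u := by
    rcases T'.eq_empty_or_nonempty with rfl | hne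
    · exact ⟨1, one_pos, by simp⟩
    · obtain ⟨u, hu, hmin⟩ := hT'c.exists_isMinOn hne (hD.mono hT'S)
      refine ⟨D u, lt_of_le_of_ne (hD0 u (hT'S hu)) fun h => ?_, fun v hv => hmin hv⟩
      exact absurd (hDq u (hT'S hu) h.symm) (not_lt.2 (hT'q u hu))
  obtain ⟨δ, hδ, hδD⟩ := hδ
  have hlim : Filter.Tendsto (fun t : ℝ => t * Q) (𝓝[>] 0) (𝓝 0) := by
    have : Filter.Tendsto (fun t : ℝ => t * Q) (𝓝 0) (𝓝 (0 * Q)) :=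
      (continuous_id.mul continuous_const).tendsto 0
    rw [zero_mul] at this
    exact this.mono_left nhdsWithin_le_nhds
  filter_upwards [hlim.eventually_lt_const hδ, self_mem_nhdsWithin] with t ht ht0 u hu
  have ht0' : (0 : ℝ) < t := ht0
  by_cases huT : u ∈ T'
  · have h1 := hδD u huT
    have h2 := hQ u hu
    rw [Real.norm_eq_abs, abs_le] at h2
    nlinarith
  · have := hT' u hu huT
    have := hD0 u hu
    positivity

namespace IsConvexBody

variable {k : ℕ} {K : Set (Euc (k + 1))} {f : Euc (k + 1) → ℝ}

/-- First variation of the radial function of Wulff shapes at a regular boundary point. -/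
theorem hasDerivWithinAt_inv_gauge_wulff (hK : IsConvexBody K) (h0 : 0 ∈ interior K)
    (hf : Continuous f) {p : Euc (k + 1)} (hp : p ∈ regularBoundary K) :
    HasDerivWithinAt (fun t : ℝ => (gauge (wulff (fun u => supp K u + t * f u)) p)⁻¹)
      (f (gaussMap K p) / ⟪p, gaussMap K p⟫) (Ioi 0) 0 := by
  obtain ⟨C, hC, hW⟩ := hK.exists_wulff_isConvexBody h0 hf
  have hn := hK.isOutwardNormalAt_gaussMap hp.1
  set n := gaussMap K p
  set a := f n / ⟪p, n⟫ with ha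
  have hpn : 0 < ⟪p, n⟫ := hK.inner_pos h0 hn
  have hp0 := ne_zero_of_mem_frontier h0 hp.1
  have hsmall : ∀ᶠ t in 𝓝[>] (0 : ℝ), t * C ≤ 1 / 2 := by
    have : Filter.Tendsto (fun t : ℝ => t * C) (𝓝[>] 0) (𝓝 0) := by
      have : Filter.Tendsto (fun t : ℝ => t * C) (𝓝 0) (𝓝 (0 * C)) :=
        (continuous_id.mul continuous_const).tendsto 0
      rw [zero_mul] at this
      exact this.mono_left nhdsWithin_le_nhds
    exact (this.eventually_lt_const (u := 1 / 2) (by norm_num)).mono fun _ h => h.le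
  have hθ0 : (gauge (wulff (fun u => supp K u + 0 * f u)) p)⁻¹ = 1 := by
    simp only [zero_mul, add_zero]
    rw [wulff_supp hK, (hK.gauge_eq_one_iff h0).2 hp.1, inv_one]
  rw [hasDerivWithinAt_iff_tendsto_slope' (by simp), Metric.tendsto_nhds]
  intro ε hε
  have hlow : ∀ᶠ t in 𝓝[>] (0 : ℝ), ∀ u ∈ Metric.sphere (0 : Euc (k + 1)) 1,
      0 ≤ (supp K u - ⟪p, u⟫) + t * (f u - (a - ε / 2) * ⟪p, u⟫) := by
    have hs := continuous_supp hK.2.1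
    refine eventually_forall_nonneg_add_mul (isCompact_sphere _ _)
      (by fun_prop) (by fun_prop) (fun u _ => ?_) fun u hu hDu => ?_
    · exact sub_nonneg.2 (inner_le_supp hK.2.1 (hK.frontier_subset hp.1) u)
    · have hu1 : ‖u‖ = 1 := by simpa using hu
      have hun : IsOutwardNormalAt K p u := by
        refine ⟨hp.1, hu1, fun y hy => ?_⟩
        rw [inner_sub_left]
        have := inner_le_supp hK.2.1 hy u
        linarith
      have : u = n := hK.isOutwardNormalAt_unique h0 hp hun hn
      rw [this, ha]
      have : f n - (f n / ⟪p, n⟫ - ε / 2) * ⟪p, n⟫ = ε / 2 * ⟪p, n⟫ := by field_simp; ring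
      rw [this]
      positivity
  filter_upwards [hlow, hsmall, self_mem_nhdsWithin] with t hlt hts ht0
  have ht : (0 : ℝ) < t := ht0
  obtain ⟨hWb, h0W, -⟩ := hW t ht.le hts
  rw [slope_def_field, hθ0, sub_zero, Real.dist_eq]
  set W := wulff (fun u => supp K u + t * f u)
  have hg := hWb.gauge_pos h0W hp0
  have hup : (gauge W p)⁻¹ ≤ 1 + t * a := by
    have hmem : (gauge W p)⁻¹ • p ∈ W := by
      rw [← hWb.gauge_le_one_iff h0W, gauge_smul_of_nonneg (inv_nonneg.2 hg.le), smul_eq_mul,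
        inv_mul_cancel₀ hg.ne']
    have : ⟪(gauge W p)⁻¹ • p, n⟫ ≤ supp K n + t * f n := hmem n hn.2.1
    rw [inner_smul_left, conj_trivial, ← hK.inner_eq_supp hn, ← le_div_iff₀ hpn] at this
    refine this.trans_eq ?_
    rw [ha]; field_simp
  have hdown : 1 + t * (a - ε / 2) ≤ (gauge W p)⁻¹ := by
    rcases le_or_gt (1 + t * (a - ε / 2)) 0 with hneg | hpos
    · exact hneg.trans (inv_nonneg.2 hg.le)
    have hmem : (1 + t * (a - ε / 2)) • p ∈ W := by
      intro u hu
      have := hlt u (by simpa using hu)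
      rw [inner_smul_left, conj_trivial]
      linarith
    rw [← hWb.gauge_le_one_iff h0W, gauge_smul_of_nonneg hpos.le, smul_eq_mul] at hmem
    rwa [inv_eq_one_div, le_div_iff₀ hg]
  rw [abs_lt]
  constructor
  · have : a - ε / 2 ≤ ((gauge W p)⁻¹ - 1) / t := by rw [le_div_iff₀ ht]; linarith
    linarith
  · have : ((gauge W p)⁻¹ - 1) / t ≤ a := by rw [div_le_iff₀ ht]; linarith
    linarith

/-- First variation of the volume of Wulff shapes. -/
theorem tendsto_volume_wulff (hK : IsConvexBody K) (h0 : 0 ∈ interior K) (hf : Continuous f) :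
    Filter.Tendsto
      (fun t : ℝ => (volume.real (wulff (fun u => supp K u + t * f u)) - volume.real K) / t)
      (𝓝[>] 0) (𝓝 ((hausdorffFactor k)⁻¹ * ∫ u, f u ∂(surfMeasure K))) := by
  obtain ⟨C, hC, hW⟩ := hK.exists_wulff_isConvexBody h0 hf
  have hsmall : ∀ᶠ t in 𝓝[>] (0 : ℝ), t * C ≤ 1 / 2 := by
    have : Filter.Tendsto (fun t : ℝ => t * C) (𝓝[>] 0) (𝓝 0) := by
      have : Filter.Tendsto (fun t : ℝ => t * C) (𝓝 0) (𝓝 (0 * C)) :=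
        (continuous_id.mul continuous_const).tendsto 0
      rw [zero_mul] at this
      exact this.mono_left nhdsWithin_le_nhds
    exact (this.eventually_lt_const (u := 1 / 2) (by norm_num)).mono fun _ h => h.le
  have hae0 : ∀ᵐ x ∂(volume.restrict K), x ≠ 0 :=
    ae_restrict_of_ae (Measure.ae_ne volume 0)
  have hKm : MeasurableSet K := hK.2.1.measurableSet
  set W : ℝ → Set (Euc (k + 1)) := fun t => wulff (fun u => supp K u + t * f u) with hWdef
  have hratio : ∀ t, ∀ x, gauge K x / gauge (W t) x =
      if x = 0 then 0 else (gauge (W t) (radial K x))⁻¹ := by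
    intro t x
    split_ifs with hx
    · simp [hx]
    · have hg := hK.gauge_pos h0 hx
      rw [radial, gauge_smul_of_nonneg (inv_nonneg.2 hg.le), smul_eq_mul, mul_inv, inv_inv,
        div_eq_mul_inv]
  have hfin : volume K ≠ ∞ := hK.2.1.measure_lt_top.ne
  have key : Filter.Tendsto
      (fun t : ℝ => ∫ x in K, ((gauge K x / gauge (W t) x) ^ (k + 1) - 1) / t) (𝓝[>] 0)
      (𝓝 (∫ x in K, (k + 1) * (f (gaussMap K (radial K x)) /
        ⟪radial K x, gaussMap K (radial K x)⟫))) := by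
    refine tendsto_integral_filter_of_dominated_convergence
      (fun _ => C * (k + 1) * 2 ^ k) ?_ ?_ ?_ ?_
    · filter_upwards [hsmall, self_mem_nhdsWithin] with t hts ht
      obtain ⟨hWb, h0W, -⟩ := hW t (le_of_lt ht) hts
      have h1 := (hK.continuous_gauge h0).measurable
      have h2 := (hWb.continuous_gauge h0W).measurable
      exact ((((h1.div h2).pow_const _).sub_const 1).div_const t).aestronglyMeasurable
    · filter_upwards [hsmall, self_mem_nhdsWithin] with t hts ht
      have ht' : (0 : ℝ) < t := ht
      obtain ⟨hWb, h0W, hb⟩ := hW t (le_of_lt ht) hts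
      filter_upwards [hae0] with x hx
      rw [hratio, if_neg hx]
      have hb' := hb _ (hK.radial_mem_frontier h0 hx)
      change |(gauge (W t) (radial K x))⁻¹ - 1| ≤ C * t at hb'
      set θ := (gauge (W t) (radial K x))⁻¹
      rw [Real.norm_eq_abs, abs_div, abs_of_pos ht', div_le_iff₀ ht']
      have h1 := abs_pow_sub_pow_le θ 1 (k + 1)
      rw [one_pow, Nat.add_sub_cancel, abs_one] at h1
      have h2 : max |θ| 1 ≤ 2 := by
        rw [max_le_iff]
        refine ⟨?_, by norm_num⟩
        rw [abs_le] at hb' ⊢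
        constructor <;> linarith
      calc |θ ^ (k + 1) - 1| ≤ |θ - 1| * ((k + 1 : ℕ) : ℝ) * max |θ| 1 ^ k := h1
        _ ≤ C * t * ((k + 1 : ℕ) : ℝ) * 2 ^ k := by gcongr
        _ = _ := by push_cast; ring
    · exact integrable_const_iff.2 (Or.inr ⟨by simpa using hfin.lt_top⟩)
    · have hreg := ae_restrict_of_ae (s := K) (hK.ae_radial_mem_regularBoundary h0
        (Nat.succ_ne_zero k))
      filter_upwards [hae0, hreg] with x hx hxr
      have hd := (hK.hasDerivWithinAt_inv_gauge_wulff h0 hf hxr).pow (k + 1)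
      rw [hasDerivWithinAt_iff_tendsto_slope' (by simp)] at hd
      have hθ0 : (gauge (wulff (fun u => supp K u + 0 * f u)) (radial K x))⁻¹ = 1 := by
        simp only [zero_mul, add_zero]
        rw [wulff_supp hK, (hK.gauge_eq_one_iff h0).2 hxr.1, inv_one]
      rw [hθ0, one_pow, mul_one] at hd
      push_cast at hd
      refine hd.congr fun t => ?_
      rw [slope_def_field, hratio, if_neg hx]
      simp only [Pi.pow_apply]
      rw [hθ0, one_pow, sub_zero]
  have hlim : (hausdorffFactor k)⁻¹ * ∫ u, f u ∂(surfMeasure K) =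
      ∫ x in K, (k + 1) * (f (gaussMap K (radial K x)) /
        ⟪radial K x, gaussMap K (radial K x)⟫) := by
    rw [hK.integral_surfMeasure h0 hf, ← integral_const_mul]
    refine integral_congr_ae (Filter.Eventually.of_forall fun x => ?_)
    have := (hausdorffFactor_pos k).ne'
    simp only [surfaceDensity]
    field_simp
  rw [hlim]
  refine key.congr' ?_
  filter_upwards [hsmall, self_mem_nhdsWithin] with t hts ht
  obtain ⟨hWb, h0W, -⟩ := hW t (le_of_lt ht) hts
  rw [hK.volume_real_eq_integral h0 hWb h0W, integral_div, integral_sub]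
  · simp [hWdef]
  · refine Integrable.of_integral_ne_zero ?_
    rw [← hK.volume_real_eq_integral h0 hWb h0W]
    exact hWb.volume_pos.ne'
  · exact integrable_const_iff.2 (Or.inr ⟨by simpa using hfin.lt_top⟩)

end IsConvexBody

namespace IsConvexBody

variable {k : ℕ} {K L : Set (Euc (k + 1))}

theorem integral_supp_surfMeasure (hK : IsConvexBody K) (h0 : 0 ∈ interior K) :
    (hausdorffFactor k)⁻¹ * ∫ u, supp K u ∂(surfMeasure K) = (k + 1) * volume.real K := by
  rw [hK.integral_surfMeasure h0 (continuous_supp hK.2.1), ← integral_const_mul]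
  have hae0 : ∀ᵐ x ∂(volume.restrict K), x ≠ 0 :=
    ae_restrict_of_ae (Measure.ae_ne volume 0)
  calc _ = ∫ _ in K, ((k : ℝ) + 1) := by
        refine integral_congr_ae ?_
        filter_upwards [hae0] with x hx
        have hn := hK.isOutwardNormalAt_gaussMap (hK.radial_mem_frontier h0 hx)
        have hpos := hK.inner_pos h0 hn
        have hκ := hausdorffFactor_pos k
        rw [← hK.inner_eq_supp hn, surfaceDensity]
        field_simp
    _ = _ := by simp [mul_comm]

/-- The logarithmic form of Minkowski's first inequality. -/
theorem log_minkowski_inequality (hK : IsConvexBody K) (h0 : 0 ∈ interior K)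
    (hL : IsConvexBody L) :
    volume.real K * (Real.log (volume.real L) - Real.log (volume.real K)) ≤
      (hausdorffFactor k)⁻¹ * ∫ u, supp L u ∂(surfMeasure K) - (k + 1) * volume.real K := by
  have hcK := continuous_supp hK.2.1
  have hcL := continuous_supp hL.2.1
  have hVK := hK.volume_pos
  have hVL := hL.volume_pos
  have hlim := hK.tendsto_volume_wulff h0 (f := fun u => supp L u - supp K u) (hcL.sub hcK)
  rw [integral_sub (hK.integrable_surfMeasure h0 hcL) (hK.integrable_surfMeasure h0 hcK), mul_sub,
    hK.integral_supp_surfMeasure h0] at hlim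
  refine ge_of_tendsto hlim ?_
  obtain ⟨C, hC, hW⟩ := hK.exists_wulff_isConvexBody h0 (hcL.sub hcK)
  have hsmall : ∀ᶠ t in 𝓝[>] (0 : ℝ), t < min 1 (1 / (2 * C)) :=
    nhdsWithin_le_nhds (gt_mem_nhds (by positivity))
  filter_upwards [hsmall, self_mem_nhdsWithin] with t ht1 ht0
  have ht : (0 : ℝ) < t := ht0
  have htl : t < 1 := ht1.trans_le (min_le_left _ _)
  have htC : t * C ≤ 1 / 2 := by
    have := (ht1.trans_le (min_le_right _ _)).le
    rw [le_div_iff₀ (by positivity)] at this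
    linarith
  have hWb := (hW t ht.le htC).1
  rw [le_div_iff₀ ht]
  have hsub : (1 - t) • K + t • L ⊆ wulff (fun u => supp K u + t * (supp L u - supp K u)) := by
    rintro _ ⟨_, ⟨x, hx, rfl⟩, _, ⟨y, hy, rfl⟩, rfl⟩ u _
    change ⟪(1 - t) • x + t • y, u⟫ ≤ _
    rw [inner_add_left, inner_smul_left, inner_smul_left, conj_trivial, conj_trivial]
    have h1 := mul_le_mul_of_nonneg_left (inner_le_supp hK.2.1 hx u) (sub_nonneg.2 htl.le)
    have h2 := mul_le_mul_of_nonneg_left (inner_le_supp hL.2.1 hy u) ht.le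
    linarith
  have hBM := brunnMinkowski (k + 1) K L hK.1 hL.1 hK.2.1 hL.2.1 hK.nonempty hL.nonempty (1 - t) t
    (by linarith) ht (by ring)
  have hle : volume.real ((1 - t) • K + t • L) ≤
      volume.real (wulff (fun u => supp K u + t * (supp L u - supp K u))) :=
    measureReal_mono hsub hWb.2.1.measure_lt_top.ne
  have hexp : volume.real K * (1 + t * (Real.log (volume.real L) - Real.log (volume.real K))) ≤
      volume.real K ^ (1 - t) * volume.real L ^ t := by
    have : volume.real K ^ (1 - t) * volume.real L ^ t = volume.real K *
        Real.exp (t * (Real.log (volume.real L) - Real.log (volume.real K))) := by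
      rw [Real.rpow_def_of_pos hVK, Real.rpow_def_of_pos hVL, ← Real.exp_add]
      nth_rewrite 2 [← Real.exp_log hVK]
      rw [← Real.exp_add]
      congr 1
      ring
    rw [this]
    gcongr
    have := Real.add_one_le_exp (t * (Real.log (volume.real L) - Real.log (volume.real K)))
    linarith
  linarith

theorem smul (hK : IsConvexBody K) {c : ℝ} (hc : 0 < c) : IsConvexBody (c • K) := by
  refine ⟨hK.1.smul c, hK.2.1.smul c, ?_⟩
  rw [interior_smul₀ hc.ne']
  exact hK.2.2.smul_set

theorem volume_real_smul {c : ℝ} (hc : 0 < c) :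
    volume.real (c • K) = c ^ (k + 1) * volume.real K := by
  rw [measureReal_def, Measure.addHaar_smul_of_nonneg _ hc.le, ENNReal.toReal_mul,
    ENNReal.toReal_ofReal (by positivity), measureReal_def]
  simp

theorem volume_le_of_surfMeasure_eq (hk : 1 ≤ k) (hK : IsConvexBody K) (h0 : 0 ∈ interior K)
    (hL : IsConvexBody L) (h0L : 0 ∈ interior L) (h : surfMeasure K = surfMeasure L) :
    volume.real K ≤ volume.real L := by
  have hVK := hK.volume_pos
  have hVL := hL.volume_pos
  have hk' : (1 : ℝ) ≤ k := by exact_mod_cast hk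
  set δ := Real.log (volume.real K) - Real.log (volume.real L) with hδ
  set c := Real.exp (δ / (k + 1)) with hc
  have hcpos : 0 < c := Real.exp_pos _
  have hlog := hK.log_minkowski_inequality h0 (hL.smul hcpos)
  rw [volume_real_smul hcpos, Real.log_mul (by positivity) hVL.ne', Real.log_pow, hc,
    Real.log_exp] at hlog
  have e : ((k + 1 : ℕ) : ℝ) * (δ / (k + 1)) + Real.log (volume.real L)
      - Real.log (volume.real K) = 0 := by
    push_cast
    rw [mul_div_cancel₀ _ (by positivity)]
    ring
  rw [e, mul_zero, ← hc] at hlog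
  have hInt : ∫ u, supp (c • L) u ∂(surfMeasure K) ≤ c * ∫ u, supp L u ∂(surfMeasure K) := by
    rw [← integral_const_mul]
    refine integral_mono (hK.integrable_surfMeasure h0 (continuous_supp (hL.smul hcpos).2.1))
      ((hK.integrable_surfMeasure h0 (continuous_supp hL.2.1)).const_mul c) fun u => ?_
    exact supp_smul_le hL.2.1 hL.nonempty hcpos.le u
  have hκ : 0 < (hausdorffFactor k)⁻¹ := inv_pos.2 (hausdorffFactor_pos k)
  have h2 := mul_le_mul_of_nonneg_left hInt hκ.le
  have h3 := hL.integral_supp_surfMeasure h0L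
  rw [← h] at h3
  have h4 : (k + 1) * volume.real K ≤ (k + 1) * (c * volume.real L) := by
    calc _ ≤ (hausdorffFactor k)⁻¹ * (c * ∫ u, supp L u ∂(surfMeasure K)) := by linarith
      _ = c * ((hausdorffFactor k)⁻¹ * ∫ u, supp L u ∂(surfMeasure K)) := by ring
      _ = _ := by rw [h3]; ring
  have h5 : volume.real K ≤ c * volume.real L := le_of_mul_le_mul_left h4 (by positivity)
  have h6 := Real.log_le_log hVK h5
  rw [Real.log_mul hcpos.ne' hVL.ne', hc, Real.log_exp] at h6
  have h7 : δ ≤ δ / (k + 1) := by rw [hδ]; linarith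
  rw [le_div_iff₀ (by positivity)] at h7
  have h8 : δ ≤ 0 := by nlinarith
  exact (Real.log_le_log_iff hVK hVL).1 (by rw [hδ] at h8; linarith)

theorem exists_eq_vadd_of_zero_mem (hk : 1 ≤ k) (hK : IsConvexBody K) (h0 : 0 ∈ interior K)
    (hL : IsConvexBody L) (h0L : 0 ∈ interior L) (h : surfMeasure K = surfMeasure L) :
    ∃ v : Euc (k + 1), L = v +ᵥ K := by
  have hV : volume.real L = volume.real K :=
    le_antisymm (volume_le_of_surfMeasure_eq hk hL h0L hK h0 h.symm)
      (volume_le_of_surfMeasure_eq hk hK h0 hL h0L h)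
  refine eq_vadd_of_volume_midpoint_le hK hL hV ?_
  have hVK := hK.volume_pos
  have hVL := hL.volume_pos
  set M := (1 / 2 : ℝ) • K + (1 / 2 : ℝ) • L with hM
  have hBM := brunnMinkowski (k + 1) K L hK.1 hL.1 hK.2.1 hL.2.1 hK.nonempty hL.nonempty (1 / 2)
    (1 / 2) (by norm_num) (by norm_num) (by norm_num)
  have hVM : 0 < volume.real M := lt_of_lt_of_le (by positivity) hBM
  have hMb : IsConvexBody M := isConvexBody_of_volume_ne_zero
    ((hK.1.smul _).add (hL.1.smul _)) ((hK.2.1.smul _).add (hL.2.1.smul _)) hVM.ne'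
  have hlog := hK.log_minkowski_inequality h0 hMb
  have iK := hK.integrable_surfMeasure h0 (continuous_supp hK.2.1)
  have iL := hK.integrable_surfMeasure h0 (continuous_supp hL.2.1)
  have hInt : ∫ u, supp M u ∂(surfMeasure K) ≤
      1 / 2 * ∫ u, supp K u ∂(surfMeasure K) + 1 / 2 * ∫ u, supp L u ∂(surfMeasure K) := by
    rw [← integral_const_mul, ← integral_const_mul,
      ← integral_add (iK.const_mul _) (iL.const_mul _)]
    refine integral_mono (hK.integrable_surfMeasure h0 (continuous_supp hMb.2.1))
      ((iK.const_mul _).add (iL.const_mul _)) fun u => ?_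
    exact (supp_add_le (hK.2.1.smul _) (hL.2.1.smul _) hK.nonempty.smul_set
      hL.nonempty.smul_set u).trans (add_le_add
        (supp_smul_le hK.2.1 hK.nonempty (by norm_num) u)
        (supp_smul_le hL.2.1 hL.nonempty (by norm_num) u))
  have hκ : 0 < (hausdorffFactor k)⁻¹ := inv_pos.2 (hausdorffFactor_pos k)
  have h2 := mul_le_mul_of_nonneg_left hInt hκ.le
  have h3 := hL.integral_supp_surfMeasure h0L
  rw [← h, hV] at h3
  have h4 := hK.integral_supp_surfMeasure h0
  have h5 : volume.real K * (Real.log (volume.real M) - Real.log (volume.real K)) ≤ 0 := by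
    linarith
  have h6 : Real.log (volume.real M) ≤ Real.log (volume.real K) := by
    by_contra hcon
    have := mul_pos hVK (sub_pos.2 (not_le.1 hcon))
    linarith
  exact (Real.log_le_log_iff hVM hVK).1 h6

theorem exists_vadd_zero_mem (hK : IsConvexBody K) :
    ∃ v : Euc (k + 1), 0 ∈ interior (v +ᵥ K) := by
  obtain ⟨x, hx⟩ := hK.2.2
  refine ⟨-x, ?_⟩
  rw [interior_vadd]
  exact ⟨x, hx, by simp⟩

/-- A convex body is determined up to translation by its surface area measure. -/
theorem exists_eq_vadd_of_surfMeasure_eq (hk : 1 ≤ k) (hK : IsConvexBody K) (hL : IsConvexBody L)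
    (h : surfMeasure K = surfMeasure L) : ∃ v : Euc (k + 1), L = v +ᵥ K := by
  obtain ⟨a, ha⟩ := hK.exists_vadd_zero_mem
  obtain ⟨b, hb⟩ := hL.exists_vadd_zero_mem
  have e1 := (hK.vadd a).surfMeasure_vadd ha (-a)
  have e2 := (hL.vadd b).surfMeasure_vadd hb (-b)
  rw [neg_vadd_vadd] at e1 e2
  obtain ⟨v, hv⟩ := exists_eq_vadd_of_zero_mem hk (hK.vadd a) ha (hL.vadd b) hb
    (by rw [← e1, ← e2, h])
  refine ⟨-b + v + a, ?_⟩
  rw [← neg_vadd_vadd b L, hv, vadd_vadd, vadd_vadd]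

end IsConvexBody

/-- The integral of the support function of `L` against `μ`. -/
def supportIntegral {m : ℕ} (μ : Measure (Euc m)) (L : Set (Euc m)) : ℝ := ∫ u, supp L u ∂μ

section SupportIntegral

variable {m : ℕ} {μ : Measure (Euc m)}

theorem ae_norm_eq_one (hsupp : μ (unitSphere m)ᶜ = 0) : ∀ᵐ u ∂μ, ‖u‖ = 1 := by
  have h : ∀ᵐ u ∂μ, u ∈ unitSphere m := hsupp
  filter_upwards [h] with u hu
  simpa [unitSphere] using hu

theorem supp_smul {L : Set (Euc m)} (hL : IsCompact L) (hne : L.Nonempty) {c : ℝ} (hc : 0 < c)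
    (u : Euc m) : supp (c • L) u = c * supp L u := by
  refine le_antisymm (supp_smul_le hL hne hc.le u) ?_
  have := supp_smul_le (hL.smul c) hne.smul_set (inv_nonneg.2 hc.le) u
  rwa [inv_smul_smul₀ hc.ne', ← div_eq_inv_mul, le_div_iff₀ hc, mul_comm] at this

theorem supportIntegral_smul {L : Set (Euc m)} (hL : IsCompact L) (hne : L.Nonempty) {c : ℝ}
    (hc : 0 < c) : supportIntegral μ (c • L) = c * supportIntegral μ L := by
  unfold supportIntegral
  simp_rw [supp_smul hL hne hc]
  exact integral_const_mul _ _

variable [IsFiniteMeasure μ]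

theorem integrable_of_continuous_of_unitSphere {E : Type*} [NormedAddCommGroup E]
    [SecondCountableTopologyEither (Euc m) E]
    (hsupp : μ (unitSphere m)ᶜ = 0) {F : Euc m → E} (hF : Continuous F) : Integrable F μ := by
  have hr : μ.restrict (unitSphere m) = μ := Measure.restrict_eq_self_of_ae_mem hsupp
  rw [← hr]
  exact ContinuousOn.integrableOn_compact (isCompact_sphere _ _) hF.continuousOn

theorem integral_inner_eq_zero (hsupp : μ (unitSphere m)ᶜ = 0) (hbary : ∫ x, x ∂μ = 0)
    (v : Euc m) : ∫ u, ⟪v, u⟫ ∂μ = 0 := by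
  rw [integral_inner (𝕜 := ℝ) (f := fun u => u)
    (integrable_of_continuous_of_unitSphere hsupp continuous_id) v,
    hbary, inner_zero_right]

theorem supportIntegral_vadd (hsupp : μ (unitSphere m)ᶜ = 0) (hbary : ∫ x, x ∂μ = 0)
    {L : Set (Euc m)} (hL : IsCompact L) (hne : L.Nonempty) (v : Euc m) :
    supportIntegral μ (v +ᵥ L) = supportIntegral μ L := by
  unfold supportIntegral
  simp_rw [supp_vadd hL hne]
  rw [integral_add (integrable_of_continuous_of_unitSphere hsupp (by fun_prop))
    (integrable_of_continuous_of_unitSphere hsupp (continuous_supp hL)),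
    integral_inner_eq_zero hsupp hbary, zero_add]

theorem integral_pos_part_inner_pos (hsupp : μ (unitSphere m)ᶜ = 0) (hbary : ∫ x, x ∂μ = 0)
    (hnondeg : ∀ f : Euc m →ₗ[ℝ] ℝ, f ≠ 0 → 0 < μ (unitSphere m \ {x | f x = 0}))
    {x : Euc m} (hx : x ≠ 0) : 0 < ∫ u, max ⟪x, u⟫ 0 ∂μ := by
  have hi : ∀ {F : Euc m → ℝ}, Continuous F → Integrable F μ :=
    fun hF => integrable_of_continuous_of_unitSphere hsupp hF
  refine lt_of_le_of_ne (integral_nonneg fun u => le_max_right _ _) fun h => ?_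
  have habs : ∫ u, |⟪x, u⟫| ∂μ = 0 := by
    have e : ∀ u, |⟪x, u⟫| = 2 * max ⟪x, u⟫ 0 - ⟪x, u⟫ := by
      intro u
      rcases le_total ⟪x, u⟫ 0 with h | h
      · rw [abs_of_nonpos h, max_eq_right h]; ring
      · rw [abs_of_nonneg h, max_eq_left h]; ring
    simp_rw [e]
    rw [integral_sub (hi (by fun_prop)) (hi (by fun_prop)), integral_const_mul, ← h,
      integral_inner_eq_zero hsupp hbary]
    simp
  rw [integral_eq_zero_iff_of_nonneg (fun u => abs_nonneg _) (hi (by fun_prop))] at habs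
  have hf : (innerₛₗ ℝ x : Euc m →ₗ[ℝ] ℝ) ≠ 0 := by
    intro h
    have : ⟪x, x⟫ = 0 := congrArg (fun f : Euc m →ₗ[ℝ] ℝ => f x) h
    exact hx (inner_self_eq_zero.1 this)
  refine (hnondeg _ hf).ne' (measure_mono_null ?_ habs)
  intro u hu
  have : ⟪x, u⟫ ≠ 0 := hu.2
  simpa using this

theorem exists_pos_mul_norm_le (hsupp : μ (unitSphere m)ᶜ = 0) (hbary : ∫ x, x ∂μ = 0)
    (hnondeg : ∀ f : Euc m →ₗ[ℝ] ℝ, f ≠ 0 → 0 < μ (unitSphere m \ {x | f x = 0})) :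
    ∃ c, 0 < c ∧ ∀ x : Euc m, c * ‖x‖ ≤ ∫ u, max ⟪x, u⟫ 0 ∂μ := by
  have hi : ∀ {F : Euc m → ℝ}, Continuous F → Integrable F μ :=
    fun hF => integrable_of_continuous_of_unitSphere hsupp hF
  have hcont : Continuous fun x : Euc m => ∫ u, max ⟪x, u⟫ 0 ∂μ := by
    refine continuous_iff_continuousAt.2 fun x₀ => ?_
    refine continuousAt_of_dominated (bound := fun u => (‖x₀‖ + 1) * ‖u‖) ?_ ?_
      (hi (by fun_prop)) ?_
    · exact Filter.Eventually.of_forall fun x => (hi (by fun_prop)).1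
    · filter_upwards [Metric.ball_mem_nhds x₀ one_pos] with x hx
      refine Filter.Eventually.of_forall fun u => ?_
      have h1 : ‖x‖ ≤ ‖x₀‖ + 1 := by
        have := norm_le_norm_add_norm_sub' x x₀
        rw [Metric.mem_ball, dist_eq_norm] at hx
        linarith
      have h2 : |max ⟪x, u⟫ 0| ≤ |⟪x, u⟫| := by
        rw [abs_of_nonneg (le_max_right _ _)]
        exact max_le (le_abs_self _) (abs_nonneg _)
      rw [Real.norm_eq_abs]
      refine (h2.trans (abs_real_inner_le_norm x u)).trans ?_
      gcongr
    · exact Filter.Eventually.of_forall fun u => by fun_prop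
  have hhom : ∀ (r : ℝ) (x : Euc m), 0 ≤ r →
      ∫ u, max ⟪r • x, u⟫ 0 ∂μ = r * ∫ u, max ⟪x, u⟫ 0 ∂μ := by
    intro r x hr
    rw [← integral_const_mul]
    refine integral_congr_ae (Filter.Eventually.of_forall fun u => ?_)
    simp only [inner_smul_left, conj_trivial]
    rw [mul_max_of_nonneg _ _ hr, mul_zero]
  rcases (Metric.sphere (0 : Euc m) 1).eq_empty_or_nonempty with he | hne
  · refine ⟨1, one_pos, fun x => ?_⟩
    have : x = 0 := by
      by_contra hx
      have : ‖x‖⁻¹ • x ∈ Metric.sphere (0 : Euc m) 1 := by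
        simp [norm_smul, hx]
      rw [he] at this
      exact this
    simp [this]
  obtain ⟨y, hy, hmin⟩ := (isCompact_sphere (0 : Euc m) 1).exists_isMinOn hne hcont.continuousOn
  have hy0 : y ≠ 0 := by
    rintro rfl
    simp at hy
  refine ⟨_, integral_pos_part_inner_pos hsupp hbary hnondeg hy0, fun x => ?_⟩
  rcases eq_or_ne x 0 with rfl | hx
  · simp
  have hmem : ‖x‖⁻¹ • x ∈ Metric.sphere (0 : Euc m) 1 := by simp [norm_smul, hx]
  have h1 : ∫ u, max ⟪y, u⟫ 0 ∂μ ≤ ∫ u, max ⟪‖x‖⁻¹ • x, u⟫ 0 ∂μ := hmin hmem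
  rw [hhom _ _ (by positivity), ← div_eq_inv_mul, le_div_iff₀ (norm_pos_iff.2 hx)] at h1
  exact h1

theorem integral_pos_part_inner_le_supportIntegral (hsupp : μ (unitSphere m)ᶜ = 0)
    {L : Set (Euc m)} (hL : IsCompact L) (h0 : 0 ∈ L) {x : Euc m} (hx : x ∈ L) :
    ∫ u, max ⟪x, u⟫ 0 ∂μ ≤ supportIntegral μ L := by
  refine integral_mono (integrable_of_continuous_of_unitSphere hsupp (by fun_prop))
    (integrable_of_continuous_of_unitSphere hsupp (continuous_supp hL)) fun u => ?_
  refine max_le (inner_le_supp hL hx u) ?_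
  simpa using inner_le_supp hL h0 u

theorem supportIntegral_pos (hsupp : μ (unitSphere m)ᶜ = 0) (hbary : ∫ x, x ∂μ = 0)
    (hnondeg : ∀ f : Euc m →ₗ[ℝ] ℝ, f ≠ 0 → 0 < μ (unitSphere m \ {x | f x = 0}))
    (hm : m ≠ 0) {L : Set (Euc m)} (hL : IsConvexBody L) : 0 < supportIntegral μ L := by
  obtain ⟨a, ha⟩ := hL.2.2
  have : Nonempty (Fin m) := ⟨⟨0, Nat.pos_of_ne_zero hm⟩⟩
  have hnt : L.Nontrivial := by
    by_contra h
    rw [not_nontrivial_iff] at h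
    have hs := h.eq_singleton_of_mem (interior_subset ha)
    rw [hs, interior_singleton] at ha
    exact ha
  obtain ⟨b, hb, hba⟩ := hnt.exists_ne a
  rw [← supportIntegral_vadd hsupp hbary hL.2.1 hL.nonempty (-a)]
  refine (integral_pos_part_inner_pos hsupp hbary hnondeg (x := -a + b) ?_).trans_le
    (integral_pos_part_inner_le_supportIntegral hsupp (hL.2.1.vadd _) ?_ ?_)
  · intro h
    exact hba (neg_add_eq_zero.1 h).symm
  · exact ⟨a, interior_subset ha, by simp⟩
  · exact ⟨b, hb, rfl⟩

end SupportIntegral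

section Selection

variable {m : ℕ}

theorem abs_supp_le {L : Set (Euc m)} (hL : IsCompact L) (hne : L.Nonempty) {R : ℝ}
    (hR : L ⊆ Metric.closedBall 0 R) {u : Euc m} (hu : ‖u‖ = 1) : |supp L u| ≤ R := by
  obtain ⟨x, hx, hxu⟩ := exists_inner_eq_supp hL hne u
  rw [← hxu]
  have h1 := abs_real_inner_le_norm x u
  have h2 : ‖x‖ ≤ R := by simpa using hR hx
  rw [hu, mul_one] at h1
  exact h1.trans h2

theorem lipschitzWith_supp {L : Set (Euc m)} (hL : IsCompact L) (hne : L.Nonempty) {R : NNReal}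
    (hR : L ⊆ Metric.closedBall 0 R) : LipschitzWith R (supp L) := by
  refine LipschitzWith.of_le_add_mul R fun u v => supp_le hne fun x hx => ?_
  have h1 := inner_le_supp hL hx v
  have h2 : ⟪x, u⟫ = ⟪x, v⟫ + ⟪x, u - v⟫ := by rw [inner_sub_right]; ring
  have h3 := real_inner_le_norm x (u - v)
  have h4 : ‖x‖ ≤ R := by simpa using hR hx
  rw [dist_eq_norm]
  have h5 : ‖x‖ * ‖u - v‖ ≤ R * ‖u - v‖ := by gcongr
  linarith

theorem wulff_subset_closedBall {φ : Euc m → ℝ} {R : ℝ} (hR : 0 ≤ R)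
    (h : ∀ u, ‖u‖ = 1 → φ u ≤ R) : wulff φ ⊆ Metric.closedBall 0 R := by
  intro x hx
  rw [mem_closedBall_zero_iff]
  rcases eq_or_ne x 0 with rfl | hx0
  · simpa using hR
  have hn : ‖‖x‖⁻¹ • x‖ = 1 := by simp [norm_smul, hx0]
  have h1 := (hx _ hn).trans (h _ hn)
  rw [inner_smul_right, real_inner_self_eq_norm_sq] at h1
  have : ‖x‖ ≠ 0 := norm_ne_zero_iff.2 hx0
  calc ‖x‖ = ‖x‖⁻¹ * ‖x‖ ^ 2 := by field_simp
    _ ≤ R := h1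

/-- A form of Blaschke's selection theorem. -/
theorem exists_wulff_limit {L : ℕ → Set (Euc m)} (hL : ∀ n, IsCompact (L n))
    (hne : ∀ n, (L n).Nonempty) {R : NNReal} (hR : ∀ n, L n ⊆ Metric.closedBall 0 R) :
    ∃ (φ : Euc m → ℝ) (ψ : ℕ → ℕ), StrictMono ψ ∧ (∀ u, ‖u‖ = 1 → φ u ≤ R) ∧
      ∀ ε > 0, ∀ᶠ i in Filter.atTop, ∀ u, ‖u‖ = 1 → |supp (L (ψ i)) u - φ u| < ε := by
  let S := Metric.sphere (0 : Euc m) 1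
  let g : ℕ → BoundedContinuousFunction S ℝ := fun n =>
    BoundedContinuousFunction.mkOfCompact
      ⟨fun u => supp (L n) u, (continuous_supp (hL n)).comp continuous_subtype_val⟩
  have hg : ∀ n (u : S), g n u = supp (L n) u := fun _ _ => rfl
  have hS : ∀ u : S, ‖(u : Euc m)‖ = 1 := fun u => by simp [S]
  have hc : IsCompact (closure (range g)) := by
    refine BoundedContinuousFunction.arzela_ascoli (Icc (-(R : ℝ)) R) isCompact_Icc _ ?_ ?_
    · rintro _ u ⟨n, rfl⟩
      rw [hg]
      exact abs_le.1 (abs_supp_le (hL n) (hne n) (hR n) (hS u))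
    · refine (LipschitzWith.uniformEquicontinuous _ R ?_).equicontinuous
      rintro ⟨_, n, rfl⟩
      have := (lipschitzWith_supp (hL n) (hne n) (hR n)).comp (LipschitzWith.subtype_val S)
      rw [mul_one] at this
      exact this
  obtain ⟨φ, -, ψ, hψ, hlim⟩ := hc.tendsto_subseq fun n => subset_closure (mem_range_self n)
  classical
  refine ⟨fun u => if h : u ∈ S then φ ⟨u, h⟩ else 0, ψ, hψ, fun u hu => ?_, fun ε hε => ?_⟩
  · have huS : u ∈ S := by simpa [S] using hu
    simp only [huS, dite_true]
    have h1 : Filter.Tendsto (fun i => (g ∘ ψ) i ⟨u, huS⟩) Filter.atTop (𝓝 (φ ⟨u, huS⟩)) :=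
      (BoundedContinuousFunction.tendsto_iff_tendstoUniformly.1 hlim).tendsto_at _
    refine le_of_tendsto h1 (Filter.Eventually.of_forall fun i => ?_)
    exact (abs_le.1 (abs_supp_le (hL _) (hne _) (hR _) hu)).2
  · filter_upwards [Metric.tendsto_nhds.1 hlim ε hε] with i hi u hu
    have huS : u ∈ S := by simpa [S] using hu
    simp only [huS, dite_true]
    exact (BoundedContinuousFunction.dist_coe_le_dist (f := g (ψ i)) (g := φ) ⟨u, huS⟩).trans_lt hi

theorem exists_convexBody_limit {L : ℕ → Set (Euc m)} (hL : ∀ n, IsCompact (L n))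
    (hne : ∀ n, (L n).Nonempty) {R : NNReal} (hR : ∀ n, L n ⊆ Metric.closedBall 0 R)
    {v : ℝ} (hv : 0 < v) (hV : ∀ n, v ≤ volume.real (L n)) :
    ∃ K, IsConvexBody K ∧ v ≤ volume.real K ∧ ∃ ψ : ℕ → ℕ, StrictMono ψ ∧
      ∀ ε > 0, ∀ᶠ i in Filter.atTop, ∀ u, ‖u‖ = 1 → supp K u ≤ supp (L (ψ i)) u + ε := by
  obtain ⟨φ, ψ, hψ, hφR, hlim⟩ := exists_wulff_limit hL hne hR
  have hcomp : ∀ ε : ℝ, 0 ≤ ε → IsCompact (wulff fun u => φ u + ε) := fun ε hε =>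
    (isCompact_closedBall (0 : Euc m) (R + ε)).of_isClosed_subset isClosed_wulff
      (wulff_subset_closedBall (by positivity) fun u hu => by linarith [hφR u hu])
  have hvol : ∀ ε : ℝ, 0 < ε → v ≤ volume.real (wulff fun u => φ u + ε) := by
    intro ε hε
    obtain ⟨i, hi⟩ := (hlim ε hε).exists
    refine (hV (ψ i)).trans (measureReal_mono ?_ (hcomp ε hε.le).measure_lt_top.ne)
    intro x hx u hu
    have h1 := inner_le_supp (hL _) hx u
    have h2 := (abs_lt.1 (hi u hu)).2
    linarith
  have hinter : wulff φ = ⋂ j : ℕ, wulff fun u => φ u + 1 / ((j : ℝ) + 1) := by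
    refine Subset.antisymm ?_ ?_
    · refine subset_iInter fun j x hx u hu => ?_
      have : 0 < 1 / ((j : ℝ) + 1) := by positivity
      linarith [hx u hu]
    · intro x hx u hu
      have h1 : Filter.Tendsto (fun j : ℕ => φ u + 1 / ((j : ℝ) + 1)) Filter.atTop (𝓝 (φ u)) := by
        simpa using tendsto_one_div_add_atTop_nhds_zero_nat.const_add (φ u)
      exact ge_of_tendsto' h1 fun j => mem_iInter.1 hx j u hu
  have hcK : IsCompact (wulff φ) := by simpa using hcomp 0 le_rfl
  have hvK : v ≤ volume.real (wulff φ) := by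
    have ht := tendsto_measure_iInter_atTop (μ := volume)
      (s := fun j : ℕ => wulff fun u => φ u + 1 / ((j : ℝ) + 1))
      (fun j => isClosed_wulff.measurableSet.nullMeasurableSet) (fun i j hij x hx u hu => by
        have : 1 / ((j : ℝ) + 1) ≤ 1 / ((i : ℝ) + 1) := by gcongr
        have h2 : ⟪x, u⟫ ≤ φ u + 1 / ((j : ℝ) + 1) := hx u hu
        linarith) ⟨0, (hcomp _ (by positivity)).measure_lt_top.ne⟩
    rw [← hinter] at ht
    have ht' := (ENNReal.tendsto_toReal hcK.measure_lt_top.ne).comp ht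
    exact ge_of_tendsto' ht' fun j => hvol _ (by positivity)
  have hK : IsConvexBody (wulff φ) :=
    isConvexBody_of_volume_ne_zero convex_wulff hcK (hv.trans_le hvK).ne'
  refine ⟨wulff φ, hK, hvK, ψ, hψ, fun ε hε => ?_⟩
  filter_upwards [hlim ε hε] with i hi u hu
  have h1 := supp_wulff_le hK.nonempty hu
  have h2 := (abs_lt.1 (hi u hu)).1
  linarith

end Selection

section Minimizer

variable {k : ℕ} {μ : Measure (Euc (k + 1))} [IsFiniteMeasure μ]

theorem exists_minimizer_supportIntegral (hsupp : μ (unitSphere (k + 1))ᶜ = 0)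
    (hbary : ∫ x, x ∂μ = 0)
    (hnondeg : ∀ f : Euc (k + 1) →ₗ[ℝ] ℝ, f ≠ 0 →
      0 < μ (unitSphere (k + 1) \ {x | f x = 0})) :
    ∃ K, IsConvexBody K ∧ 1 ≤ volume.real K ∧
      ∀ L, IsConvexBody L → 1 ≤ volume.real L → supportIntegral μ K ≤ supportIntegral μ L := by
  obtain ⟨c, hc, hcx⟩ := exists_pos_mul_norm_le hsupp hbary hnondeg
  set T : Set ℝ := supportIntegral μ '' {L | IsConvexBody L ∧ 1 ≤ volume.real L} with hT
  have hTne : T.Nonempty := by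
    have hB : IsConvexBody (Metric.closedBall (0 : Euc (k + 1)) 1) :=
      ⟨convex_closedBall _ _, isCompact_closedBall _ _, 0,
        Metric.ball_subset_interior_closedBall (by simp)⟩
    have hV := hB.volume_pos
    set w := volume.real (Metric.closedBall (0 : Euc (k + 1)) 1)
    have hr : 0 < max 1 w⁻¹ := by positivity
    refine ⟨_, max 1 w⁻¹ • Metric.closedBall (0 : Euc (k + 1)) 1, ⟨hB.smul hr, ?_⟩, rfl⟩
    rw [IsConvexBody.volume_real_smul hr]
    calc (1 : ℝ) = w⁻¹ * w := (inv_mul_cancel₀ hV.ne').symm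
      _ ≤ max 1 w⁻¹ * w := by gcongr; exact le_max_right _ _
      _ ≤ max 1 w⁻¹ ^ (k + 1) * w := by
          gcongr
          exact le_self_pow₀ (le_max_left _ _) (Nat.succ_ne_zero k)
  have hTb : BddBelow T := by
    refine ⟨0, ?_⟩
    rintro _ ⟨L, hL, rfl⟩
    exact (supportIntegral_pos hsupp hbary hnondeg (Nat.succ_ne_zero k) hL.1).le
  obtain ⟨s, hsa, hslim, hsT⟩ := exists_seq_tendsto_sInf hTne hTb
  choose L' hL' hL's using hsT
  have htrans : ∀ n, ∃ a, a ∈ L' n := fun n => (hL' n).1.nonempty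
  choose a ha using htrans
  set L : ℕ → Set (Euc (k + 1)) := fun n => -a n +ᵥ L' n with hLdef
  have hLb : ∀ n, IsConvexBody (L n) := fun n => (hL' n).1.vadd _
  have hL0 : ∀ n, 0 ∈ L n := fun n => ⟨a n, ha n, by simp⟩
  have hLs : ∀ n, supportIntegral μ (L n) = s n := fun n => by
    rw [hLdef, supportIntegral_vadd hsupp hbary (hL' n).1.2.1 (hL' n).1.nonempty, hL's]
  have hLV : ∀ n, 1 ≤ volume.real (L n) := fun n => by
    have : volume.real (L n) = volume.real (L' n) := by
      rw [measureReal_def, measureReal_def, hLdef, measure_vadd]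
    rw [this]
    exact (hL' n).2
  have hs0 : 0 ≤ s 0 := by
    rw [← hLs]
    exact (supportIntegral_pos hsupp hbary hnondeg (Nat.succ_ne_zero k) (hLb 0)).le
  have hLR : ∀ n, L n ⊆ Metric.closedBall 0 (⟨s 0 / c, by positivity⟩ : NNReal) := by
    intro n x hx
    rw [mem_closedBall_zero_iff]
    change ‖x‖ ≤ s 0 / c
    rw [le_div_iff₀ hc, mul_comm]
    calc c * ‖x‖ ≤ _ := hcx x
      _ ≤ supportIntegral μ (L n) :=
          integral_pos_part_inner_le_supportIntegral hsupp (hLb n).2.1 (hL0 n) hx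
      _ = s n := hLs n
      _ ≤ s 0 := hsa (Nat.zero_le n)
  obtain ⟨K, hK, hVK, ψ, hψ, hlim⟩ := exists_convexBody_limit (fun n => (hLb n).2.1)
    (fun n => (hLb n).nonempty) hLR one_pos hLV
  refine ⟨K, hK, hVK, fun M hM hMV => ?_⟩
  refine le_trans ?_ (csInf_le hTb ⟨M, ⟨hM, hMV⟩, rfl⟩)
  have hi : ∀ {F : Euc (k + 1) → ℝ}, Continuous F → Integrable F μ :=
    fun hF => integrable_of_continuous_of_unitSphere hsupp hF
  refine le_of_forall_pos_le_add fun ε hε => ?_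
  set w := μ.real univ with hw
  have hw0 : 0 ≤ w := measureReal_nonneg
  have hε' : 0 < ε / (w + 1) := by positivity
  have hlim2 : Filter.Tendsto (fun i => s (ψ i) + ε) Filter.atTop (𝓝 (sInf T + ε)) :=
    (hslim.comp hψ.tendsto_atTop).add_const ε
  refine ge_of_tendsto hlim2 ?_
  filter_upwards [hlim _ hε'] with i hi'
  rw [← hLs]
  calc supportIntegral μ K ≤ ∫ u, (supp (L (ψ i)) u + ε / (w + 1)) ∂μ := by
        refine integral_mono_ae (hi (continuous_supp hK.2.1))
          (hi ((continuous_supp (hLb _).2.1).add continuous_const)) ?_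
        filter_upwards [ae_norm_eq_one hsupp] with u hu using hi' u hu
    _ = supportIntegral μ (L (ψ i)) + w * (ε / (w + 1)) := by
        rw [integral_add (hi (continuous_supp (hLb _).2.1)) (integrable_const _), integral_const,
          smul_eq_mul]
        rfl
    _ ≤ supportIntegral μ (L (ψ i)) + ε := by
        gcongr
        rw [mul_div_assoc', div_le_iff₀ (by positivity)]
        nlinarith

end Minimizer

section Existence

variable {k : ℕ} {μ : Measure (Euc (k + 1))} [IsFiniteMeasure μ]

/-- A positive real number has a positive root of every positive degree. -/
theorem exists_pos_pow_eq {n : ℕ} (hn : n ≠ 0) {a : ℝ} (ha : 0 < a) : ∃ r : ℝ, 0 < r ∧ r ^ n = a :=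
  ⟨a ^ (n : ℝ)⁻¹, Real.rpow_pos_of_pos ha _, Real.rpow_inv_natCast_pow ha.le hn⟩

/-- A convex body minimizing the support integral among bodies of at least its volume also solves
the scale-invariant extremal problem; it can be positioned and scaled freely. -/
theorem exists_extremal_supportIntegral (hk : 1 ≤ k) (hsupp : μ (unitSphere (k + 1))ᶜ = 0)
    (hbary : ∫ x, x ∂μ = 0)
    (hnondeg : ∀ f : Euc (k + 1) →ₗ[ℝ] ℝ, f ≠ 0 →
      0 < μ (unitSphere (k + 1) \ {x | f x = 0})) :
    ∃ K, IsConvexBody K ∧ (0 : Euc (k + 1)) ∈ interior K ∧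
      supportIntegral μ K = hausdorffFactor k * (k + 1) * volume.real K ∧
      ∀ L, IsConvexBody L → volume.real L * supportIntegral μ K ^ (k + 1) ≤
        volume.real K * supportIntegral μ L ^ (k + 1) := by
  obtain ⟨K₀, hK₀, hV₀, hmin⟩ := exists_minimizer_supportIntegral hsupp hbary hnondeg
  obtain ⟨v, hv⟩ := hK₀.exists_vadd_zero_mem
  have hK₁ : IsConvexBody (v +ᵥ K₀) := hK₀.vadd v
  have hΛ₁ : supportIntegral μ (v +ᵥ K₀) = supportIntegral μ K₀ :=
    supportIntegral_vadd hsupp hbary hK₀.2.1 hK₀.nonempty v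
  have hV₁ : volume.real (v +ᵥ K₀) = volume.real K₀ := by
    rw [measureReal_def, measureReal_def, measure_vadd]
  set Λ := supportIntegral μ K₀ with hΛ
  set V := volume.real K₀ with hV
  have hVpos : 0 < V := by linarith
  have hΛpos : 0 < Λ := supportIntegral_pos hsupp hbary hnondeg (Nat.succ_ne_zero k) hK₀
  have hκ := hausdorffFactor_pos k
  have hext : ∀ L, IsConvexBody L → volume.real L * Λ ^ (k + 1) ≤ supportIntegral μ L ^ (k + 1) := by
    intro L hL
    have hLV := hL.volume_pos
    obtain ⟨s, hs, hsV⟩ := exists_pos_pow_eq (Nat.succ_ne_zero k) (inv_pos.2 hLV)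
    have hsL : Λ ≤ s * supportIntegral μ L := by
      rw [← supportIntegral_smul hL.2.1 hL.nonempty hs]
      refine hmin _ (hL.smul hs) ?_
      rw [IsConvexBody.volume_real_smul hs, hsV, inv_mul_cancel₀ hLV.ne']
    calc volume.real L * Λ ^ (k + 1) ≤ volume.real L * (s * supportIntegral μ L) ^ (k + 1) := by
          gcongr
      _ = supportIntegral μ L ^ (k + 1) := by
          rw [mul_pow, hsV]
          field_simp
  obtain ⟨r, hr, hrV⟩ := exists_pos_pow_eq (n := k) (by lia)
    (a := Λ / (hausdorffFactor k * (k + 1) * V)) (by positivity)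
  have hΛr : supportIntegral μ (r • (v +ᵥ K₀)) = r * Λ := by
    rw [supportIntegral_smul hK₁.2.1 hK₁.nonempty hr, hΛ₁]
  have hVr : volume.real (r • (v +ᵥ K₀)) = r ^ (k + 1) * V := by
    rw [IsConvexBody.volume_real_smul hr, hV₁]
  refine ⟨r • (v +ᵥ K₀), hK₁.smul hr, ?_, ?_, fun L hL => ?_⟩
  · rw [interior_smul₀ hr.ne']
    exact ⟨0, hv, smul_zero r⟩
  · rw [hΛr, hVr, pow_succ, hrV]
    field_simp
  · rw [hΛr, hVr]
    have hΛL := supportIntegral_pos hsupp hbary hnondeg (Nat.succ_ne_zero k) hL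
    calc volume.real L * (r * Λ) ^ (k + 1) = r ^ (k + 1) * (volume.real L * Λ ^ (k + 1)) := by ring
      _ ≤ r ^ (k + 1) * (V * supportIntegral μ L ^ (k + 1)) := by
          refine mul_le_mul_of_nonneg_left ((hext L hL).trans ?_) (by positivity)
          exact le_mul_of_one_le_left (by positivity) hV₀
      _ = _ := by ring

/-- First variation of the extremal problem. -/
theorem integral_surfMeasure_le_of_extremal (hsupp : μ (unitSphere (k + 1))ᶜ = 0)
    (hbary : ∫ x, x ∂μ = 0)
    (hnondeg : ∀ f : Euc (k + 1) →ₗ[ℝ] ℝ, f ≠ 0 →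
      0 < μ (unitSphere (k + 1) \ {x | f x = 0}))
    {K : Set (Euc (k + 1))} (hK : IsConvexBody K) (h0 : (0 : Euc (k + 1)) ∈ interior K)
    (hnorm : supportIntegral μ K = hausdorffFactor k * (k + 1) * volume.real K)
    (hext : ∀ L, IsConvexBody L → volume.real L * supportIntegral μ K ^ (k + 1) ≤
        volume.real K * supportIntegral μ L ^ (k + 1))
    {f : Euc (k + 1) → ℝ} (hf : Continuous f) :
    ∫ u, f u ∂(surfMeasure K) ≤ ∫ u, f u ∂μ := by
  set Λ := supportIntegral μ K with hΛ
  set V := volume.real K with hV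
  set I := ∫ u, f u ∂μ with hI
  have hVpos : 0 < V := hK.volume_pos
  have hκ := hausdorffFactor_pos k
  have hΛpos : 0 < Λ := by rw [hnorm]; positivity
  obtain ⟨C, hC, hwulff⟩ := hK.exists_wulff_isConvexBody h0 hf
  have hlim := (hK.tendsto_volume_wulff h0 hf).mul_const (Λ ^ (k + 1))
  have hder : HasDerivAt (fun t : ℝ => V * (Λ + t * I) ^ (k + 1))
      (V * ((k + 1) * Λ ^ k * I)) 0 := by
    have h1 : HasDerivAt (fun t : ℝ => Λ + t * I) I 0 := by
      simpa using ((hasDerivAt_id (0 : ℝ)).mul_const I).const_add Λ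
    simpa using (h1.fun_pow (k + 1)).const_mul V
  have hlim' := (hasDerivAt_iff_tendsto_slope.1 hder).mono_left
    (nhdsWithin_mono (0 : ℝ) fun t (ht : 0 < t) => ht.ne')
  have hle := le_of_tendsto_of_tendsto hlim hlim' (by
    have hsmall : ∀ᶠ t : ℝ in 𝓝[>] 0, t < 1 / 2 / C :=
      mem_nhdsWithin_of_mem_nhds (Iio_mem_nhds (by positivity))
    filter_upwards [hsmall, self_mem_nhdsWithin] with t ht (ht0 : 0 < t)
    have hW := (hwulff t ht0.le ((lt_div_iff₀ hC).1 ht).le).1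
    have hΛW : supportIntegral μ (wulff fun u => supp K u + t * f u) ≤ Λ + t * I := by
      have hi : ∀ {F : Euc (k + 1) → ℝ}, Continuous F → Integrable F μ :=
        fun hF => integrable_of_continuous_of_unitSphere hsupp hF
      have hKs := continuous_supp hK.2.1
      calc _ ≤ ∫ u, (supp K u + t * f u) ∂μ := by
            refine integral_mono_ae (hi (continuous_supp hW.2.1)) (hi (by fun_prop)) ?_
            filter_upwards [ae_norm_eq_one hsupp] with u hu
            exact supp_wulff_le hW.nonempty hu
        _ = Λ + t * I := by
            rw [integral_add (hi hKs) (hi (by fun_prop)), integral_const_mul]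
            rfl
    have hΛ0 := supportIntegral_pos hsupp hbary hnondeg (Nat.succ_ne_zero k) hW
    have h1 : volume.real (wulff fun u => supp K u + t * f u) * Λ ^ (k + 1) ≤
        V * (Λ + t * I) ^ (k + 1) := (hext _ hW).trans (by gcongr)
    rw [slope_def_field, sub_zero, zero_mul, add_zero, div_mul_eq_mul_div, sub_mul]
    gcongr)
  have hid : V * ((k + 1) * Λ ^ k * I) = (hausdorffFactor k)⁻¹ * I * Λ ^ (k + 1) := by
    rw [pow_succ, ← mul_assoc, hnorm]
    field_simp
  rw [hid] at hle
  exact le_of_mul_le_mul_left (le_of_mul_le_mul_right hle (by positivity)) (inv_pos.2 hκ)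

theorem exists_surfMeasure_eq (hk : 1 ≤ k) (hsupp : μ (unitSphere (k + 1))ᶜ = 0)
    (hbary : ∫ x, x ∂μ = 0)
    (hnondeg : ∀ f : Euc (k + 1) →ₗ[ℝ] ℝ, f ≠ 0 →
      0 < μ (unitSphere (k + 1) \ {x | f x = 0})) :
    ∃ K, IsConvexBody K ∧ surfMeasure K = μ := by
  obtain ⟨K, hK, h0, hnorm, hext⟩ := exists_extremal_supportIntegral hk hsupp hbary hnondeg
  have : IsFiniteMeasure (surfMeasure K) := ⟨hK.surfMeasure_univ_lt_top h0⟩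
  refine ⟨K, hK, ext_of_forall_integral_eq_of_IsFiniteMeasure fun f => le_antisymm ?_ ?_⟩
  · exact integral_surfMeasure_le_of_extremal hsupp hbary hnondeg hK h0 hnorm hext f.continuous
  · have := integral_surfMeasure_le_of_extremal hsupp hbary hnondeg hK h0 hnorm hext
      f.continuous.neg
    simpa [integral_neg] using this

end Existence

/-- Minkowski's existence and uniqueness theorem
(Alexandrov–Fenchel–Jessen form). -/
theorem minkowski_existence_uniqueness {m : ℕ} (hm : 2 ≤ m)
    (μ : Measure (Euc m)) [IsFiniteMeasure μ]
    (hsupp : μ (unitSphere m)ᶜ = 0)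
    (hbary : ∫ x, x ∂μ = 0)
    (hnondeg : ∀ f : Euc m →ₗ[ℝ] ℝ, f ≠ 0 → 0 < μ (unitSphere m \ {x | f x = 0})) :
    (∃ K : Set (Euc m), IsConvexBody K ∧
        ∀ U : Set (Euc m), MeasurableSet U → surfMeasure K U = μ U) ∧
    ∀ K K' : Set (Euc m),
      (IsConvexBody K ∧ ∀ U : Set (Euc m), MeasurableSet U → surfMeasure K U = μ U) →
      (IsConvexBody K' ∧ ∀ U : Set (Euc m), MeasurableSet U → surfMeasure K' U = μ U) →
      ∃ v : Euc m, K' = v +ᵥ K := by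
  obtain ⟨k, rfl⟩ : ∃ k, m = k + 1 := ⟨m - 1, by lia⟩
  have hk : 1 ≤ k := by lia
  refine ⟨?_, fun K K' hK hK' => ?_⟩
  · obtain ⟨K, hK, rfl⟩ := exists_surfMeasure_eq hk hsupp hbary hnondeg
    exact ⟨K, hK, fun _ _ => rfl⟩
  · refine hK.1.exists_eq_vadd_of_surfMeasure_eq hk hK'.1 (Measure.ext fun U hU => ?_)
    rw [hK.2 U hU, hK'.2 U hU]
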